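/- arXiv:1911.03962 — 2 statements merged into one kernel-verified Lean document; each statement's English description precedes it below -/
import Mathlib

section
/- Composition of cowordisms is associative: given cowordisms σ : X → Y, τ : Y → Z, ρ : Z → W, it holds that (ρ ∘ τ) ∘ σ = ρ ∘ (τ ∘ σ). -/
/-- A boundary: a natural number `card` together with a set of left endpoints
`left ⊆ {1,…,card}`. -/
structure Boundary where
  card : ℕ
  left : Finset ℕ
  left_sub : left ⊆ Finset.Icc 1 card

namespace Boundary

/-- Tensor product of boundaries. -/
def tensor (X Y : Boundary) : Boundary where
  card := X.card + Y.card
  left := X.left ∪ Y.left.image (fun m => X.card + m)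
  left_sub := by
    intro i hi
    simp only [Finset.mem_union, Finset.mem_image] at hi
    rcases hi with h | ⟨m, hm, rfl⟩
    · have := X.left_sub h
      simp only [Finset.mem_Icc] at this ⊢
      omega
    · have := Y.left_sub hm
      simp only [Finset.mem_Icc] at this ⊢
      omega

/-- Dual boundary: reverse the order and the polarity of endpoints. -/
def dual (X : Boundary) : Boundary where
  card := X.card
  left := (Finset.Icc 1 X.card \ X.left).image (fun m => X.card + 1 - m)
  left_sub := by
    intro i hi
    simp only [Finset.mem_image, Finset.mem_sdiff, Finset.mem_Icc] at hi ⊢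
    obtain ⟨m, ⟨⟨h1, h2⟩, _⟩, rfl⟩ := hi
    omega

/-- The unit boundary `𝟏`. -/
def unit : Boundary := ⟨0, ∅, by simp⟩

end Boundary
/-- Cyclic words over `T`: words up to cyclic permutation. -/
abbrev CyclicWord (T : Type) := Quot (fun (l₁ l₂ : List T) => ∃ a b, l₁ = a ++ b ∧ l₂ = b ++ a)

/-- The underlying data of a multiword over `T`: a multiset of labelled directed
edges (the regular part) together with a multiset of cyclic words (the singular part). -/
structure Pre (T : Type) where
  edges : Multiset (ℕ × List T × ℕ)
  singular : Multiset (CyclicWord T)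

/-- `M` is a multiword with boundary `B`: the edges form a perfect matching on
`{1,…,B.card}`, each edge going from a left endpoint to a right endpoint. -/
def IsMW {T : Type} (B : Boundary) (M : Pre T) : Prop :=
  (∀ e ∈ M.edges, e.1 ∈ B.left ∧ e.2.2 ∈ Finset.Icc 1 B.card \ B.left) ∧
  ∀ v ∈ Finset.Icc 1 B.card, Multiset.countP (fun e => e.1 = v ∨ e.2.2 = v) M.edges = 1

/-- A cowordism `σ : X → Y` over `T` is a multiword with boundary `Y ⊗ X^⊥`. -/
def Cowordism (T : Type) (X Y : Boundary) := {M : Pre T // IsMW (Y.tensor X.dual) M}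

/-- Elementary contraction: glue the boundary points `n` and `n+1` (of opposite
polarity), concatenating words along glued edges; an edge joining `n` and `n+1`
directly becomes a cyclic word in the singular part. -/
def contractAt {T : Type} (n : ℕ) (M : Pre T) : Pre T where
  edges :=
    (M.edges.filter (fun e =>
        (e.1 ≠ n ∧ e.1 ≠ n + 1) ∧ (e.2.2 ≠ n ∧ e.2.2 ≠ n + 1))).map
      (fun e => ((if e.1 < n then e.1 else e.1 - 2), e.2.1,
                 (if e.2.2 < n then e.2.2 else e.2.2 - 2))) +
    (M.edges.filter (fun e =>
        (e.1 ≠ n ∧ e.1 ≠ n + 1) ∧ (e.2.2 = n ∨ e.2.2 = n + 1))).bind (fun e₁ =>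
      (M.edges.filter (fun e₂ => (e₂.2.2 ≠ n ∧ e₂.2.2 ≠ n + 1) ∧
          ((e₁.2.2 = n ∧ e₂.1 = n + 1) ∨ (e₁.2.2 = n + 1 ∧ e₂.1 = n)))).map
        (fun e₂ => ((if e₁.1 < n then e₁.1 else e₁.1 - 2), e₁.2.1 ++ e₂.2.1,
                    (if e₂.2.2 < n then e₂.2.2 else e₂.2.2 - 2))))
  singular := M.singular +
    (M.edges.filter (fun e =>
        (e.1 = n ∨ e.1 = n + 1) ∧ (e.2.2 = n ∨ e.2.2 = n + 1))).map
      (fun e => (Quot.mk _ e.2.1 : CyclicWord T))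

/-- Iterated contraction `⟨M⟩_{i + Y^⊥ ⊗ Y}` where `k = |Y|`: contract at the
pairs `(i+k, i+k+1)`, `(i+k-1, i+k)`, …, `(i+1, i+2)` in this order. -/
def contractIter {T : Type} (i : ℕ) : ℕ → Pre T → Pre T
  | 0, M => M
  | k + 1, M => contractIter i k (contractAt (i + k + 1) M)

/-- Tensor product of multiwords, the first one having boundary of cardinality `c`. -/
def mwTensor {T : Type} (c : ℕ) (M N : Pre T) : Pre T where
  edges := M.edges + N.edges.map (fun e => (c + e.1, e.2.1, c + e.2.2))
  singular := M.singular + N.singular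

/-- Composition `τ ∘ σ` of cowordisms `σ : X → Y` (boundary `Y ⊗ X^⊥`) and
`τ : Y → Z` (boundary `Z ⊗ Y^⊥`), where `nY = |Y|`, `nZ = |Z|`:
the iterated contraction `⟨τ ⊗ σ⟩_{|Z| + Y^⊥ ⊗ Y}`. -/
def compData {T : Type} (nY nZ : ℕ) (τ σ : Pre T) : Pre T :=
  contractIter nZ nY (mwTensor (nZ + nY) τ σ)

/-- The identity cowordism `id_X : X → X`. -/
def idPre (T : Type) (X : Boundary) : Pre T where
  edges :=
    (X.left.val.map fun i => (i, ([] : List T), 2 * X.card - i + 1)) +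
    ((Finset.Icc 1 X.card \ X.left).val.map fun i => (2 * X.card - i + 1, ([] : List T), i))
  singular := 0

/-- The symmetry cowordism `s_{X,Y} : X ⊗ Y → Y ⊗ X`. -/
def symPre (T : Type) (X Y : Boundary) : Pre T where
  edges :=
    (X.left.val.map fun i =>
      (Y.card + i, ([] : List T), 2 * X.card + 2 * Y.card - i + 1)) +
    ((Finset.Icc 1 X.card \ X.left).val.map fun i =>
      (2 * X.card + 2 * Y.card - i + 1, ([] : List T), Y.card + i)) +
    (Y.left.val.map fun i =>
      (i, ([] : List T), X.card + 2 * Y.card - i + 1)) +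
    ((Finset.Icc 1 Y.card \ Y.left).val.map fun i =>
      (X.card + 2 * Y.card - i + 1, ([] : List T), i))
  singular := 0

/-- Tensor product of cowordisms `σ : X → Y` and `τ : Z → W` (as a multiword
with boundary `Y ⊗ W ⊗ Z^⊥ ⊗ X^⊥`), where `nY = |Y|`, `nW = |W|`, `nZ = |Z|`. -/
def cowTensorData {T : Type} (nY nW nZ : ℕ) (σ τ : Pre T) : Pre T where
  edges :=
    σ.edges.map (fun e =>
      ((if e.1 ≤ nY then e.1 else e.1 + nW + nZ), e.2.1,
       (if e.2.2 ≤ nY then e.2.2 else e.2.2 + nW + nZ))) +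
    τ.edges.map (fun e => (nY + e.1, e.2.1, nY + e.2.2))
  singular := σ.singular + τ.singular

/-- The dual `σ^⊥ : Y^⊥ → X^⊥` of a cowordism `σ : X → Y`, where `nX = |X|`,
`nY = |Y|`: re-index via the cyclic permutation. -/
def dualData {T : Type} (nX nY : ℕ) (σ : Pre T) : Pre T where
  edges := σ.edges.map (fun e =>
    ((if e.1 ≤ nY then e.1 + nX else e.1 - nY), e.2.1,
     (if e.2.2 ≤ nY then e.2.2 + nX else e.2.2 - nY)))
  singular := σ.singular


abbrev Ed (T : Type) := ℕ × List T × ℕ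

def rel {T : Type} (f : ℕ → ℕ) (M : Pre T) : Pre T :=
  ⟨M.edges.map (fun e => (f e.1, e.2.1, f e.2.2)), M.singular⟩

def glue {T : Type} (a b : ℕ) (M : Pre T) : Pre T where
  edges :=
    (M.edges.filter (fun e => (e.1 ≠ a ∧ e.1 ≠ b) ∧ (e.2.2 ≠ a ∧ e.2.2 ≠ b))) +
    (M.edges.filter (fun e =>
        (e.1 ≠ a ∧ e.1 ≠ b) ∧ (e.2.2 = a ∨ e.2.2 = b))).bind (fun e₁ =>
      (M.edges.filter (fun e₂ => (e₂.2.2 ≠ a ∧ e₂.2.2 ≠ b) ∧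
          ((e₁.2.2 = a ∧ e₂.1 = b) ∨ (e₁.2.2 = b ∧ e₂.1 = a)))).map
        (fun e₂ => (e₁.1, e₁.2.1 ++ e₂.2.1, e₂.2.2)))
  singular := M.singular +
    (M.edges.filter (fun e =>
        (e.1 = a ∨ e.1 = b) ∧ (e.2.2 = a ∨ e.2.2 = b))).map
      (fun e => (Quot.mk _ e.2.1 : CyclicWord T))

def sh (n v : ℕ) : ℕ := if v < n then v else v - 2

theorem contractAt_eq {T : Type} (n : ℕ) (M : Pre T) :
    contractAt n M = rel (sh n) (glue n (n+1) M) := by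
  unfold contractAt rel glue
  congr 1
  rw [Multiset.map_add, Multiset.map_bind]
  simp only [Multiset.map_map]
  rfl

theorem glue_symm {T : Type} (a b : ℕ) (M : Pre T) : glue a b M = glue b a M := by
  unfold glue
  congr 1
  · congr 1
    · apply Multiset.filter_congr; intros; tauto
    · congr 1
      · apply Multiset.filter_congr; intros; tauto
      · funext e₁
        congr 1
        apply Multiset.filter_congr; intros; tauto
  · congr 2
    apply Multiset.filter_congr; intros; tauto

def St {T : Type} (R : Multiset (Ed T)) (v : ℕ) : Prop := ∃ e ∈ R, e.1 = v

def En {T : Type} (R : Multiset (Ed T)) (v : ℕ) : Prop := ∃ e ∈ R, e.2.2 = v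

def Av {T : Type} (a b : ℕ) (R : Multiset (Ed T)) : Prop :=
  (¬ St R a ∧ ¬ St R b) ∧ (¬ En R a ∧ ¬ En R b)

theorem Av_iff {T : Type} (a b : ℕ) (R : Multiset (Ed T)) : Av a b R ↔
  ∀ e ∈ R, (e.1 ≠ a ∧ e.1 ≠ b) ∧ (e.2.2 ≠ a ∧ e.2.2 ≠ b) := by
  unfold Av St En
  push Not
  constructor
  · rintro ⟨⟨h1, h2⟩, h3, h4⟩ e he
    exact ⟨⟨h1 e he, h2 e he⟩, h3 e he, h4 e he⟩
  · intro h
    exact ⟨⟨fun e he => (h e he).1.1, fun e he => (h e he).1.2⟩,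
      fun e he => (h e he).2.1, fun e he => (h e he).2.2⟩

theorem St_add {T : Type} (R : Multiset (Ed T)) (x y v : ℕ) (u : List T) :
    St (R + {(x, u, y)}) v ↔ St R v ∨ v = x := by
  unfold St
  simp only [Multiset.mem_add, Multiset.mem_singleton, or_and_right, exists_or, exists_eq_left, eq_comm]

theorem En_add {T : Type} (R : Multiset (Ed T)) (x y v : ℕ) (u : List T) :
    En (R + {(x, u, y)}) v ↔ En R v ∨ v = y := by
  unfold En
  simp only [Multiset.mem_add, Multiset.mem_singleton, or_and_right, exists_or, exists_eq_left, eq_comm]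

theorem glue_add {T : Type} (a b : ℕ) (R E : Multiset (Ed T)) (S) (h : Av a b R) :
    glue a b ⟨R + E, S⟩ = ⟨R + (glue a b ⟨E, S⟩).edges, (glue a b ⟨E, S⟩).singular⟩ := by
  rw [Av_iff] at h
  unfold glue
  simp only [Multiset.filter_add, Pre.mk.injEq]
  have h1 : R.filter (fun e => (e.1 ≠ a ∧ e.1 ≠ b) ∧ (e.2.2 ≠ a ∧ e.2.2 ≠ b)) = R :=
    Multiset.filter_eq_self.2 h
  have h2 : R.filter (fun e => (e.1 ≠ a ∧ e.1 ≠ b) ∧ (e.2.2 = a ∨ e.2.2 = b)) = 0 :=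
    Multiset.filter_eq_nil.2 (fun e he => by have := h e he; tauto)
  have h3 : ∀ e₁ : Ed T, R.filter (fun e₂ => (e₂.2.2 ≠ a ∧ e₂.2.2 ≠ b) ∧
          ((e₁.2.2 = a ∧ e₂.1 = b) ∨ (e₁.2.2 = b ∧ e₂.1 = a))) = 0 := fun e₁ =>
    Multiset.filter_eq_nil.2 (fun e he => by have := h e he; tauto)
  have h4 : R.filter (fun e => (e.1 = a ∨ e.1 = b) ∧ (e.2.2 = a ∨ e.2.2 = b)) = 0 :=
    Multiset.filter_eq_nil.2 (fun e he => by have := h e he; tauto)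
  rw [h1, h2, h4]
  simp only [h3, zero_add, add_assoc, and_self]

theorem glue_loop {T : Type} {a b : ℕ} (R E : Multiset (Ed T)) (S) (u : List T)
    (hE : E = R + {(b, u, a)}) (h : Av a b R) :
    glue a b ⟨E, S⟩ = ⟨R, S + {Quot.mk _ u}⟩ := by
  subst hE
  rw [glue_add _ _ _ _ _ h]
  simp [glue, Multiset.filter_singleton]

theorem glue_path {T : Type} {a b x y : ℕ} (R E : Multiset (Ed T)) (S) (u v : List T)
    (hE : E = R + {(x, u, a)} + {(b, v, y)}) (h : Av a b R) (hab : a ≠ b)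
    (hx : x ≠ a ∧ x ≠ b) (hy : y ≠ a ∧ y ≠ b) :
    glue a b ⟨E, S⟩ = ⟨R + {(x, u ++ v, y)}, S⟩ := by
  subst hE
  rw [add_assoc, glue_add _ _ _ _ _ h]
  simp [glue, Multiset.filter_add, Multiset.filter_singleton, hx, hy, hab, hab.symm]

theorem glue_rel {T : Type} (a b a' b' : ℕ) (f : ℕ → ℕ) (M : Pre T)
    (h : ∀ e ∈ M.edges, ((f e.1 = a ↔ e.1 = a') ∧ (f e.1 = b ↔ e.1 = b')) ∧
      ((f e.2.2 = a ↔ e.2.2 = a') ∧ (f e.2.2 = b ↔ e.2.2 = b'))) :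
    glue a b (rel f M) = rel f (glue a' b' M) := by
  unfold glue rel
  congr 1
  · simp only [Multiset.filter_map, Multiset.map_add, Multiset.map_bind, Multiset.bind_map,
      Multiset.map_map]
    congr 1
    · congr 1
      apply Multiset.filter_congr; intro e he; obtain ⟨⟨p, q⟩, r, s⟩ := h e he
      simp only [Function.comp, ne_eq, p, q, r, s]
    · have : M.edges.filter ((fun e : Ed T => (e.1 ≠ a ∧ e.1 ≠ b) ∧ (e.2.2 = a ∨ e.2.2 = b)) ∘
          (fun e => (f e.1, e.2.1, f e.2.2))) =
          M.edges.filter (fun e : Ed T => (e.1 ≠ a' ∧ e.1 ≠ b') ∧ (e.2.2 = a' ∨ e.2.2 = b')) := by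
        apply Multiset.filter_congr; intro e he; obtain ⟨⟨p, q⟩, r, s⟩ := h e he
        simp only [Function.comp, ne_eq, p, q, r, s]
      rw [this]
      apply Multiset.bind_congr
      intro e₁ he₁
      obtain ⟨⟨p1, q1⟩, r1, s1⟩ := h e₁ (Multiset.mem_of_mem_filter he₁)
      congr 1
      apply Multiset.filter_congr; intro e he; obtain ⟨⟨p, q⟩, r, s⟩ := h e he
      simp only [Function.comp, ne_eq, p, q, r, s, r1, s1]
  · simp only [Multiset.filter_map, Multiset.map_map]
    congr 2
    apply Multiset.filter_congr; intro e he; obtain ⟨⟨p, q⟩, r, s⟩ := h e he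
    simp only [Function.comp, ne_eq, p, q, r, s]

/-- vertices are used at most once -/
def ND {T : Type} (E : Multiset (Ed T)) : Prop :=
  (E.map (fun e => e.1) + E.map (fun e => e.2.2)).Nodup

theorem ND_add {T : Type} (R : Multiset (Ed T)) (x y : ℕ) (u : List T) :
    ND (R + {(x, u, y)}) ↔ ND R ∧ x ≠ y ∧ ((¬ St R x ∧ ¬ St R y) ∧ (¬ En R x ∧ ¬ En R y)) := by
  have : (R + {(x, u, y)}).map (fun e => e.1) + (R + {(x, u, y)}).map (fun e => e.2.2) =
    x ::ₘ y ::ₘ (R.map (fun e => e.1) + R.map (fun e => e.2.2)) := by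
    simp only [Multiset.map_add, Multiset.map_singleton, ← Multiset.singleton_add]
    abel
  unfold ND
  rw [this]
  simp only [Multiset.nodup_cons, Multiset.mem_cons, Multiset.mem_add, Multiset.mem_map]
  simp only [show ∀ v, (∃ e ∈ R, e.1 = v) ↔ St R v from fun _ => Iff.rfl,
    show ∀ v, (∃ e ∈ R, e.2.2 = v) ↔ En R v from fun _ => Iff.rfl]
  tauto

theorem pull_end {T : Type} {E : Multiset (Ed T)} {a : ℕ} (h : En E a) :
    ∃ x u R, E = R + {(x, u, a)} := by
  obtain ⟨⟨x, u, y⟩, he, rfl⟩ := h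
  obtain ⟨R, rfl⟩ := Multiset.exists_cons_of_mem he
  exact ⟨x, u, R, by rw [← Multiset.singleton_add, add_comm]⟩

theorem pull_start {T : Type} {E : Multiset (Ed T)} {b : ℕ} (h : St E b) :
    ∃ u y R, E = R + {(b, u, y)} := by
  obtain ⟨⟨x, u, y⟩, he, rfl⟩ := h
  obtain ⟨R, rfl⟩ := Multiset.exists_cons_of_mem he
  exact ⟨u, y, R, by rw [← Multiset.singleton_add, add_comm]⟩

theorem pull_pair {T : Type} {E : Multiset (Ed T)} {a b : ℕ} (ha : En E a) (hb : St E b) :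
    (∃ u R, E = R + {(b, u, a)}) ∨
    (∃ x u v y R, x ≠ b ∧ E = R + {(x, u, a)} + {(b, v, y)}) := by
  obtain ⟨x, u, R, rfl⟩ := pull_end ha
  by_cases hx : x = b
  · subst hx; exact Or.inl ⟨u, R, rfl⟩
  · right
    rw [St_add] at hb
    obtain ⟨v, y, R', rfl⟩ := pull_start (hb.resolve_right (Ne.symm hx))
    exact ⟨x, u, v, y, R', hx, by abel⟩

theorem rot {T : Type} (u v : List T) :
    (Quot.mk _ (u ++ v) : CyclicWord T) = Quot.mk _ (v ++ u) :=
  Quot.sound ⟨u, v, rfl, rfl⟩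

theorem glue_comm {T : Type} (a b c d : ℕ) (M : Pre T) (hM : ND M.edges)
    (ha : En M.edges a) (hb : St M.edges b)
    (hc : En M.edges c) (hd : St M.edges d)
    (hac : a ≠ c) (hbd : b ≠ d) :
    glue c d (glue a b M) = glue a b (glue c d M) := by
  obtain ⟨E, S⟩ := M
  simp only at hM ha hb hc hd
  rcases pull_pair ha hb with ⟨u, R, rfl⟩ | ⟨x, u, v, y, R, hxb, rfl⟩
  · replace hc := (by simp only [En_add] at hc; tauto : En R c)
    replace hd := (by simp only [St_add] at hd; tauto : St R d)
    rcases pull_pair hc hd with ⟨w, R, rfl⟩ | ⟨z, w, s, t, R, hzd, rfl⟩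
    · simp only [ND_add, St_add, En_add] at hM
      rw [glue_loop (a := a) (b := b) _ _ S u rfl (by simp only [Av, St_add, En_add]; grind only),
        glue_loop (a := c) (b := d) _ _ _ w rfl (by simp only [Av, St_add, En_add]; grind only),
        glue_loop (a := c) (b := d) (R + {(b, u, a)}) _ S w (by abel) (by simp only [Av, St_add, En_add]; grind only),
        glue_loop (a := a) (b := b) _ _ _ u rfl (by simp only [Av, St_add, En_add]; grind only), add_right_comm]
    · simp only [ND_add, St_add, En_add] at hM
      rw [glue_loop (a := a) (b := b) _ _ S u rfl (by simp only [Av, St_add, En_add]; grind only),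
        glue_path (a := c) (b := d) _ _ _ w s rfl (by simp only [Av, St_add, En_add]; grind only) (by grind only) (by grind only) (by grind only),
        glue_path (a := c) (b := d) (R + {(b, u, a)}) _ S w s (by abel) (by simp only [Av, St_add, En_add]; grind only) (by grind only) (by grind only) (by grind only),
        glue_loop (a := a) (b := b) (R + {(z, w ++ s, t)}) _ _ u (by abel) (by simp only [Av, St_add, En_add]; grind only)]
  · by_cases hxd : x = d
    · subst hxd
      by_cases hyc : y = c
      · subst hyc
        simp only [ND_add, St_add, En_add] at hM
        rw [glue_path (a := a) (b := b) _ _ _ u v rfl (by simp only [Av, St_add, En_add]; grind only) (by grind only) (by grind only) (by grind only),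
          glue_loop (a := y) (b := x) _ _ _ _ rfl (by simp only [Av, St_add, En_add]; grind only),
          glue_path (a := y) (b := x) R _ _ v u (by abel) (by simp only [Av, St_add, En_add]; grind only) (by grind only) (by grind only) (by grind only),
          glue_loop (a := a) (b := b) _ _ _ _ rfl (by simp only [Av, St_add, En_add]; grind only), rot]
      · replace hc := (by simp only [En_add] at hc; tauto : En R c)
        obtain ⟨z, w, R, rfl⟩ := pull_end hc
        simp only [ND_add, St_add, En_add] at hM
        rw [glue_path (a := a) (b := b) _ _ _ u v rfl (by simp only [Av, St_add, En_add]; grind only) (by grind only) (by grind only) (by grind only),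
          glue_path (a := c) (b := x) _ _ _ _ _ rfl (by simp only [Av, St_add, En_add]; grind only) (by grind only) (by grind only) (by grind only),
          glue_path (a := c) (b := x) (R + {(b, v, y)}) _ _ w u (by abel) (by simp only [Av, St_add, En_add]; grind only) (by grind only) (by grind only) (by grind only),
          glue_path (a := a) (b := b) R _ _ (w ++ u) v (by abel) (by simp only [Av, St_add, En_add]; grind only) (by grind only) (by grind only) (by grind only), List.append_assoc]
    · replace hd := (by simp only [St_add] at hd; tauto : St R d)
      by_cases hyc : y = c
      · subst hyc
        obtain ⟨w, t, R, rfl⟩ := pull_start hd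
        simp only [ND_add, St_add, En_add] at hM
        rw [glue_path (a := a) (b := b) _ _ _ u v rfl (by simp only [Av, St_add, En_add]; grind only) (by grind only) (by grind only) (by grind only),
          glue_path (a := y) (b := d) R _ _ (u ++ v) w (by abel) (by simp only [Av, St_add, En_add]; grind only) (by grind only) (by grind only) (by grind only),
          glue_path (a := y) (b := d) (R + {(x, u, a)}) _ _ v w (by abel) (by simp only [Av, St_add, En_add]; grind only) (by grind only) (by grind only) (by grind only),
          glue_path (a := a) (b := b) R _ _ u (v ++ w) (by abel) (by simp only [Av, St_add, En_add]; grind only) (by grind only) (by grind only) (by grind only), List.append_assoc]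
      · replace hc := (by simp only [En_add] at hc; tauto : En R c)
        rcases pull_pair hc hd with ⟨w, R, rfl⟩ | ⟨z, w, s, t, R, hzd, rfl⟩
        · simp only [ND_add, St_add, En_add] at hM
          rw [glue_path (a := a) (b := b) _ _ _ u v rfl (by simp only [Av, St_add, En_add]; grind only) (by grind only) (by grind only) (by grind only),
            glue_loop (a := c) (b := d) (R + {(x, u ++ v, y)}) _ _ w (by abel) (by simp only [Av, St_add, En_add]; grind only),
            glue_loop (a := c) (b := d) (R + {(x, u, a)} + {(b, v, y)}) _ _ w (by abel) (by simp only [Av, St_add, En_add]; grind only),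
            glue_path (a := a) (b := b) _ _ _ u v rfl (by simp only [Av, St_add, En_add]; grind only) (by grind only) (by grind only) (by grind only)]
        · simp only [ND_add, St_add, En_add] at hM
          rw [glue_path (a := a) (b := b) _ _ _ u v rfl (by simp only [Av, St_add, En_add]; grind only) (by grind only) (by grind only) (by grind only),
            glue_path (a := c) (b := d) (R + {(x, u ++ v, y)}) _ _ w s (by abel) (by simp only [Av, St_add, En_add]; grind only) (by grind only) (by grind only) (by grind only),
            glue_path (a := c) (b := d) (R + {(x, u, a)} + {(b, v, y)}) _ _ w s (by abel) (by simp only [Av, St_add, En_add]; grind only) (by grind only) (by grind only) (by grind only),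
            glue_path (a := a) (b := b) (R + {(z, w ++ s, t)}) _ _ u v (by abel) (by simp only [Av, St_add, En_add]; grind only) (by grind only) (by grind only) (by grind only), add_right_comm]

/-- effect of gluing on the vertices -/
theorem glue_verts {T : Type} (a b : ℕ) (M : Pre T) (hM : ND M.edges)
    (ha : En M.edges a) (hb : St M.edges b) :
    ND (glue a b M).edges ∧
    (∀ v, St (glue a b M).edges v ↔ v ≠ b ∧ St M.edges v) ∧
    (∀ v, En (glue a b M).edges v ↔ v ≠ a ∧ En M.edges v) := by
  obtain ⟨E, S⟩ := M
  simp only at hM ha hb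
  rcases pull_pair ha hb with ⟨u, R, rfl⟩ | ⟨x, u, v, y, R, hxb, rfl⟩
  · simp only [ND_add, St_add, En_add] at hM
    rw [glue_loop (a := a) (b := b) _ _ S u rfl (by simp only [Av, St_add, En_add]; grind only)]
    simp only [St_add, En_add]
    refine ⟨hM.1, ?_, ?_⟩ <;> intro v <;> grind
  · simp only [ND_add, St_add, En_add] at hM
    rw [glue_path (a := a) (b := b) _ _ _ u v rfl (by simp only [Av, St_add, En_add]; grind only) (by grind only) (by grind only) (by grind only)]
    simp only [ND_add, St_add, En_add]
    refine ⟨⟨hM.1.1, ?_, ?_⟩, ?_, ?_⟩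
    · grind
    · grind
    · intro v; grind
    · intro v; grind

theorem glue_comm' {T : Type} (a b c d : ℕ) (M : Pre T) (hM : ND M.edges)
    (h1 : (En M.edges a ∧ St M.edges b) ∨ (En M.edges b ∧ St M.edges a))
    (h2 : (En M.edges c ∧ St M.edges d) ∨ (En M.edges d ∧ St M.edges c))
    (hac : a ≠ c) (had : a ≠ d) (hbc : b ≠ c) (hbd : b ≠ d) :
    glue c d (glue a b M) = glue a b (glue c d M) := by
  rcases h1 with h1 | h1 <;> rcases h2 with h2 | h2
  · exact glue_comm a b c d M hM h1.1 h1.2 h2.1 h2.2 hac hbd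
  · rw [glue_symm c d, glue_symm c d]
    exact glue_comm a b d c M hM h1.1 h1.2 h2.1 h2.2 had hbc
  · rw [glue_symm a b, glue_symm a b]
    exact glue_comm b a c d M hM h1.1 h1.2 h2.1 h2.2 hbc had
  · rw [glue_symm c d, glue_symm c d, glue_symm a b, glue_symm a b]
    exact glue_comm b a d c M hM h1.1 h1.2 h2.1 h2.2 hbd hac

def Good {T : Type} (N : ℕ) (L : ℕ → Prop) (M : Pre T) : Prop :=
  ND M.edges ∧ (∀ v, St M.edges v ↔ 1 ≤ v ∧ v ≤ N ∧ L v) ∧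
    (∀ v, En M.edges v ↔ 1 ≤ v ∧ v ≤ N ∧ ¬ L v)

theorem Good.pair {T : Type} {N : ℕ} {L : ℕ → Prop} {M : Pre T} (h : Good N L M) (n : ℕ)
    (h1 : 1 ≤ n) (h2 : n + 1 ≤ N) (hL : ¬ (L n ↔ L (n+1))) :
    (En M.edges n ∧ St M.edges (n+1)) ∨ (En M.edges (n+1) ∧ St M.edges n) := by
  obtain ⟨_, hs, he⟩ := h
  rw [hs, hs, he, he]
  have : n ≤ N := by omega
  have : 1 ≤ n + 1 := by omega
  tauto

theorem Good.glue {T : Type} {N : ℕ} {L : ℕ → Prop} {M : Pre T} (h : Good N L M) (n : ℕ)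
    (h1 : 1 ≤ n) (h2 : n + 1 ≤ N) (hL : ¬ (L n ↔ L (n+1))) :
    ND (glue n (n+1) M).edges ∧
    (∀ v, St (glue n (n+1) M).edges v ↔ v ≠ n ∧ v ≠ n + 1 ∧ 1 ≤ v ∧ v ≤ N ∧ L v) ∧
    (∀ v, En (glue n (n+1) M).edges v ↔ v ≠ n ∧ v ≠ n + 1 ∧ 1 ≤ v ∧ v ≤ N ∧ ¬ L v) := by
  rcases h.pair n h1 h2 hL with ⟨ha, hb⟩ | ⟨ha, hb⟩
  · obtain ⟨g1, g2, g3⟩ := glue_verts n (n+1) M h.1 ha hb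
    refine ⟨g1, fun v => ?_, fun v => ?_⟩
    · rw [g2, h.2.1]; rw [h.2.2] at ha
      constructor
      · rintro ⟨p, q⟩; refine ⟨?_, p, q⟩; rintro rfl; tauto
      · tauto
    · rw [g3, h.2.2]; rw [h.2.1] at hb
      constructor
      · rintro ⟨p, q⟩; refine ⟨p, ?_, q⟩; rintro rfl; tauto
      · tauto
  · rw [glue_symm]
    obtain ⟨g1, g2, g3⟩ := glue_verts (n+1) n M h.1 ha hb
    refine ⟨g1, fun v => ?_, fun v => ?_⟩
    · rw [g2, h.2.1]; rw [h.2.2] at ha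
      constructor
      · rintro ⟨p, q⟩; refine ⟨p, ?_, q⟩; rintro rfl; tauto
      · tauto
    · rw [g3, h.2.2]; rw [h.2.1] at hb
      constructor
      · rintro ⟨p, q⟩; refine ⟨?_, p, q⟩; rintro rfl; tauto
      · tauto

theorem St_rel {T : Type} (f : ℕ → ℕ) (M : Pre T) (v : ℕ) :
    St (rel f M).edges v ↔ ∃ w, St M.edges w ∧ f w = v := by
  unfold St rel
  constructor
  · rintro ⟨e, he, rfl⟩
    obtain ⟨e', he', rfl⟩ := Multiset.mem_map.1 he
    exact ⟨_, ⟨e', he', rfl⟩, rfl⟩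
  · rintro ⟨w, ⟨e, he, rfl⟩, rfl⟩
    exact ⟨_, Multiset.mem_map_of_mem _ he, rfl⟩

theorem En_rel {T : Type} (f : ℕ → ℕ) (M : Pre T) (v : ℕ) :
    En (rel f M).edges v ↔ ∃ w, En M.edges w ∧ f w = v := by
  unfold En rel
  constructor
  · rintro ⟨e, he, rfl⟩
    obtain ⟨e', he', rfl⟩ := Multiset.mem_map.1 he
    exact ⟨_, ⟨e', he', rfl⟩, rfl⟩
  · rintro ⟨w, ⟨e, he, rfl⟩, rfl⟩
    exact ⟨_, Multiset.mem_map_of_mem _ he, rfl⟩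

theorem ND_rel {T : Type} (f : ℕ → ℕ) (M : Pre T) (h : ND M.edges)
    (hf : ∀ v w, (St M.edges v ∨ En M.edges v) → (St M.edges w ∨ En M.edges w) → f v = f w → v = w) :
    ND (rel f M).edges := by
  have : (rel f M).edges.map (fun e => e.1) + (rel f M).edges.map (fun e => e.2.2) =
    (M.edges.map (fun e => e.1) + M.edges.map (fun e => e.2.2)).map f := by
    simp only [rel, Multiset.map_add, Multiset.map_map]; rfl
  unfold ND
  rw [this]
  have hm : ∀ v, v ∈ (M.edges.map (fun e => e.1) + M.edges.map (fun e => e.2.2)) →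
      St M.edges v ∨ En M.edges v := by
    intro v hv
    simp only [Multiset.mem_add, Multiset.mem_map] at hv
    exact hv
  exact Multiset.Nodup.map_on (fun v hv w hw e => hf v w (hm v hv) (hm w hw) e) h

def unsh (n v : ℕ) : ℕ := if v < n then v else v + 2

theorem Good.contract {T : Type} {N : ℕ} {L : ℕ → Prop} {M : Pre T} (h : Good (N+2) L M) (n : ℕ)
    (h1 : 1 ≤ n) (h2 : n ≤ N + 1) (hL : ¬ (L n ↔ L (n+1))) :
    Good N (fun v => L (unsh n v)) (contractAt n M) := by
  obtain ⟨g1, g2, g3⟩ := h.glue n h1 (by omega) hL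
  rw [contractAt_eq]
  refine ⟨ND_rel _ _ g1 ?_, fun v => ?_, fun v => ?_⟩
  · intro v w hv hw
    simp only [g2, g3] at hv hw
    unfold sh
    have : v ≠ n ∧ v ≠ n + 1 := by tauto
    have : w ≠ n ∧ w ≠ n + 1 := by tauto
    split_ifs <;> omega
  · rw [St_rel]
    simp only [g2]
    constructor
    · rintro ⟨w, ⟨p, q, r, s, t⟩, rfl⟩
      have : unsh n (sh n w) = w := by unfold sh unsh; split_ifs <;> omega
      rw [this]
      refine ⟨?_, ?_, t⟩ <;> unfold sh <;> split_ifs <;> omega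
    · rintro ⟨p, q, r⟩
      refine ⟨unsh n v, ⟨?_, ?_, ?_, ?_, r⟩, ?_⟩ <;> simp only [unsh, sh] <;> split_ifs <;> omega
  · rw [En_rel]
    simp only [g3]
    constructor
    · rintro ⟨w, ⟨p, q, r, s, t⟩, rfl⟩
      have : unsh n (sh n w) = w := by unfold sh unsh; split_ifs <;> omega
      rw [this]
      refine ⟨?_, ?_, t⟩ <;> unfold sh <;> split_ifs <;> omega
    · rintro ⟨p, q, r⟩
      refine ⟨unsh n v, ⟨?_, ?_, ?_, ?_, r⟩, ?_⟩ <;> simp only [unsh, sh] <;> split_ifs <;> omega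

theorem rel_rel {T : Type} (f g : ℕ → ℕ) (M : Pre T) :
    rel f (rel g M) = rel (fun v => f (g v)) M := by
  simp only [rel, Multiset.map_map]; rfl

theorem comm1 {T : Type} {N : ℕ} {L : ℕ → Prop} {M : Pre T} (h : Good N L M) (n m : ℕ)
    (h1 : 1 ≤ n) (hnm : n ≤ m) (h2 : m + 3 ≤ N) (hL : ¬ (L n ↔ L (n+1)))
    (hL' : ¬ (L (m+2) ↔ L (m+3))) :
    contractAt m (contractAt n M) = contractAt n (contractAt (m+2) M) := by
  simp only [contractAt_eq]
  have g := h.glue n h1 (by omega) hL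
  have g' := h.glue (m+2) (by omega) (by omega) hL'
  rw [glue_rel m (m+1) (m+2) (m+3), glue_rel n (n+1) n (n+1), rel_rel, rel_rel,
    glue_comm' n (n+1) (m+2) (m+3) M h.1 (h.pair n h1 (by omega) hL)
      (h.pair (m+2) (by omega) (by omega) hL') (by omega) (by omega) (by omega) (by omega)]
  · congr 1
    funext v
    unfold sh; split_ifs <;> omega
  · intro e he
    have a1 := (g'.2.1 e.1).1 ⟨e, he, rfl⟩
    have a2 := (g'.2.2 e.2.2).1 ⟨e, he, rfl⟩
    unfold sh
    refine ⟨⟨?_, ?_⟩, ?_, ?_⟩ <;> split_ifs <;> omega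
  · intro e he
    have a1 := (g.2.1 e.1).1 ⟨e, he, rfl⟩
    have a2 := (g.2.2 e.2.2).1 ⟨e, he, rfl⟩
    unfold sh
    refine ⟨⟨?_, ?_⟩, ?_, ?_⟩ <;> split_ifs <;> omega

theorem comm2 {T : Type} (i j k : ℕ) (hj : 1 ≤ j) : ∀ {N : ℕ} {L : ℕ → Prop} {M : Pre T},
    Good N L M → i + j + 2 * k + 1 ≤ N → (¬ (L (i + j + 2 * k) ↔ L (i + j + 2 * k + 1))) →
    (∀ t, 1 ≤ t → t ≤ k → ¬ (L (i + t) ↔ L (i + 2 * k + 1 - t))) →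
    contractAt (i + j) (contractIter i k M) = contractIter i k (contractAt (i + j + 2 * k) M) := by
  induction k with
  | zero => intros; rfl
  | succ k ih =>
    intro N L M h hN hL hZ
    obtain ⟨N, rfl⟩ : ∃ N', N = N' + 2 := ⟨N - 2, by omega⟩
    have hk := hZ (k+1) (by omega) (by omega)
    rw [show i + 2 * (k+1) + 1 - (k+1) = i + k + 1 + 1 by omega, ← add_assoc] at hk
    have hg := h.contract (i + k + 1) (by omega) (by omega) hk
    simp only [contractIter]
    rw [ih hg (by omega), comm1 h (i + k + 1) (i + j + 2 * k) (by omega) (by omega) (by omega) hk]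
    · rfl
    · exact hL
    · simp only [unsh]
      rw [if_neg (by omega), if_neg (by omega)]
      exact hL
    · intro t h1 h2
      have := hZ t h1 (by omega)
      simp only [unsh]
      rw [if_pos (by omega), if_neg (by omega)]
      rwa [show i + 2 * k + 1 - t + 2 = i + 2 * (k+1) + 1 - t by omega]

theorem comm3 {T : Type} (i k l : ℕ) : ∀ {N : ℕ} {L : ℕ → Prop} {M : Pre T},
    Good N L M → i + 2 * k + 2 * l ≤ N →
    (∀ t, 1 ≤ t → t ≤ k → ¬ (L (i + t) ↔ L (i + 2 * k + 1 - t))) →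
    (∀ t, 1 ≤ t → t ≤ l → ¬ (L (i + 2 * k + t) ↔ L (i + 2 * k + 2 * l + 1 - t))) →
    contractIter i l (contractIter i k M) = contractIter i k (contractIter (i + 2 * k) l M) := by
  induction l with
  | zero => intros; rfl
  | succ l ih =>
    intro N L M h hN hZ hY
    obtain ⟨N, rfl⟩ : ∃ N', N = N' + 2 := ⟨N - 2, by omega⟩
    have hk := hY (l+1) (by omega) (by omega)
    rw [show i + 2 * k + 2 * (l+1) + 1 - (l+1) = i + 2 * k + l + 1 + 1 by omega, ← add_assoc] at hk
    have hg := h.contract (i + 2 * k + l + 1) (by omega) (by omega) hk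
    simp only [contractIter]
    rw [add_assoc i l 1, comm2 i (l+1) k (by omega) h (by omega) _ hZ,
      show i + (l + 1) + 2 * k = i + 2 * k + l + 1 by omega]
    · apply ih hg (by omega)
      · intro t h1 h2
        have := hZ t h1 (by omega)
        simp only [unsh]
        rwa [if_pos (by omega), if_pos (by omega)]
      · intro t h1 h2
        have := hY t h1 (by omega)
        simp only [unsh]
        rw [if_pos (by omega), if_neg (by omega)]
        rwa [show i + 2 * k + 2 * l + 1 - t + 2 = i + 2 * k + 2 * (l+1) + 1 - t by omega]
    · rwa [show i + (l + 1) + 2 * k = i + 2 * k + l + 1 by omega]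

def plus {T : Type} (M N : Pre T) : Pre T := ⟨M.edges + N.edges, M.singular + N.singular⟩

theorem plus_comm {T : Type} (M N : Pre T) : plus M N = plus N M := by
  unfold plus; rw [add_comm, add_comm M.singular]

theorem mwTensor_eq {T : Type} (c : ℕ) (M N : Pre T) :
    mwTensor c M N = plus M (rel (fun v => c + v) N) := rfl

theorem rel_plus {T : Type} (f : ℕ → ℕ) (M N : Pre T) :
    rel f (plus M N) = plus (rel f M) (rel f N) := by
  simp only [rel, plus, Multiset.map_add]

theorem prel_congr {T : Type} (f g : ℕ → ℕ) (M : Pre T) 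
    (h : ∀ v, (St M.edges v ∨ En M.edges v) → f v = g v) : rel f M = rel g M := by
  unfold rel
  congr 1
  apply Multiset.map_congr rfl
  intro e he
  rw [h e.1 (Or.inl ⟨e, he, rfl⟩), h e.2.2 (Or.inr ⟨e, he, rfl⟩)]

theorem rel_id {T : Type} (M : Pre T) : rel (fun v => v) M = M := by
  obtain ⟨E, S⟩ := M
  simp [rel]

theorem glue_plus {T : Type} (a b : ℕ) (M N : Pre T) (h : Av a b M.edges) :
    glue a b (plus M N) = plus M (glue a b N) := by
  unfold plus
  rw [glue_add _ _ _ _ _ h]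
  simp only [glue, add_assoc]

theorem tensor_right {T : Type} (c n : ℕ) (M N : Pre T) (hn : 1 ≤ n)
    (hM : ∀ v, (St M.edges v ∨ En M.edges v) → v ≤ c) :
    mwTensor c M (contractAt n N) = contractAt (c + n) (mwTensor c M N) := by
  have hn1 : ∀ v, (St M.edges v ∨ En M.edges v) → v ≠ c + n ∧ v ≠ c + n + 1 := by
    intro v hv; have := hM v hv; omega
  rw [contractAt_eq, contractAt_eq, mwTensor_eq, mwTensor_eq, glue_plus,
    glue_rel (c+n) (c+n+1) n (n+1), rel_plus, rel_rel, rel_rel]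
  · congr 1
    · conv_lhs => rw [← rel_id M]
      apply prel_congr
      intro v hv
      have := hM v hv
      rw [sh, if_pos (by omega)]
    · have hav : ∀ e ∈ (glue n (n+1) N).edges, (e.1 ≠ n ∧ e.1 ≠ n+1) ∧ (e.2.2 ≠ n ∧ e.2.2 ≠ n+1) := by
        intro e he
        simp only [glue, Multiset.mem_add, Multiset.mem_filter, Multiset.mem_bind,
          Multiset.mem_map] at he
        rcases he with he | ⟨e1, h1, e2, h2, rfl⟩
        · exact he.2
        · exact ⟨h1.2.1, h2.2.1⟩
      apply prel_congr
      rintro v (⟨e, he, rfl⟩ | ⟨e, he, rfl⟩)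
      · have := hav e he
        simp only [sh]
        split_ifs <;> omega
      · have := hav e he
        simp only [sh]
        split_ifs <;> omega
  · intro e he
    refine ⟨⟨?_, ?_⟩, ?_, ?_⟩ <;> omega
  · exact ⟨⟨fun h => (hn1 _ (Or.inl h)).1 rfl, fun h => (hn1 _ (Or.inl h)).2 rfl⟩,
      fun h => (hn1 _ (Or.inr h)).1 rfl, fun h => (hn1 _ (Or.inr h)).2 rfl⟩

theorem tensor_left {T : Type} (c n : ℕ) (M N : Pre T) (hn : n ≤ c + 1)
    (hN : ∀ v, (St N.edges v ∨ En N.edges v) → 1 ≤ v) :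
    mwTensor c (contractAt n M) N = contractAt n (mwTensor (c + 2) M N) := by
  have hn1 : ∀ v, (St (rel (fun v => c + 2 + v) N).edges v ∨ En (rel (fun v => c + 2 + v) N).edges v) →
      v ≠ n ∧ v ≠ n + 1 := by
    intro v hv
    rw [St_rel, En_rel] at hv
    rcases hv with ⟨w, hw, rfl⟩ | ⟨w, hw, rfl⟩
    · have := hN w (Or.inl hw); omega
    · have := hN w (Or.inr hw); omega
  rw [contractAt_eq, contractAt_eq, mwTensor_eq, mwTensor_eq, plus_comm M, glue_plus,
    plus_comm, rel_plus, rel_rel]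
  · congr 1
    apply prel_congr
    intro v hv
    have := hN v hv
    simp only [sh]
    split_ifs <;> omega
  · exact ⟨⟨fun h => (hn1 _ (Or.inl h)).1 rfl, fun h => (hn1 _ (Or.inl h)).2 rfl⟩,
      fun h => (hn1 _ (Or.inr h)).1 rfl, fun h => (hn1 _ (Or.inr h)).2 rfl⟩

theorem tensor_right_iter {T : Type} (c i k : ℕ) : ∀ (M N : Pre T),
    (∀ v, (St M.edges v ∨ En M.edges v) → v ≤ c) →
    mwTensor c M (contractIter i k N) = contractIter (c + i) k (mwTensor c M N) := by
  induction k with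
  | zero => intros; rfl
  | succ k ih =>
    intro M N hM
    simp only [contractIter]
    rw [ih _ _ hM, tensor_right _ _ _ _ (by omega) hM, ← add_assoc, ← add_assoc]

theorem tensor_left_iter {T : Type} (c i k : ℕ) (hi : i ≤ c) : ∀ (M N : Pre T),
    (∀ v, (St N.edges v ∨ En N.edges v) → 1 ≤ v) →
    mwTensor c (contractIter i k M) N = contractIter i k (mwTensor (c + 2 * k) M N) := by
  induction k with
  | zero => intros; rfl
  | succ k ih =>
    intro M N hN
    simp only [contractIter]
    rw [ih _ _ hN, tensor_left _ _ _ _ (by omega) hN]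
    rfl

theorem tensor_assoc {T : Type} (c d : ℕ) (M N K : Pre T) :
    mwTensor (c + d) (mwTensor c M N) K = mwTensor c M (mwTensor d N K) := by
  simp only [mwTensor, Multiset.map_add, Multiset.map_map, Pre.mk.injEq, add_assoc, true_and]
  simp [Function.comp_def, add_assoc]

theorem St_plus {T : Type} (M N : Pre T) (v : ℕ) :
    St (plus M N).edges v ↔ St M.edges v ∨ St N.edges v := by
  simp only [St, plus, Multiset.mem_add, or_and_right, exists_or]

theorem En_plus {T : Type} (M N : Pre T) (v : ℕ) :
    En (plus M N).edges v ↔ En M.edges v ∨ En N.edges v := by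
  simp only [En, plus, Multiset.mem_add, or_and_right, exists_or]

theorem ND_mem {T : Type} (M : Pre T) (v : ℕ) : 
    v ∈ (M.edges.map (fun e => e.1) + M.edges.map (fun e => e.2.2)) ↔
      St M.edges v ∨ En M.edges v := by
  simp only [Multiset.mem_add, Multiset.mem_map]
  rfl

theorem ND_plus {T : Type} (M N : Pre T) (hM : ND M.edges) (hN : ND N.edges)
    (h : ∀ v, (St M.edges v ∨ En M.edges v) → (St N.edges v ∨ En N.edges v) → False) :
    ND (plus M N).edges := by
  have : (plus M N).edges.map (fun e => e.1) + (plus M N).edges.map (fun e => e.2.2) =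
    (M.edges.map (fun e => e.1) + M.edges.map (fun e => e.2.2)) +
    (N.edges.map (fun e => e.1) + N.edges.map (fun e => e.2.2)) := by
    simp only [plus, Multiset.map_add]; abel
  unfold ND
  rw [this]
  refine (Multiset.nodup_add).2 ⟨hM, hN, ?_⟩
  rw [Multiset.disjoint_left]
  intro v hv hw
  exact h v ((ND_mem M v).1 hv) ((ND_mem N v).1 hw)

theorem Good.verts {T : Type} {N : ℕ} {L : ℕ → Prop} {M : Pre T} (h : Good N L M) (v : ℕ)
    (hv : St M.edges v ∨ En M.edges v) : 1 ≤ v ∧ v ≤ N := by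
  rw [h.2.1, h.2.2] at hv; tauto

theorem Good.tensor {T : Type} {B C : Boundary} {M N : Pre T}
    (h : Good B.card (· ∈ B.left) M) (h' : Good C.card (· ∈ C.left) N) :
    Good (B.tensor C).card (· ∈ (B.tensor C).left) (mwTensor B.card M N) := by
  rw [mwTensor_eq]
  have key : ∀ v, v ∈ (B.tensor C).left ↔ v ∈ B.left ∨ ∃ w, w ∈ C.left ∧ B.card + w = v := by
    intro v; simp [Boundary.tensor]
  have hB : ∀ v, v ∈ B.left → 1 ≤ v ∧ v ≤ B.card := fun v hv => Finset.mem_Icc.1 (B.left_sub hv)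
  have hC : ∀ v, v ∈ C.left → 1 ≤ v ∧ v ≤ C.card := fun v hv => Finset.mem_Icc.1 (C.left_sub hv)
  have hc : (B.tensor C).card = B.card + C.card := rfl
  refine ⟨ND_plus _ _ h.1 (ND_rel _ _ h'.1 ?_) ?_, fun v => ?_, fun v => ?_⟩
  · intro v w _ _ e; omega
  · intro v hv hw
    have h1 := h.verts v hv
    rw [St_rel, En_rel] at hw
    rcases hw with ⟨w, hw, rfl⟩ | ⟨w, hw, rfl⟩
    · have := h'.verts w (Or.inl hw); omega
    · have := h'.verts w (Or.inr hw); omega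
  · beta_reduce
    rw [St_plus, St_rel, key, hc, h.2.1]
    simp only [h'.2.1]
    constructor
    · rintro (⟨p, q, r⟩ | ⟨w, ⟨p, q, r⟩, rfl⟩)
      · exact ⟨p, by omega, Or.inl r⟩
      · exact ⟨by omega, by omega, Or.inr ⟨w, r, rfl⟩⟩
    · rintro ⟨p, q, r | ⟨w, r, rfl⟩⟩
      · exact Or.inl ⟨p, (hB v r).2, r⟩
      · exact Or.inr ⟨w, ⟨(hC w r).1, (hC w r).2, r⟩, rfl⟩
  · beta_reduce
    rw [En_plus, En_rel, key, hc, h.2.2]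
    simp only [h'.2.2]
    constructor
    · rintro (⟨p, q, r⟩ | ⟨w, ⟨p, q, r⟩, rfl⟩)
      · refine ⟨p, by omega, ?_⟩
        rintro (s | ⟨w, s, rfl⟩)
        · exact r s
        · have := hC w s; omega
      · refine ⟨by omega, by omega, ?_⟩
        rintro (s | ⟨w', s, e⟩)
        · have := hB _ s; omega
        · rw [Nat.add_left_cancel e] at s; exact r s
    · rintro ⟨p, q, r⟩
      by_cases hv : v ≤ B.card
      · exact Or.inl ⟨p, hv, fun s => r (Or.inl s)⟩
      · exact Or.inr ⟨v - B.card, ⟨by omega, by omega, fun s => r (Or.inr ⟨_, s, by omega⟩)⟩, by omega⟩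

theorem IsMW.good {T : Type} {B : Boundary} {M : Pre T} (h : IsMW B M) :
    Good B.card (· ∈ B.left) M := by
  obtain ⟨h1, h2⟩ := h
  have hB : ∀ v, v ∈ B.left → v ∈ Finset.Icc 1 B.card := fun v hv => B.left_sub hv
  have hex : ∀ v ∈ Finset.Icc 1 B.card, ∃ e ∈ M.edges, e.1 = v ∨ e.2.2 = v := by
    intro v hv
    have : 0 < Multiset.countP (fun e : Ed T => e.1 = v ∨ e.2.2 = v) M.edges := by
      rw [h2 v hv]; exact one_pos
    exact Multiset.countP_pos.1 this
  have hne : ∀ e ∈ M.edges, ∀ v, e.1 = v → e.2.2 = v → False := by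
    intro e he v p q
    have := h1 e he
    rw [p, q, Finset.mem_sdiff] at this
    exact this.2.2 this.1
  refine ⟨?_, fun v => ?_, fun v => ?_⟩
  · unfold ND
    rw [Multiset.nodup_iff_count_le_one]
    intro v
    rw [Multiset.count_add, Multiset.count_map, Multiset.count_map,
      ← Multiset.countP_eq_card_filter, ← Multiset.countP_eq_card_filter]
    by_cases hv : v ∈ Finset.Icc 1 B.card
    · rw [← h2 v hv]
      by_cases hl : v ∈ B.left
      · have : Multiset.countP (fun e : Ed T => v = e.2.2) M.edges = 0 := by
          rw [Multiset.countP_eq_zero]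
          rintro e he rfl
          exact (Finset.mem_sdiff.1 (h1 e he).2).2 hl
        rw [this, add_zero]
        apply le_of_eq
        apply Multiset.countP_congr rfl
        intro e he
        have : e.2.2 ≠ v := by
          rintro rfl
          exact (Finset.mem_sdiff.1 (h1 e he).2).2 hl
        simp [this, eq_comm]
      · have : Multiset.countP (fun e : Ed T => v = e.1) M.edges = 0 := by
          rw [Multiset.countP_eq_zero]
          rintro e he rfl
          exact hl (h1 e he).1
        rw [this, zero_add]
        apply le_of_eq
        apply Multiset.countP_congr rfl
        intro e he
        have : e.1 ≠ v := by
          rintro rfl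
          exact hl (h1 e he).1
        simp [this, eq_comm]
    · rw [Multiset.countP_eq_zero.2, Multiset.countP_eq_zero.2]
      · exact Nat.zero_le _
      · rintro e he rfl
        exact hv (Finset.mem_sdiff.1 (h1 e he).2).1
      · rintro e he rfl
        exact hv (hB _ (h1 e he).1)
  · constructor
    · rintro ⟨e, he, rfl⟩
      have := (h1 e he).1
      have h3 := Finset.mem_Icc.1 (hB _ this)
      exact ⟨h3.1, h3.2, this⟩
    · rintro ⟨p, q, r⟩
      obtain ⟨e, he, h | h⟩ := hex v (Finset.mem_Icc.2 ⟨p, q⟩)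
      · exact ⟨e, he, h⟩
      · exact absurd r (h ▸ (Finset.mem_sdiff.1 (h1 e he).2).2)
  · constructor
    · rintro ⟨e, he, rfl⟩
      have := Finset.mem_sdiff.1 (h1 e he).2
      have h3 := Finset.mem_Icc.1 this.1
      exact ⟨h3.1, h3.2, this.2⟩
    · rintro ⟨p, q, r⟩
      obtain ⟨e, he, h | h⟩ := hex v (Finset.mem_Icc.2 ⟨p, q⟩)
      · exact absurd (h1 e he).1 (h ▸ r)
      · exact ⟨e, he, h⟩

theorem mem_tensor_lo (B C : Boundary) (v : ℕ) (hv : v ≤ B.card) :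
    v ∈ (B.tensor C).left ↔ v ∈ B.left := by
  simp only [Boundary.tensor, Finset.mem_union, Finset.mem_image]
  constructor
  · rintro (h | ⟨w, h, rfl⟩)
    · exact h
    · have := Finset.mem_Icc.1 (C.left_sub h); omega
  · exact Or.inl

theorem mem_tensor_hi (B C : Boundary) (v : ℕ) (hv : 1 ≤ v) :
    B.card + v ∈ (B.tensor C).left ↔ v ∈ C.left := by
  simp only [Boundary.tensor, Finset.mem_union, Finset.mem_image]
  constructor
  · rintro (h | ⟨w, h, e⟩)
    · have := Finset.mem_Icc.1 (B.left_sub h); omega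
    · rwa [← Nat.add_left_cancel e]
  · exact fun h => Or.inr ⟨v, h, rfl⟩

theorem mem_dual (B : Boundary) (v : ℕ) (h1 : 1 ≤ v) (h2 : v ≤ B.card) :
    v ∈ B.dual.left ↔ B.card + 1 - v ∉ B.left := by
  simp only [Boundary.dual, Finset.mem_image, Finset.mem_sdiff, Finset.mem_Icc]
  constructor
  · rintro ⟨m, ⟨⟨p, q⟩, r⟩, rfl⟩
    rwa [show B.card + 1 - (B.card + 1 - m) = m by omega]
  · intro h
    exact ⟨B.card + 1 - v, ⟨by omega, h⟩, by omega⟩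

/-- Composition of cowordisms is associative:
for `σ : X → Y`, `τ : Y → Z`, `ρ : Z → W`, `(ρ ∘ τ) ∘ σ = ρ ∘ (τ ∘ σ)`. -/
theorem comp_assoc {T : Type} (X Y Z W : Boundary)
    (σ : Cowordism T X Y) (τ : Cowordism T Y Z) (ρ : Cowordism T Z W) :
    compData Y.card W.card (compData Z.card W.card ρ.1 τ.1) σ.1 =
      compData Z.card W.card ρ.1 (compData Y.card Z.card τ.1 σ.1) := by
  obtain ⟨σ, hσ⟩ := σ
  obtain ⟨τ, hτ⟩ := τ
  obtain ⟨ρ, hρ⟩ := ρ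
  have gσ := hσ.good
  have gτ := hτ.good
  have gρ := hρ.good
  dsimp only
  have g := gρ.tensor (gτ.tensor gσ)
  have dc : ∀ B : Boundary, B.dual.card = B.card := fun _ => rfl
  have tc : ∀ B C : Boundary, (B.tensor C).card = B.card + C.card := fun _ _ => rfl
  unfold compData
  rw [tensor_left_iter _ _ _ (by omega) _ _ (fun v hv => (gσ.verts v hv).1),
    tensor_right_iter (W.card + Z.card) Z.card Y.card ρ _ (fun v hv => (gρ.verts v hv).2),
    show W.card + Y.card + 2 * Z.card = (W.card + Z.card) + (Z.card + Y.card) by omega,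
    tensor_assoc, show W.card + Z.card + Z.card = W.card + 2 * Z.card by omega]
  refine comm3 W.card Z.card Y.card g ?_ ?_ ?_
  · simp only [tc, dc]; omega
  · intro t h1 h2
    beta_reduce
    rw [mem_tensor_lo _ _ _ (by simp only [tc, dc]; omega), mem_tensor_hi _ _ _ h1,
      mem_dual _ _ h1 h2,
      show W.card + 2 * Z.card + 1 - t = (W.tensor Z.dual).card + (Z.card + 1 - t) by
        simp only [tc, dc]; omega,
      mem_tensor_hi _ _ _ (by omega), mem_tensor_lo _ _ _ (by simp only [tc, dc]; omega),
      mem_tensor_lo _ _ _ (by omega)]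
    tauto
  · intro t h1 h2
    beta_reduce
    rw [show W.card + 2 * Z.card + t = (W.tensor Z.dual).card + (Z.card + t) by
        simp only [tc, dc]; omega,
      mem_tensor_hi _ _ _ (by omega), mem_tensor_lo _ _ _ (by simp only [tc, dc]; omega),
      mem_tensor_hi _ _ _ h1, mem_dual _ _ h1 h2,
      show W.card + 2 * Z.card + 2 * Y.card + 1 - t =
        (W.tensor Z.dual).card + ((Z.tensor Y.dual).card + (Y.card + 1 - t)) by
        simp only [tc, dc]; omega,
      mem_tensor_hi _ _ _ (by omega), mem_tensor_hi _ _ _ (by omega),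
      mem_tensor_lo _ _ _ (by omega)]
    tauto
end

section
/- The category of cowordisms over a finite alphabet T, with boundaries as objects, cowordisms as morphisms, composition by contraction, and identity cowordisms, is a category; moreover with the tensor product, the unit boundary and the symmetry cowordisms it is a symmetric monoidal category. -/
namespace Cow

variable {T : Type}

theorem pre_ext {M N : Pre T} (h1 : M.edges = N.edges) (h2 : M.singular = N.singular) : M = N := by
  cases M; cases N; simp_all

instance : Add (Pre T) := ⟨fun M N => ⟨M.edges + N.edges, M.singular + N.singular⟩⟩
instance : Zero (Pre T) := ⟨⟨0, 0⟩⟩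

@[simp] theorem add_edges (M N : Pre T) : (M + N).edges = M.edges + N.edges := rfl
@[simp] theorem add_singular (M N : Pre T) : (M + N).singular = M.singular + N.singular := rfl
@[simp] theorem zero_edges : (0 : Pre T).edges = 0 := rfl
@[simp] theorem zero_singular : (0 : Pre T).singular = 0 := rfl

instance : AddCommMonoid (Pre T) where
  add_assoc a b c := pre_ext (by simp [add_assoc]) (by simp [add_assoc])
  zero_add a := pre_ext (by simp) (by simp)
  add_zero a := pre_ext (by simp) (by simp)
  add_comm a b := pre_ext (by simp [add_comm]) (by simp [add_comm])
  nsmul := nsmulRec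

def srcs (M : Pre T) : Multiset ℕ := M.edges.map (fun e => e.1)
def tgts (M : Pre T) : Multiset ℕ := M.edges.map (fun e => e.2.2)

@[simp] theorem srcs_add (M N : Pre T) : srcs (M + N) = srcs M + srcs N := by simp [srcs]
@[simp] theorem tgts_add (M N : Pre T) : tgts (M + N) = tgts M + tgts N := by simp [tgts]
@[simp] theorem srcs_cons (a w b) (R : Multiset (ℕ × List T × ℕ)) (S) :
    srcs (⟨(a, w, b) ::ₘ R, S⟩ : Pre T) = a ::ₘ srcs ⟨R, S⟩ := by simp [srcs]
@[simp] theorem tgts_cons (a w b) (R : Multiset (ℕ × List T × ℕ)) (S) :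
    tgts (⟨(a, w, b) ::ₘ R, S⟩ : Pre T) = b ::ₘ tgts ⟨R, S⟩ := by simp [tgts]

theorem mem_srcs {M : Pre T} {v : ℕ} : v ∈ srcs M ↔ ∃ e ∈ M.edges, e.1 = v := by
  simp only [srcs, Multiset.mem_map]
theorem mem_tgts {M : Pre T} {v : ℕ} : v ∈ tgts M ↔ ∃ e ∈ M.edges, e.2.2 = v := by
  simp only [tgts, Multiset.mem_map]

/-- relabelling -/
def rl (f : ℕ → ℕ) (M : Pre T) : Pre T :=
  ⟨M.edges.map (fun e => (f e.1, e.2.1, f e.2.2)), M.singular⟩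

@[simp] theorem rl_add (f) (M N : Pre T) : rl f (M + N) = rl f M + rl f N :=
  pre_ext (by simp [rl]) (by simp [rl])

@[simp] theorem srcs_rl (f) (M : Pre T) : srcs (rl f M) = (srcs M).map f := by
  simp [srcs, rl, Multiset.map_map]
@[simp] theorem tgts_rl (f) (M : Pre T) : tgts (rl f M) = (tgts M).map f := by
  simp [tgts, rl, Multiset.map_map]

theorem rl_rl (f g) (M : Pre T) : rl f (rl g M) = rl (f ∘ g) M :=
  pre_ext (by simp [rl, Multiset.map_map]) rfl

theorem rl_congr {f g : ℕ → ℕ} {M : Pre T} (h : ∀ v, v ∈ srcs M ∨ v ∈ tgts M → f v = g v) :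
    rl f M = rl g M := by
  refine pre_ext ?_ rfl
  refine Multiset.map_congr rfl ?_
  intro e he
  rw [h e.1 (Or.inl (mem_srcs.2 ⟨e, he, rfl⟩)), h e.2.2 (Or.inr (mem_tgts.2 ⟨e, he, rfl⟩))]

theorem rl_id' {f : ℕ → ℕ} {M : Pre T} (h : ∀ v, v ∈ srcs M ∨ v ∈ tgts M → f v = v) :
    rl f M = M := by
  rw [rl_congr (g := id) h]
  exact pre_ext (by simp [rl]) rfl

theorem rl_inj {f : ℕ → ℕ} (hf : Function.Injective f) {M N : Pre T} (h : rl f M = rl f N) :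
    M = N := by
  have h1 := congrArg Pre.edges h
  have h2 := congrArg Pre.singular h
  refine pre_ext ?_ h2
  refine Multiset.map_injective ?_ h1
  rintro ⟨a, w, b⟩ ⟨a', w', b'⟩ hh
  simp only [Prod.mk.injEq] at hh
  rw [hf hh.1, hh.2.1, hf hh.2.2]

/-- oriented gluing of target `p` with source `q` -/
def gl (p q : ℕ) (M : Pre T) : Pre T where
  edges := M.edges.filter (fun e => e.1 ≠ q ∧ e.2.2 ≠ p) +
    (M.edges.filter (fun e => e.1 ≠ q ∧ e.2.2 = p)).bind (fun e₁ =>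
      (M.edges.filter (fun e => e.1 = q ∧ e.2.2 ≠ p)).map
        (fun e₂ => (e₁.1, e₁.2.1 ++ e₂.2.1, e₂.2.2)))
  singular := M.singular + (M.edges.filter (fun e => e.1 = q ∧ e.2.2 = p)).map
      (fun e => (Quot.mk _ e.2.1 : CyclicWord T))

theorem gl_rl {f : ℕ → ℕ} (hf : Function.Injective f) (p q : ℕ) (M : Pre T) :
    gl (f p) (f q) (rl f M) = rl f (gl p q M) := by
  refine pre_ext ?_ ?_
  · simp only [gl, rl, Multiset.filter_map, Multiset.map_add, Multiset.map_bind,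
      Multiset.bind_map, Multiset.map_map, Function.comp_def, hf.eq_iff, ne_eq]
  · simp only [gl, rl, Multiset.filter_map, Multiset.map_map, Function.comp_def, hf.eq_iff]

theorem gl_add {p q : ℕ} {M N : Pre T} (hq : q ∉ srcs N) (hp : p ∉ tgts N) :
    gl p q (M + N) = gl p q M + N := by
  have h1 : ∀ e ∈ N.edges, e.1 ≠ q := fun e he h => hq (mem_srcs.2 ⟨e, he, h⟩)
  have h2 : ∀ e ∈ N.edges, e.2.2 ≠ p := fun e he h => hp (mem_tgts.2 ⟨e, he, h⟩)
  have a1 : N.edges.filter (fun e => e.1 ≠ q ∧ e.2.2 ≠ p) = N.edges :=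
    Multiset.filter_eq_self.2 fun e he => ⟨h1 e he, h2 e he⟩
  have a2 : N.edges.filter (fun e => e.1 ≠ q ∧ e.2.2 = p) = 0 :=
    Multiset.filter_eq_nil.2 fun e he h => h2 e he h.2
  have a3 : N.edges.filter (fun e => e.1 = q ∧ e.2.2 ≠ p) = 0 :=
    Multiset.filter_eq_nil.2 fun e he h => h1 e he h.1
  have a4 : N.edges.filter (fun e => e.1 = q ∧ e.2.2 = p) = 0 :=
    Multiset.filter_eq_nil.2 fun e he h => h1 e he h.1
  refine pre_ext ?_ ?_
  · simp only [gl, add_edges, Multiset.filter_add, a1, a2, a3, add_zero]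
    abel
  · simp only [gl, add_edges, add_singular, Multiset.filter_add, a4, add_zero]
    abel

theorem gl_loop {p q : ℕ} {w : List T} {R S} (hq : q ∉ srcs ⟨R, S⟩) (hp : p ∉ tgts ⟨R, S⟩) :
    gl p q ⟨(q, w, p) ::ₘ R, S⟩ = ⟨R, Quot.mk _ w ::ₘ S⟩ := by
  have : (⟨(q, w, p) ::ₘ R, S⟩ : Pre T) = ⟨{(q, w, p)}, 0⟩ + ⟨R, S⟩ :=
    pre_ext (by simp) (by simp)
  rw [this, gl_add hq hp]
  refine pre_ext ?_ ?_
  · simp [gl, Multiset.filter_singleton]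
  · simp [gl, Multiset.filter_singleton]

theorem gl_join {p q x y : ℕ} {u v : List T} {R S} (hx : x ≠ q) (hy : y ≠ p)
    (hq : q ∉ srcs ⟨R, S⟩) (hp : p ∉ tgts ⟨R, S⟩) :
    gl p q ⟨(x, u, p) ::ₘ (q, v, y) ::ₘ R, S⟩ = ⟨(x, u ++ v, y) ::ₘ R, S⟩ := by
  have : (⟨(x, u, p) ::ₘ (q, v, y) ::ₘ R, S⟩ : Pre T) =
      ⟨(x, u, p) ::ₘ (q, v, y) ::ₘ 0, 0⟩ + ⟨R, S⟩ :=
    pre_ext (by simp) (by simp)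
  rw [this, gl_add hq hp]
  refine pre_ext ?_ ?_
  · simp [gl, Multiset.filter_cons, Multiset.filter_singleton, hx, hy]
  · simp [gl, Multiset.filter_cons, Multiset.filter_singleton, hx, hy]

theorem decomp {p q : ℕ} {R : Multiset (ℕ × List T × ℕ)} {S}
    (hs : (srcs ⟨R, S⟩).Nodup) (ht : (tgts ⟨R, S⟩).Nodup)
    (hq : q ∈ srcs ⟨R, S⟩) (hp : p ∈ tgts ⟨R, S⟩) :
    (∃ w R', R = (q, w, p) ::ₘ R' ∧ q ∉ srcs ⟨R', S⟩ ∧ p ∉ tgts ⟨R', S⟩) ∨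
    (∃ x u v y R', R = (x, u, p) ::ₘ (q, v, y) ::ₘ R' ∧ x ≠ q ∧ y ≠ p ∧
      q ∉ srcs ⟨R', S⟩ ∧ p ∉ tgts ⟨R', S⟩) := by
  obtain ⟨⟨x, u, p'⟩, he, rfl⟩ := mem_tgts.1 hp
  obtain ⟨R1, rfl⟩ := Multiset.exists_cons_of_mem he
  simp only [srcs_cons, tgts_cons, Multiset.nodup_cons, Multiset.mem_cons] at *
  by_cases hxq : q = x
  · subst hxq
    exact Or.inl ⟨u, R1, rfl, hs.1, ht.1⟩
  · have hq' := hq.resolve_left hxq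
    obtain ⟨⟨q', v, y⟩, he', rfl⟩ := mem_srcs.1 hq'
    obtain ⟨R2, rfl⟩ := Multiset.exists_cons_of_mem he'
    simp only [srcs_cons, tgts_cons, Multiset.nodup_cons, Multiset.mem_cons, not_or] at *
    exact Or.inr ⟨x, u, v, y, R2, rfl, Ne.symm hxq, Ne.symm ht.1.1, hs.2.1, ht.1.2⟩

theorem srcs_S {R : Multiset (ℕ × List T × ℕ)} (S S') : srcs ⟨R, S⟩ = srcs ⟨R, S'⟩ := rfl
theorem tgts_S {R : Multiset (ℕ × List T × ℕ)} (S S') : tgts ⟨R, S⟩ = tgts ⟨R, S'⟩ := rfl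

structure Gd (M : Pre T) : Prop where
  s : (srcs M).Nodup
  t : (tgts M).Nodup

theorem gl_srcs {p q : ℕ} {M : Pre T} (h : Gd M) (hp : p ∈ tgts M) (hq : q ∈ srcs M) :
    srcs M = q ::ₘ srcs (gl p q M) ∧ tgts M = p ::ₘ tgts (gl p q M) := by
  obtain ⟨R, S⟩ := M
  rcases decomp h.s h.t hq hp with ⟨w, R', rfl, h1, h2⟩ | ⟨x, u, v, y, R', rfl, hx, hy, h1, h2⟩
  · rw [gl_loop h1 h2]
    simp only [srcs_cons, tgts_cons]
    exact ⟨rfl, rfl⟩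
  · rw [gl_join hx hy h1 h2]
    simp only [srcs_cons, tgts_cons]
    exact ⟨Multiset.cons_swap _ _ _, trivial⟩

theorem gl_gd {p q : ℕ} {M : Pre T} (h : Gd M) (hp : p ∈ tgts M) (hq : q ∈ srcs M) :
    Gd (gl p q M) := by
  have := gl_srcs h hp hq
  have h1 := h.s
  have h2 := h.t
  rw [this.1] at h1
  rw [this.2] at h2
  exact ⟨(Multiset.nodup_cons.1 h1).2, (Multiset.nodup_cons.1 h2).2⟩

theorem gl_sub (p q : ℕ) (M : Pre T) (v : ℕ) :
    (v ∈ srcs (gl p q M) → v ∈ srcs M) ∧ (v ∈ tgts (gl p q M) → v ∈ tgts M) := by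
  constructor
  · intro h
    obtain ⟨e, he, rfl⟩ := mem_srcs.1 h
    simp only [gl, Multiset.mem_add, Multiset.mem_filter, Multiset.mem_bind, Multiset.mem_map] at he
    rcases he with he | ⟨a, ha, b, hb, rfl⟩
    · exact mem_srcs.2 ⟨e, he.1, rfl⟩
    · exact mem_srcs.2 ⟨a, ha.1, rfl⟩
  · intro h
    obtain ⟨e, he, rfl⟩ := mem_tgts.1 h
    simp only [gl, Multiset.mem_add, Multiset.mem_filter, Multiset.mem_bind, Multiset.mem_map] at he
    rcases he with he | ⟨a, ha, b, hb, rfl⟩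
    · exact mem_tgts.2 ⟨e, he.1, rfl⟩
    · exact mem_tgts.2 ⟨b, hb.1, rfl⟩

theorem gl_comm_aux {p q r s : ℕ} {M : Pre T} (h : Gd M) (hp : p ∈ tgts M) (hq : q ∈ srcs M)
    (hr : r ∈ tgts M) (hs : s ∈ srcs M) (hpr : p ≠ r) (hqs : q ≠ s) :
    gl r s (gl p q M) = gl p q (gl r s M) := by
  obtain ⟨R, S⟩ := M
  have hss := h.s
  have htt := h.t
  rcases decomp h.s h.t hq hp with ⟨w, R', rfl, h1, h2⟩ | ⟨x, u, v, y, R', rfl, hx, hy, h1, h2⟩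
  · rw [gl_loop h1 h2]
    simp only [srcs_cons, tgts_cons, Multiset.nodup_cons, Multiset.mem_cons] at hr hs hss htt
    replace hr := hr.resolve_left (Ne.symm hpr)
    replace hs := hs.resolve_left (Ne.symm hqs)
    rcases decomp hss.2 htt.2 hs hr with ⟨w', R, rfl, h3, h4⟩ | ⟨x', u', v', y', R, rfl, hx', hy', h3, h4⟩
    · rw [gl_loop, Multiset.cons_swap (q, w, p), gl_loop, gl_loop, Multiset.cons_swap] <;>
        simp_all [srcs_S _ S, tgts_S _ S]
      all_goals grind
    · rw [gl_join, Multiset.cons_swap (q, w, p), Multiset.cons_swap (q, w, p) (s, v', y') R,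
        gl_join, Multiset.cons_swap, gl_loop] <;> simp_all [srcs_S _ S, tgts_S _ S]
      all_goals grind
  · rw [gl_join hx hy h1 h2]
    simp only [srcs_cons, tgts_cons, Multiset.nodup_cons, Multiset.mem_cons] at hr hs hss htt
    replace hr := hr.resolve_left (Ne.symm hpr)
    by_cases hry : r = y
    · subst hry
      by_cases hsx : s = x
      · subst hsx
        rw [gl_loop, Multiset.cons_swap, gl_join, gl_loop]
        · congr 2
          exact Quot.sound ⟨u, v, rfl, rfl⟩
        all_goals simp_all [srcs_S _ S, tgts_S _ S]
      · replace hs := (hs.resolve_left hsx).resolve_left (Ne.symm hqs)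
        obtain ⟨⟨s', v', y'⟩, he', rfl⟩ := mem_srcs.1 hs
        obtain ⟨R, rfl⟩ := Multiset.exists_cons_of_mem he'
        rw [gl_join]
        · rw [Multiset.cons_swap (x, u, p), Multiset.cons_swap (x, u, p), gl_join,
            Multiset.cons_swap, gl_join]
          · simp
          all_goals simp_all
          all_goals grind
        all_goals simp_all
        all_goals grind
    · replace hr := hr.resolve_left hry
      by_cases hsx : s = x
      · subst hsx
        obtain ⟨⟨x', u', r'⟩, he', rfl⟩ := mem_tgts.1 hr
        obtain ⟨R, rfl⟩ := Multiset.exists_cons_of_mem he'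
        rw [Multiset.cons_swap, gl_join]
        · rw [Multiset.cons_swap (q, v, y), Multiset.cons_swap (s, u, p), gl_join, gl_join]
          · simp
          all_goals simp_all
          all_goals grind
        all_goals simp_all
        all_goals grind
      · replace hs := (hs.resolve_left hsx).resolve_left (Ne.symm hqs)
        rcases decomp hss.2.2 htt.2.2 hs hr with ⟨w', R, rfl, h3, h4⟩ | ⟨x', u', v', y', R, rfl, hx', hy', h3, h4⟩
        · rw [Multiset.cons_swap, gl_loop, Multiset.cons_swap (q, v, y), Multiset.cons_swap (x, u, p),
            gl_loop, gl_join]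
          all_goals simp_all [srcs_S _ S, tgts_S _ S]
          all_goals grind
        · have e1 : ((x, u ++ v, y) ::ₘ (x', u', r) ::ₘ (s, v', y') ::ₘ R) =
            ((x', u', r) ::ₘ (s, v', y') ::ₘ (x, u ++ v, y) ::ₘ R) := by
            rw [Multiset.cons_swap, Multiset.cons_swap (x, u ++ v, y)]
          have e2 : ((x, u, p) ::ₘ (q, v, y) ::ₘ (x', u', r) ::ₘ (s, v', y') ::ₘ R) =
            ((x', u', r) ::ₘ (s, v', y') ::ₘ (x, u, p) ::ₘ (q, v, y) ::ₘ R) := by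
            rw [Multiset.cons_swap (q, v, y), Multiset.cons_swap (q, v, y),
              Multiset.cons_swap (x, u, p), Multiset.cons_swap (x, u, p)]
          have e3 : ((x', u' ++ v', y') ::ₘ (x, u, p) ::ₘ (q, v, y) ::ₘ R) =
            ((x, u, p) ::ₘ (q, v, y) ::ₘ (x', u' ++ v', y') ::ₘ R) := by
            rw [Multiset.cons_swap, Multiset.cons_swap (x', u' ++ v', y')]
          rw [e1, gl_join, e2, gl_join, e3, gl_join, Multiset.cons_swap]
          all_goals simp_all
          all_goals grind

/-- iterated gluing -/
def glAll (l : List (ℕ × ℕ)) (M : Pre T) : Pre T := l.foldl (fun M e => gl e.1 e.2 M) M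

@[simp] theorem glAll_nil (M : Pre T) : glAll [] M = M := rfl
@[simp] theorem glAll_cons (e l) (M : Pre T) : glAll (e :: l) M = glAll l (gl e.1 e.2 M) := rfl
theorem glAll_append (l l') (M : Pre T) : glAll (l ++ l') M = glAll l' (glAll l M) := by
  simp [glAll]

/-- validity of a gluing list -/
structure Vd (l : List (ℕ × ℕ)) (M : Pre T) : Prop where
  gd : Gd M
  n1 : (l.map Prod.fst).Nodup
  n2 : (l.map Prod.snd).Nodup
  m1 : ∀ e ∈ l, e.1 ∈ tgts M
  m2 : ∀ e ∈ l, e.2 ∈ srcs M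

theorem Vd.tail {e l} {M : Pre T} (h : Vd (e :: l) M) : Vd l (gl e.1 e.2 M) := by
  have hp := h.m1 e (by simp)
  have hq := h.m2 e (by simp)
  have h1 := h.n1
  have h2 := h.n2
  simp only [List.map_cons, List.nodup_cons, List.mem_map, not_exists, not_and] at h1 h2
  have := gl_srcs h.gd hp hq
  refine ⟨gl_gd h.gd hp hq, h1.2, h2.2, ?_, ?_⟩
  · intro e' he'
    have h3 := h.m1 e' (by simp [he'])
    rw [this.2, Multiset.mem_cons] at h3
    exact h3.resolve_left (h1.1 e' he')
  · intro e' he'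
    have h3 := h.m2 e' (by simp [he'])
    rw [this.1, Multiset.mem_cons] at h3
    exact h3.resolve_left (h2.1 e' he')

theorem Vd.perm {l l'} {M : Pre T} (h : Vd l M) (hl : l.Perm l') : Vd l' M :=
  ⟨h.gd, (hl.map _).nodup_iff.1 h.n1, (hl.map _).nodup_iff.1 h.n2,
    fun e he => h.m1 e (hl.mem_iff.2 he), fun e he => h.m2 e (hl.mem_iff.2 he)⟩

theorem glAll_perm {l l'} (hl : l.Perm l') : ∀ {M : Pre T}, Vd l M → glAll l M = glAll l' M := by
  induction hl with
  | nil => intros; rfl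
  | cons x _ ih => intro M h; exact ih h.tail
  | swap x y l =>
    intro M h
    simp only [glAll_cons]
    have h1 := h.n1
    have h2 := h.n2
    simp only [List.map_cons, List.nodup_cons, List.mem_cons, not_or] at h1 h2
    rw [gl_comm_aux h.gd (h.m1 y (by simp)) (h.m2 y (by simp)) (h.m1 x (by simp)) (h.m2 x (by simp))
      h1.1.1 h2.1.1]
  | trans h1 h2 ih1 ih2 => intro M h; rw [ih1 h, ih2 (h.perm h1)]

theorem glAll_srcs {l} : ∀ {M : Pre T}, Vd l M →
    Gd (glAll l M) ∧ (∀ v, v ∈ srcs (glAll l M) ↔ v ∈ srcs M ∧ v ∉ l.map Prod.snd) ∧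
    (∀ v, v ∈ tgts (glAll l M) ↔ v ∈ tgts M ∧ v ∉ l.map Prod.fst) := by
  induction l with
  | nil => intro M h; simpa using h.gd
  | cons e l ih =>
    intro M h
    have h0 := ih h.tail
    have hg := gl_srcs h.gd (h.m1 e (by simp)) (h.m2 e (by simp))
    have hs := h.gd.s
    have ht := h.gd.t
    rw [hg.1, Multiset.nodup_cons] at hs
    rw [hg.2, Multiset.nodup_cons] at ht
    refine ⟨h0.1, ?_, ?_⟩
    · intro v
      rw [glAll_cons, h0.2.1, hg.1]
      simp only [Multiset.mem_cons, List.map_cons, List.mem_cons, not_or]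
      constructor
      · rintro ⟨a, b⟩
        exact ⟨Or.inr a, fun hv => hs.1 (hv ▸ a), b⟩
      · rintro ⟨a, b, c⟩
        exact ⟨a.resolve_left b, c⟩
    · intro v
      rw [glAll_cons, h0.2.2, hg.2]
      simp only [Multiset.mem_cons, List.map_cons, List.mem_cons, not_or]
      constructor
      · rintro ⟨a, b⟩
        exact ⟨Or.inr a, fun hv => ht.1 (hv ▸ a), b⟩
      · rintro ⟨a, b, c⟩
        exact ⟨a.resolve_left b, c⟩

theorem glAll_rl {f : ℕ → ℕ} (hf : Function.Injective f) (l) : ∀ (M : Pre T),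
    glAll (l.map (Prod.map f f)) (rl f M) = rl f (glAll l M) := by
  induction l with
  | nil => intro M; rfl
  | cons e l ih =>
    intro M
    simp only [List.map_cons, glAll_cons, Prod.map_fst, Prod.map_snd]
    rw [gl_rl hf, ih]

theorem glAll_add {l} {N : Pre T} (h : ∀ e ∈ l, e.1 ∉ tgts N ∧ e.2 ∉ srcs N) : ∀ (M : Pre T),
    glAll l (M + N) = glAll l M + N := by
  induction l with
  | nil => intro M; rfl
  | cons e l ih =>
    intro M
    simp only [glAll_cons]
    rw [gl_add (h e (by simp)).2 (h e (by simp)).1, ih (fun e he => h e (by simp [he]))]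

/-! ### relation with `contractAt` -/

theorem contractAt_spec {n p q : ℕ} {M : Pre T} (hpq : (p = n ∧ q = n + 1) ∨ (q = n ∧ p = n + 1))
    (hp : p ∉ srcs M) (hq : q ∉ tgts M) :
    rl (fun v => if v < n then v else v + 2) (contractAt n M) = gl p q M := by
  have h1 : ∀ e ∈ M.edges, e.1 ≠ p := fun e he h => hp (mem_srcs.2 ⟨e, he, h⟩)
  have h2 : ∀ e ∈ M.edges, e.2.2 ≠ q := fun e he h => hq (mem_tgts.2 ⟨e, he, h⟩)
  have key : ∀ v, v ≠ n → v ≠ n + 1 →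
    (if (if v < n then v else v - 2) < n then (if v < n then v else v - 2)
      else (if v < n then v else v - 2) + 2) = v := by
    intro v a b
    split_ifs <;> omega
  refine pre_ext ?_ ?_
  · simp only [rl, contractAt, gl, Multiset.map_add, Multiset.map_bind, Multiset.map_map]
    congr 1
    · rw [Multiset.filter_congr (q := fun e => e.1 ≠ q ∧ e.2.2 ≠ p)]
      · conv_rhs => rw [← Multiset.map_id (Multiset.filter _ _)]
        refine Multiset.map_congr rfl ?_
        rintro ⟨a, w, b⟩ he
        rw [Multiset.mem_filter] at he
        have := h1 _ he.1
        have := h2 _ he.1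
        simp only [Function.comp, id] at *
        rw [key a (by omega) (by omega), key b (by omega) (by omega)]
      · intro e he
        have := h1 _ he
        have := h2 _ he
        omega
    · rw [Multiset.filter_congr (q := fun e => e.1 ≠ q ∧ e.2.2 = p)]
      · refine Multiset.bind_congr ?_
        rintro ⟨a, w, b⟩ he
        rw [Multiset.mem_filter] at he
        have := h1 _ he.1
        have := h2 _ he.1
        rw [Multiset.filter_congr (q := fun e => e.1 = q ∧ e.2.2 ≠ p)]
        · refine Multiset.map_congr rfl ?_
          rintro ⟨a', w', b'⟩ he'
          rw [Multiset.mem_filter] at he'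
          have := h1 _ he'.1
          have := h2 _ he'.1
          simp only [Function.comp] at *
          rw [key a (by omega) (by omega), key b' (by omega) (by omega)]
        · intro e' he'
          have := h1 _ he'
          have := h2 _ he'
          simp only at *
          omega
      · intro e he
        have := h1 _ he
        have := h2 _ he
        omega
  · simp only [rl, contractAt, gl]
    rw [Multiset.filter_congr (q := fun e => e.1 = q ∧ e.2.2 = p)]
    intro e he
    have := h1 _ he
    have := h2 _ he
    omega

def pr (b : Bool) (x y : ℕ) : ℕ × ℕ := if b then (x, y) else (y, x)

theorem pr_map (b : Bool) (f : ℕ → ℕ) (x y) :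
    Prod.map f f (pr b x y) = pr b (f x) (f y) := by
  unfold pr; split_ifs <;> rfl

theorem contractIter_spec (i k : ℕ) : ∀ (pol : ℕ → Bool) (M : Pre T),
    (∀ m, 1 ≤ m → m ≤ k → (pr (pol m) (i+k+1-m) (i+k+m)).1 ∉ srcs M ∧
      (pr (pol m) (i+k+1-m) (i+k+m)).2 ∉ tgts M) →
    rl (fun v => if v ≤ i then v else v + 2 * k) (contractIter i k M) =
      glAll ((List.range' 1 k).map (fun m => pr (pol m) (i+k+1-m) (i+k+m))) M := by
  induction k with
  | zero =>
    intro pol M h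
    simp only [contractIter, List.range'_zero, List.map_nil, glAll_nil]
    exact rl_id' (by intro v _; simp)
  | succ k ih =>
    intro pol M h
    set g : ℕ → ℕ := fun v => if v < i + k + 1 then v else v + 2 with hgdef
    have hg : Function.Injective g := by
      intro a b hab
      simp only [hgdef] at hab
      split_ifs at hab <;> omega
    have hfirst := h 1 le_rfl (by omega)
    have hstep : rl g (contractAt (i+k+1) M) =
        gl (pr (pol 1) (i+(k+1)+1-1) (i+(k+1)+1)).1 (pr (pol 1) (i+(k+1)+1-1) (i+(k+1)+1)).2 M := by
      refine contractAt_spec ?_ hfirst.1 hfirst.2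
      unfold pr
      split_ifs <;> simp <;> omega
    have e1 : (fun v => if v ≤ i then v else v + 2 * (k+1)) =
        g ∘ (fun v => if v ≤ i then v else v + 2 * k) := by
      funext v
      simp only [hgdef, Function.comp]
      split_ifs <;> omega
    have ih' := ih (fun m => pol (m+1)) (contractAt (i+k+1) M) ?_
    · simp only [contractIter]
      rw [e1, ← rl_rl, ih', ← glAll_rl hg, hstep]
      rw [List.range'_succ, List.map_cons, glAll_cons]
      congr 1
      rw [List.range'_eq_map_range, List.range'_eq_map_range, List.map_map, List.map_map, List.map_map]
      refine List.map_congr_left ?_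
      intro m hm
      rw [List.mem_range] at hm
      simp only [Function.comp, pr_map]
      have : 1 + 1 + m = 1 + m + 1 := by ring
      rw [this]
      congr 1
      · simp only [hgdef]; split_ifs <;> omega
      · simp only [hgdef]; split_ifs <;> omega
    · intro m h1 h2
      have h3 := h (m+1) (by omega) (by omega)
      have e2 : pr (pol (m+1)) (i+(k+1)+1-(m+1)) (i+(k+1)+(m+1)) =
          Prod.map g g (pr (pol (m+1)) (i+k+1-m) (i+k+m)) := by
        rw [pr_map]
        congr 1
        · simp only [hgdef]; split_ifs <;> omega
        · simp only [hgdef]; split_ifs <;> omega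
      rw [e2] at h3
      constructor
      · intro hc
        refine h3.1 ?_
        apply (gl_sub _ _ _ _).1
        rw [← hstep, srcs_rl]
        exact Multiset.mem_map_of_mem _ hc
      · intro hc
        refine h3.2 ?_
        apply (gl_sub _ _ _ _).2
        rw [← hstep, tgts_rl]
        exact Multiset.mem_map_of_mem _ hc

/-! ### multiwords -/

theorem countP_left {B : Boundary} {M : Pre T}
    (h : ∀ e ∈ M.edges, e.1 ∈ B.left ∧ e.2.2 ∈ Finset.Icc 1 B.card \ B.left) {v : ℕ}
    (hv : v ∈ B.left) :
    Multiset.countP (fun e => e.1 = v ∨ e.2.2 = v) M.edges = (srcs M).count v := by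
  rw [srcs, Multiset.count_map, Multiset.countP_eq_card_filter]
  congr 1
  refine Multiset.filter_congr ?_
  intro e he
  have := h e he
  rw [Finset.mem_sdiff] at this
  constructor
  · rintro (h1 | h1)
    · exact h1.symm
    · exact absurd hv (h1 ▸ this.2.2)
  · intro h1; exact Or.inl h1.symm

theorem countP_right {B : Boundary} {M : Pre T}
    (h : ∀ e ∈ M.edges, e.1 ∈ B.left ∧ e.2.2 ∈ Finset.Icc 1 B.card \ B.left) {v : ℕ}
    (hv : v ∉ B.left) :
    Multiset.countP (fun e => e.1 = v ∨ e.2.2 = v) M.edges = (tgts M).count v := by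
  rw [tgts, Multiset.count_map, Multiset.countP_eq_card_filter]
  congr 1
  refine Multiset.filter_congr ?_
  intro e he
  have := h e he
  constructor
  · rintro (h1 | h1)
    · exact absurd (h1 ▸ this.1) hv
    · exact h1.symm
  · intro h1; exact Or.inr h1.symm

theorem isMW_iff {B : Boundary} {M : Pre T} : IsMW B M ↔ Gd M ∧ (∀ v, v ∈ srcs M ↔ v ∈ B.left) ∧
    (∀ v, v ∈ tgts M ↔ 1 ≤ v ∧ v ≤ B.card ∧ v ∉ B.left) := by
  constructor
  · rintro ⟨h1, h2⟩
    have c1 : ∀ v ∈ B.left, (srcs M).count v = 1 := fun v hv => by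
      rw [← countP_left h1 hv]; exact h2 v (B.left_sub hv)
    have c2 : ∀ v, 1 ≤ v → v ≤ B.card → v ∉ B.left → (tgts M).count v = 1 := fun v a b hv => by
      rw [← countP_right h1 hv]; exact h2 v (Finset.mem_Icc.2 ⟨a, b⟩)
    have s1 : ∀ v ∈ srcs M, v ∈ B.left := by
      intro v hv
      obtain ⟨e, he, rfl⟩ := mem_srcs.1 hv
      exact (h1 e he).1
    have s2 : ∀ v ∈ tgts M, 1 ≤ v ∧ v ≤ B.card ∧ v ∉ B.left := by
      intro v hv
      obtain ⟨e, he, rfl⟩ := mem_tgts.1 hv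
      have := (h1 e he).2
      rw [Finset.mem_sdiff, Finset.mem_Icc] at this
      tauto
    refine ⟨⟨?_, ?_⟩, ?_, ?_⟩
    · rw [Multiset.nodup_iff_count_le_one]
      intro v
      by_cases hv : v ∈ srcs M
      · exact (c1 v (s1 v hv)).le
      · rw [Multiset.count_eq_zero_of_notMem hv]; omega
    · rw [Multiset.nodup_iff_count_le_one]
      intro v
      by_cases hv : v ∈ tgts M
      · obtain ⟨a, b, c⟩ := s2 v hv
        exact (c2 v a b c).le
      · rw [Multiset.count_eq_zero_of_notMem hv]; omega
    · intro v
      refine ⟨s1 v, fun hv => ?_⟩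
      rw [← Multiset.count_pos, c1 v hv]; omega
    · intro v
      refine ⟨s2 v, fun ⟨a, b, c⟩ => ?_⟩
      rw [← Multiset.count_pos, c2 v a b c]; omega
  · rintro ⟨hg, hs, ht⟩
    have h1 : ∀ e ∈ M.edges, e.1 ∈ B.left ∧ e.2.2 ∈ Finset.Icc 1 B.card \ B.left := by
      intro e he
      refine ⟨(hs _).1 (mem_srcs.2 ⟨e, he, rfl⟩), ?_⟩
      have := (ht _).1 (mem_tgts.2 ⟨e, he, rfl⟩)
      rw [Finset.mem_sdiff, Finset.mem_Icc]
      tauto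
    refine ⟨h1, ?_⟩
    intro v hv
    rw [Finset.mem_Icc] at hv
    by_cases hvl : v ∈ B.left
    · rw [countP_left h1 hvl]
      exact Multiset.count_eq_one_of_mem hg.s ((hs v).2 hvl)
    · rw [countP_right h1 hvl]
      exact Multiset.count_eq_one_of_mem hg.t ((ht v).2 ⟨hv.1, hv.2, hvl⟩)

theorem left_bd {X : Boundary} {v : ℕ} (h : v ∈ X.left) : 1 ≤ v ∧ v ≤ X.card :=
  Finset.mem_Icc.1 (X.left_sub h)

theorem mem_tensor {X Y : Boundary} {v : ℕ} : v ∈ (X.tensor Y).left ↔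
    v ∈ X.left ∨ (X.card < v ∧ v - X.card ∈ Y.left) := by
  simp only [Boundary.tensor, Finset.mem_union, Finset.mem_image]
  constructor
  · rintro (h | ⟨m, hm, rfl⟩)
    · exact Or.inl h
    · have := left_bd hm
      refine Or.inr ⟨by omega, ?_⟩
      rwa [Nat.add_sub_cancel_left]
  · rintro (h | ⟨h1, h2⟩)
    · exact Or.inl h
    · exact Or.inr ⟨_, h2, by omega⟩

theorem mem_dual {X : Boundary} {v : ℕ} : v ∈ X.dual.left ↔
    1 ≤ v ∧ v ≤ X.card ∧ X.card + 1 - v ∉ X.left := by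
  simp only [Boundary.dual, Finset.mem_image, Finset.mem_sdiff, Finset.mem_Icc]
  constructor
  · rintro ⟨m, ⟨h1, h2⟩, rfl⟩
    refine ⟨by omega, by omega, ?_⟩
    have : X.card + 1 - (X.card + 1 - m) = m := by omega
    rwa [this]
  · rintro ⟨h1, h2, h3⟩
    exact ⟨_, ⟨⟨by omega, by omega⟩, h3⟩, by omega⟩

@[simp] theorem card_tensor (X Y : Boundary) : (X.tensor Y).card = X.card + Y.card := rfl
@[simp] theorem card_dual (X : Boundary) : X.dual.card = X.card := rfl

theorem bd_ext {X Y : Boundary} (h1 : X.card = Y.card) (h2 : ∀ v, v ∈ X.left ↔ v ∈ Y.left) :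
    X = Y := by
  cases X; cases Y
  simp only [Boundary.mk.injEq] at *
  exact ⟨h1, Finset.ext h2⟩

/-- explicit description of cowordisms -/
structure CW (X Y : Boundary) (M : Pre T) : Prop where
  gd : Gd M
  s : ∀ v, v ∈ srcs M ↔ v ∈ Y.left ∨
    (Y.card < v ∧ v ≤ Y.card + X.card ∧ Y.card + X.card + 1 - v ∉ X.left)
  t : ∀ v, v ∈ tgts M ↔ (1 ≤ v ∧ v ≤ Y.card ∧ v ∉ Y.left) ∨
    (Y.card < v ∧ Y.card + X.card + 1 - v ∈ X.left)

theorem cw_iff {X Y : Boundary} {M : Pre T} : IsMW (Y.tensor X.dual) M ↔ CW X Y M := by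
  have e1 : ∀ v, v ∈ (Y.tensor X.dual).left ↔ v ∈ Y.left ∨
    (Y.card < v ∧ v ≤ Y.card + X.card ∧ Y.card + X.card + 1 - v ∉ X.left) := by
    intro v
    rw [mem_tensor, mem_dual]
    refine or_congr_right ?_
    by_cases h : Y.card < v
    · have : X.card + 1 - (v - Y.card) = Y.card + X.card + 1 - v := by omega
      rw [this]
      constructor
      · rintro ⟨a, b, c, d⟩
        exact ⟨a, by omega, d⟩
      · rintro ⟨a, b, d⟩
        exact ⟨a, by omega, by omega, d⟩
    · tauto
  have e2 : ∀ v, (1 ≤ v ∧ v ≤ (Y.tensor X.dual).card ∧ v ∉ (Y.tensor X.dual).left) ↔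
    ((1 ≤ v ∧ v ≤ Y.card ∧ v ∉ Y.left) ∨
    (Y.card < v ∧ Y.card + X.card + 1 - v ∈ X.left)) := by
    intro v
    rw [e1]
    simp only [card_tensor, card_dual]
    have hy := @left_bd Y v
    have hx := @left_bd X (Y.card + X.card + 1 - v)
    by_cases h1 : v ∈ Y.left <;> by_cases h2 : Y.card + X.card + 1 - v ∈ X.left <;>
      simp only [h1, h2, true_implies, false_implies, not_true, not_false_eq_true, and_true,
        and_false, or_false, false_or, true_or, or_true, not_or] at * <;> omega
  rw [isMW_iff]
  constructor
  · rintro ⟨h1, h2, h3⟩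
    exact ⟨h1, fun v => (h2 v).trans (e1 v), fun v => (h3 v).trans (e2 v)⟩
  · rintro ⟨h1, h2, h3⟩
    exact ⟨h1, fun v => (h2 v).trans (e1 v).symm, fun v => (h3 v).trans (e2 v).symm⟩

theorem CW.bd {X Y : Boundary} {M : Pre T} (h : CW X Y M) {v : ℕ} (hv : v ∈ srcs M ∨ v ∈ tgts M) :
    1 ≤ v ∧ v ≤ Y.card + X.card := by
  rw [h.s, h.t] at hv
  rcases hv with (h | h) | (h | h)
  · have := left_bd h; omega
  · omega
  · omega
  · have := left_bd h.2; omega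

/-- gluing pairs -/
def PP (Y : Boundary) (c : ℕ) : List (ℕ × ℕ) :=
  (List.range' 1 Y.card).map (fun m => pr (decide (m ∈ Y.left)) (c + 1 - m) (c + m))

def up (a k : ℕ) : ℕ → ℕ := fun v => if v ≤ a then v else v + k
def sh (c : ℕ) : ℕ → ℕ := fun v => c + v

theorem up_inj (a k : ℕ) : Function.Injective (up a k) := by
  intro x y h
  simp only [up] at h
  split_ifs at h <;> omega
theorem sh_inj (c : ℕ) : Function.Injective (sh c) := by
  intro x y h
  simp only [sh] at h
  omega

theorem mwTensor_eq (c : ℕ) (M N : Pre T) : mwTensor c M N = M + rl (sh c) N := rfl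
theorem cowTensor_eq (a b c : ℕ) (M N : Pre T) :
    cowTensorData a b c M N = rl (up a (b + c)) M + rl (sh a) N := by
  refine pre_ext ?_ rfl
  simp only [cowTensorData, rl, up, sh, add_edges, add_assoc]

theorem mem_PP {Y : Boundary} {c : ℕ} {e : ℕ × ℕ} : e ∈ PP Y c ↔
    ∃ m, 1 ≤ m ∧ m ≤ Y.card ∧ pr (decide (m ∈ Y.left)) (c + 1 - m) (c + m) = e := by
  simp only [PP, List.mem_map, List.mem_range'_1]
  constructor
  · rintro ⟨m, h, rfl⟩; exact ⟨m, by omega, by omega, rfl⟩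
  · rintro ⟨m, h, h', rfl⟩; exact ⟨m, by omega, rfl⟩

theorem mem_PP_fst {Y : Boundary} {c : ℕ} (hc : Y.card ≤ c) {v : ℕ} : v ∈ (PP Y c).map Prod.fst ↔
    (c < v ∧ v ≤ c + Y.card ∧ v - c ∉ Y.left) ∨ (v ≤ c ∧ c + 1 - v ∈ Y.left) := by
  simp only [List.mem_map, mem_PP]
  constructor
  · rintro ⟨e, ⟨m, h1, h2, rfl⟩, rfl⟩
    unfold pr
    by_cases hm : m ∈ Y.left
    · right
      simp only [hm, decide_true, if_true]
      refine ⟨by omega, ?_⟩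
      have : c + 1 - (c + 1 - m) = m := by omega
      rwa [this]
    · left
      simp only [hm, decide_false, Bool.false_eq_true, if_false]
      refine ⟨by omega, by omega, ?_⟩
      rwa [Nat.add_sub_cancel_left]
  · rintro (⟨h1, h2, h3⟩ | ⟨h1, h3⟩)
    · refine ⟨_, ⟨v - c, by omega, by omega, rfl⟩, ?_⟩
      simp only [pr, h3, decide_false, Bool.false_eq_true, if_false]
      omega
    · have := left_bd h3
      refine ⟨_, ⟨c + 1 - v, by omega, by omega, rfl⟩, ?_⟩
      simp only [pr, h3, decide_true, if_true]
      omega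

theorem mem_PP_snd {Y : Boundary} {c : ℕ} (hc : Y.card ≤ c) {v : ℕ} : v ∈ (PP Y c).map Prod.snd ↔
    (c < v ∧ v - c ∈ Y.left) ∨ (1 ≤ v ∧ v ≤ c ∧ c < v + Y.card ∧ c + 1 - v ∉ Y.left) := by
  simp only [List.mem_map, mem_PP]
  constructor
  · rintro ⟨e, ⟨m, h1, h2, rfl⟩, rfl⟩
    unfold pr
    by_cases hm : m ∈ Y.left
    · left
      simp only [hm, decide_true, if_true]
      refine ⟨by omega, ?_⟩
      rwa [Nat.add_sub_cancel_left]
    · right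
      simp only [hm, decide_false, Bool.false_eq_true, if_false]
      refine ⟨by omega, by omega, by omega, ?_⟩
      have : c + 1 - (c + 1 - m) = m := by omega
      rwa [this]
  · rintro (⟨h1, h3⟩ | ⟨h1, h2, h2', h3⟩)
    · have := left_bd h3
      refine ⟨_, ⟨v - c, by omega, by omega, rfl⟩, ?_⟩
      simp only [pr, h3, decide_true, if_true]
      omega
    · refine ⟨_, ⟨c + 1 - v, by omega, by omega, rfl⟩, ?_⟩
      simp only [pr, h3, decide_false, Bool.false_eq_true, if_false]
      omega

theorem PP_nodup {Y : Boundary} {c : ℕ} (hc : Y.card ≤ c) :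
    ((PP Y c).map Prod.fst).Nodup ∧ ((PP Y c).map Prod.snd).Nodup := by
  simp only [PP, List.map_map]
  constructor
  all_goals
    refine List.Nodup.map_on ?_ List.nodup_range'
    intro x hx y hy hxy
    rw [List.mem_range'_1] at hx hy
    simp only [Function.comp, pr] at hxy
    split_ifs at hxy <;> simp only at hxy <;> omega

theorem mem_map_sh {c v : ℕ} {s : Multiset ℕ} : v ∈ s.map (sh c) ↔ c ≤ v ∧ v - c ∈ s := by
  simp only [Multiset.mem_map, sh]
  constructor
  · rintro ⟨a, h, rfl⟩
    exact ⟨by omega, by rwa [Nat.add_sub_cancel_left]⟩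
  · rintro ⟨h1, h2⟩
    exact ⟨_, h2, by omega⟩

theorem mem_map_inj {f : ℕ → ℕ} (hf : Function.Injective f) {v : ℕ} {s : Multiset ℕ} :
    f v ∈ s.map f ↔ v ∈ s := Multiset.mem_map_of_injective hf

theorem comp_gd {X Y Z : Boundary} {σ τ : Pre T} (hσ : CW X Y σ) (hτ : CW Y Z τ) :
    Gd (τ + rl (sh (Z.card + Y.card)) σ) := by
  constructor
  · simp only [srcs_add, srcs_rl]
    rw [Multiset.nodup_add]
    refine ⟨hτ.gd.s, hσ.gd.s.map (sh_inj _), ?_⟩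
    rw [Multiset.disjoint_left]
    intro v h1 h2
    have := hτ.bd (Or.inl h1)
    rw [mem_map_sh] at h2
    have := hσ.bd (Or.inl h2.2)
    omega
  · simp only [tgts_add, tgts_rl]
    rw [Multiset.nodup_add]
    refine ⟨hτ.gd.t, hσ.gd.t.map (sh_inj _), ?_⟩
    rw [Multiset.disjoint_left]
    intro v h1 h2
    have := hτ.bd (Or.inr h1)
    rw [mem_map_sh] at h2
    have := hσ.bd (Or.inr h2.2)
    omega

theorem comp_vd {X Y Z : Boundary} {σ τ : Pre T} (hσ : CW X Y σ) (hτ : CW Y Z τ) :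
    Vd (PP Y (Z.card + Y.card)) (τ + rl (sh (Z.card + Y.card)) σ) := by
  have hn := @PP_nodup Y (Z.card + Y.card) (by omega)
  refine ⟨comp_gd hσ hτ, hn.1, hn.2, ?_, ?_⟩
  · intro e he
    have := (mem_PP_fst (by omega)).1 (List.mem_map_of_mem (f := Prod.fst) he)
    simp only [tgts_add, tgts_rl, Multiset.mem_add, mem_map_sh, hσ.t, hτ.t]
    rcases this with ⟨h1, h2, h3⟩ | ⟨h1, h3⟩
    · right
      exact ⟨by omega, Or.inl ⟨by omega, by omega, h3⟩⟩
    · left; right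
      have := left_bd h3
      exact ⟨by omega, h3⟩
  · intro e he
    have := (mem_PP_snd (by omega)).1 (List.mem_map_of_mem (f := Prod.snd) he)
    simp only [srcs_add, srcs_rl, Multiset.mem_add, mem_map_sh, hσ.s, hτ.s]
    rcases this with ⟨h1, h3⟩ | ⟨h1, h2, h2', h3⟩
    · right
      exact ⟨by omega, Or.inl h3⟩
    · left; right
      exact ⟨by omega, by omega, h3⟩

/-- the sources and targets of a multiword pair are disjoint -/
theorem CW.disj {X Y : Boundary} {M : Pre T} (h : CW X Y M) {v : ℕ} (h1 : v ∈ srcs M)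
    (h2 : v ∈ tgts M) : False := by
  rw [h.s] at h1
  rw [h.t] at h2
  have := @left_bd Y v
  rcases h1 with h1 | h1 <;> rcases h2 with h2 | h2
  · exact h2.2.2 h1
  · have := this h1; omega
  · omega
  · exact h1.2.2 h2.2

theorem comp_disj {X Y Z : Boundary} {σ τ : Pre T} (hσ : CW X Y σ) (hτ : CW Y Z τ) {v : ℕ}
    (h1 : v ∈ srcs (τ + rl (sh (Z.card + Y.card)) σ))
    (h2 : v ∈ tgts (τ + rl (sh (Z.card + Y.card)) σ)) : False := by
  simp only [tgts_add, tgts_rl, srcs_add, srcs_rl, Multiset.mem_add, mem_map_sh] at h1 h2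
  rcases h1 with h1 | ⟨h1, h1'⟩ <;> rcases h2 with h2 | ⟨h2, h2'⟩
  · exact hτ.disj h1 h2
  · have := hτ.bd (Or.inl h1)
    have := hσ.bd (Or.inr h2')
    omega
  · have := hτ.bd (Or.inr h2)
    have := hσ.bd (Or.inl h1')
    omega
  · exact hσ.disj h1' h2'

theorem comp_spec {X Y Z : Boundary} {σ τ : Pre T} (hσ : CW X Y σ) (hτ : CW Y Z τ) :
    rl (up Z.card (2 * Y.card)) (compData Y.card Z.card τ σ) =
      glAll (PP Y (Z.card + Y.card)) (τ + rl (sh (Z.card + Y.card)) σ) := by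
  have hv := comp_vd hσ hτ
  unfold compData
  rw [mwTensor_eq]
  refine contractIter_spec Z.card Y.card (fun m => decide (m ∈ Y.left)) _ ?_
  intro m h1 h2
  have hm := (mem_PP (c := Z.card + Y.card)).2 ⟨m, h1, h2, rfl⟩
  exact ⟨fun h => comp_disj hσ hτ h (hv.m1 _ hm), fun h => comp_disj hσ hτ (hv.m2 _ hm) h⟩

theorem comp_cw {X Y Z : Boundary} {σ τ : Pre T} (hσ : CW X Y σ) (hτ : CW Y Z τ) :
    CW X Z (compData Y.card Z.card τ σ) := by
  have h := glAll_srcs (comp_vd hσ hτ)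
  rw [← comp_spec hσ hτ] at h
  obtain ⟨hg, hs, ht⟩ := h
  have hs' := hg.s
  have ht' := hg.t
  rw [srcs_rl] at hs'
  rw [tgts_rl] at ht'
  refine ⟨⟨hs'.of_map _, ht'.of_map _⟩, ?_, ?_⟩
  · intro v
    have := hs (up Z.card (2 * Y.card) v)
    rw [srcs_rl, mem_map_inj (up_inj _ _), mem_PP_snd (by omega)] at this
    rw [this]
    simp only [srcs_add, srcs_rl, Multiset.mem_add, mem_map_sh, hσ.s, hτ.s, up]
    have b1 := @left_bd Z v
    by_cases hv : v ≤ Z.card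
    · simp only [hv, if_true]
      constructor
      · rintro ⟨(h1 | h1) | h1, h2⟩
        · exact Or.inl h1
        · omega
        · rcases h1 with ⟨h1, h3 | h3⟩
          · have := left_bd h3; omega
          · omega
      · rintro (h | h)
        · refine ⟨Or.inl (Or.inl h), ?_⟩
          have := b1 h
          rintro (h4 | h4)
          · have := left_bd h4.2; omega
          · omega
        · omega
    · simp only [hv, if_false]
      have b2 := @left_bd Z (v + 2 * Y.card)
      have b3 := @left_bd Y (v + 2 * Y.card - (Z.card + Y.card))
      have e1 : Y.card + X.card + 1 - (v + 2 * Y.card - (Z.card + Y.card)) = 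
        Z.card + X.card + 1 - v := by omega
      rw [e1]
      constructor
      · rintro ⟨(h1 | h1) | h1, h2⟩
        · have := b2 h1; omega
        · omega
        · rcases h1 with ⟨h1, h3 | h3⟩
          · have := b3 h3; omega
          · exact Or.inr ⟨by omega, by omega, h3.2.2⟩
      · rintro (h | h)
        · have := b1 h; omega
        · refine ⟨Or.inr ⟨by omega, Or.inr ⟨by omega, by omega, h.2.2⟩⟩, ?_⟩
          rintro (h4 | h4)
          · have := b3 h4.2; omega
          · omega
  · intro v
    have := ht (up Z.card (2 * Y.card) v)
    rw [tgts_rl, mem_map_inj (up_inj _ _), mem_PP_fst (by omega)] at this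
    rw [this]
    simp only [tgts_add, tgts_rl, Multiset.mem_add, mem_map_sh, hσ.t, hτ.t, up]
    have b1 := @left_bd Z v
    by_cases hv : v ≤ Z.card
    · simp only [hv, if_true]
      have b2 := @left_bd Y (Z.card + Y.card + 1 - v)
      constructor
      · rintro ⟨(h1 | h1) | h1, h2⟩
        · exact Or.inl ⟨h1.1, trivial, h1.2.2⟩
        · omega
        · omega
      · rintro (h | h)
        · refine ⟨Or.inl (Or.inl ⟨h.1, trivial, h.2.2⟩), ?_⟩
          rintro (h4 | h4)
          · omega
          · have := b2 h4.2; omega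
        · omega
    · simp only [hv, if_false]
      have e1 : Y.card + X.card + 1 - (v + 2 * Y.card - (Z.card + Y.card)) = 
        Z.card + X.card + 1 - v := by omega
      have b2 := @left_bd Y (Z.card + Y.card + 1 - (v + 2 * Y.card))
      rw [e1]
      constructor
      · rintro ⟨(h1 | h1) | h1, h2⟩
        · omega
        · have := b2 h1.2; omega
        · rcases h1 with ⟨h1, h3 | h3⟩
          · omega
          · exact Or.inr ⟨by omega, h3.2⟩
      · rintro (h | h)
        · exact h.2.1.elim
        · refine ⟨Or.inr ⟨by omega, Or.inr ⟨by omega, h.2⟩⟩, ?_⟩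
          rintro (h4 | h4)
          · omega
          · have := b2 h4.2; omega

/-! ### bookkeeping -/

theorem up_gt {a k v : ℕ} (h : a < v) : up a k v = v + k := if_neg (by omega)
theorem up_le {a k v : ℕ} (h : v ≤ a) : up a k v = v := if_pos h

/-- vertices -/
def vs (M : Pre T) (v : ℕ) : Prop := v ∈ srcs M ∨ v ∈ tgts M

theorem vs_add {M N : Pre T} {v : ℕ} : vs (M + N) v ↔ vs M v ∨ vs N v := by
  simp only [vs, srcs_add, tgts_add, Multiset.mem_add]; tauto

theorem vs_rl {f : ℕ → ℕ} {M : Pre T} {v : ℕ} : vs (rl f M) v ↔ ∃ u, vs M u ∧ f u = v := by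
  simp only [vs, srcs_rl, tgts_rl, Multiset.mem_map]
  constructor
  · rintro (⟨u, h, rfl⟩ | ⟨u, h, rfl⟩)
    · exact ⟨u, Or.inl h, rfl⟩
    · exact ⟨u, Or.inr h, rfl⟩
  · rintro ⟨u, h | h, rfl⟩
    · exact Or.inl ⟨u, h, rfl⟩
    · exact Or.inr ⟨u, h, rfl⟩

theorem glAll_sub {v : ℕ} (l) : ∀ {M : Pre T}, vs (glAll l M) v → vs M v := by
  induction l with
  | nil => intro M h; exact h
  | cons e l ih =>
    intro M h
    exact (ih h).imp (gl_sub _ _ _ _).1 (gl_sub _ _ _ _).2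

theorem Gd.add {M N : Pre T} (h1 : Gd M) (h2 : Gd N) (h : ∀ v, vs M v → vs N v → False) :
    Gd (M + N) := by
  constructor
  · rw [srcs_add, Multiset.nodup_add]
    exact ⟨h1.s, h2.s, Multiset.disjoint_left.2 fun hv hv' => h _ (Or.inl hv) (Or.inl hv')⟩
  · rw [tgts_add, Multiset.nodup_add]
    exact ⟨h1.t, h2.t, Multiset.disjoint_left.2 fun hv hv' => h _ (Or.inr hv) (Or.inr hv')⟩

theorem Gd.rl {M : Pre T} (h : Gd M) {f : ℕ → ℕ} (hf : Function.Injective f) : Gd (rl f M) := by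
  constructor
  · rw [srcs_rl]; exact h.s.map hf
  · rw [tgts_rl]; exact h.t.map hf

theorem Vd.add {l} {M N : Pre T} (h : Vd l M) (hg : Gd (M + N)) : Vd l (M + N) :=
  ⟨hg, h.n1, h.n2, fun e he => by simp [h.m1 e he], fun e he => by simp [h.m2 e he]⟩

theorem Vd.rl {l} {M : Pre T} (h : Vd l M) {f : ℕ → ℕ} (hf : Function.Injective f) :
    Vd (l.map (Prod.map f f)) (rl f M) := by
  refine ⟨h.gd.rl hf, ?_, ?_, ?_, ?_⟩
  · have := h.n1.map hf
    rwa [List.map_map] at *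
  · have := h.n2.map hf
    rwa [List.map_map] at *
  · intro e he
    obtain ⟨e', he', rfl⟩ := List.mem_map.1 he
    rw [tgts_rl]
    exact Multiset.mem_map_of_mem _ (h.m1 e' he')
  · intro e he
    obtain ⟨e', he', rfl⟩ := List.mem_map.1 he
    rw [srcs_rl]
    exact Multiset.mem_map_of_mem _ (h.m2 e' he')

theorem Vd.app {l l'} {M : Pre T} (h : Vd l M) (h' : Vd l' M)
    (hd : ∀ e ∈ l, ∀ e' ∈ l', e.1 ≠ e'.1 ∧ e.2 ≠ e'.2) : Vd (l ++ l') M := by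
  refine ⟨h.gd, ?_, ?_, ?_, ?_⟩
  · rw [List.map_append]
    refine h.n1.append h'.n1 ?_
    intro v hv hv'
    obtain ⟨e, he, rfl⟩ := List.mem_map.1 hv
    obtain ⟨e', he', h3⟩ := List.mem_map.1 hv'
    exact (hd e he e' he').1 h3.symm
  · rw [List.map_append]
    refine h.n2.append h'.n2 ?_
    intro v hv hv'
    obtain ⟨e, he, rfl⟩ := List.mem_map.1 hv
    obtain ⟨e', he', h3⟩ := List.mem_map.1 hv'
    exact (hd e he e' he').2 h3.symm
  · intro e he
    rcases List.mem_append.1 he with he | he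
    · exact h.m1 e he
    · exact h'.m1 e he
  · intro e he
    rcases List.mem_append.1 he with he | he
    · exact h.m2 e he
    · exact h'.m2 e he

theorem PP_bd {Y : Boundary} {c : ℕ} {e : ℕ × ℕ} (h : e ∈ PP Y c) :
    (c < e.1 + Y.card ∧ e.1 ≤ c + Y.card) ∧ (c < e.2 + Y.card ∧ e.2 ≤ c + Y.card) := by
  obtain ⟨m, h1, h2, rfl⟩ := mem_PP.1 h
  unfold pr
  split_ifs <;> simp only <;> omega

theorem PP_map {Y : Boundary} {c c' : ℕ} {f : ℕ → ℕ}
    (h : ∀ m, 1 ≤ m → m ≤ Y.card → f (c + 1 - m) = c' + 1 - m ∧ f (c + m) = c' + m) :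
    (PP Y c).map (Prod.map f f) = PP Y c' := by
  rw [PP, PP, List.map_map]
  refine List.map_congr_left ?_
  intro m hm
  rw [List.mem_range'_1] at hm
  simp only [Function.comp, pr_map]
  rw [(h m (by omega) (by omega)).1, (h m (by omega) (by omega)).2]

theorem PP_out {Y : Boundary} {c : ℕ} {N : Pre T}
    (h : ∀ v, vs N v → ¬ (c < v + Y.card ∧ v ≤ c + Y.card)) :
    ∀ e ∈ PP Y c, e.1 ∉ tgts N ∧ e.2 ∉ srcs N := by
  intro e he
  have := PP_bd he
  exact ⟨fun h1 => h _ (Or.inr h1) this.1, fun h1 => h _ (Or.inl h1) this.2⟩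

theorem comp_assoc' {X Y Z W : Boundary} {σ τ ρ : Pre T} (hσ : CW X Y σ) (hτ : CW Y Z τ)
    (hρ : CW Z W ρ) :
    compData Y.card W.card (compData Z.card W.card ρ τ) σ =
      compData Z.card W.card ρ (compData Y.card Z.card τ σ) := by
  have hρτ := comp_cw hτ hρ
  have hτσ := comp_cw hσ hτ
  have bσ : ∀ v, vs σ v → 1 ≤ v ∧ v ≤ Y.card + X.card := fun v h => hσ.bd h
  have bτ : ∀ v, vs τ v → 1 ≤ v ∧ v ≤ Z.card + Y.card := fun v h => hτ.bd h
  have bρ : ∀ v, vs ρ v → 1 ≤ v ∧ v ≤ W.card + Z.card := fun v h => hρ.bd h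
  have eL : rl (up W.card (2 * Z.card)) (rl (up W.card (2 * Y.card))
      (compData Y.card W.card (compData Z.card W.card ρ τ) σ)) =
      glAll (PP Y (W.card + 2 * Z.card + Y.card)) (glAll (PP Z (W.card + Z.card))
        (ρ + rl (sh (W.card + Z.card)) τ + rl (sh (W.card + 2 * Z.card + Y.card)) σ)) := by
    rw [comp_spec hσ hρτ, ← glAll_rl (up_inj _ _), rl_add, comp_spec hτ hρ, rl_rl]
    have e9 : glAll (PP Z (W.card + Z.card)) (ρ + rl (sh (W.card + Z.card)) τ +
        rl (sh (W.card + 2 * Z.card + Y.card)) σ) = glAll (PP Z (W.card + Z.card))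
          (ρ + rl (sh (W.card + Z.card)) τ) + rl (sh (W.card + 2 * Z.card + Y.card)) σ := by
      apply glAll_add
      apply PP_out
      intro v hv
      obtain ⟨u, hu, rfl⟩ := vs_rl.1 hv
      have := bσ u hu
      simp only [sh]
      omega
    rw [e9]
    · congr 1
      · apply PP_map
        intro m h1 h2
        simp only [up]
        constructor <;> split_ifs <;> omega
      · congr 1
        apply rl_congr
        intro v hv
        have := bσ v hv
        simp only [sh, Function.comp]
        rw [up_gt (by omega)]
        omega
  have eR : rl (up (W.card + 2 * Z.card) (2 * Y.card)) (rl (up W.card (2 * Z.card))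
      (compData Z.card W.card ρ (compData Y.card Z.card τ σ))) =
      glAll (PP Z (W.card + Z.card)) (glAll (PP Y (W.card + 2 * Z.card + Y.card))
        (ρ + rl (sh (W.card + Z.card)) τ + rl (sh (W.card + 2 * Z.card + Y.card)) σ)) := by
    have e0 : rl (up (W.card + 2 * Z.card) (2 * Y.card)) (rl (sh (W.card + Z.card))
        (compData Y.card Z.card τ σ)) = rl (sh (W.card + Z.card)) (rl (up Z.card (2 * Y.card))
        (compData Y.card Z.card τ σ)) := by
      rw [rl_rl, rl_rl]
      congr 1
      funext v
      simp only [up, sh, Function.comp]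
      grind
    rw [comp_spec hτσ hρ, ← glAll_rl (up_inj _ _), rl_add, e0, comp_spec hσ hτ,
      ← glAll_rl (sh_inj _), rl_add, rl_rl]
    have e1 : rl (up (W.card + 2 * Z.card) (2 * Y.card)) ρ = ρ := by
      apply rl_id'
      intro v hv
      have := bρ v hv
      simp only [up]
      split_ifs <;> omega
    have e9 : glAll (PP Y (W.card + 2 * Z.card + Y.card)) (ρ + rl (sh (W.card + Z.card)) τ +
        rl (sh (W.card + 2 * Z.card + Y.card)) σ) = ρ + glAll (PP Y (W.card + 2 * Z.card + Y.card))
          (rl (sh (W.card + Z.card)) τ + rl (sh (W.card + 2 * Z.card + Y.card)) σ) := by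
      rw [add_assoc ρ, add_comm ρ (_ + _), add_comm ρ]
      apply glAll_add
      apply PP_out
      intro v hv
      have := bρ v hv
      omega
    rw [e1, e9]
    · congr 1
      · apply PP_map
        intro m h1 h2
        simp only [up]
        constructor <;> split_ifs <;> omega
      · congr 1
        congr 1
        · apply PP_map
          intro m h1 h2
          simp only [sh]
          omega
        · congr 1
          apply rl_congr
          intro v hv
          simp only [sh, Function.comp]
          omega
  have eF : (up W.card (2 * Z.card)) ∘ (up W.card (2 * Y.card)) =
      (up (W.card + 2 * Z.card) (2 * Y.card)) ∘ (up W.card (2 * Z.card)) := by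
    funext v
    simp only [up, Function.comp]
    split_ifs <;> omega
  have hg : Gd (ρ + rl (sh (W.card + Z.card)) τ + rl (sh (W.card + 2 * Z.card + Y.card)) σ) := by
    refine (Gd.add hρ.gd (hτ.gd.rl (sh_inj _)) ?_).add (hσ.gd.rl (sh_inj _)) ?_
    · intro v h1 h2
      obtain ⟨u, hu, rfl⟩ := vs_rl.1 h2
      have := bτ u hu
      have := bρ _ h1
      simp only [sh] at *
      omega
    · intro v h1 h2
      obtain ⟨u, hu, rfl⟩ := vs_rl.1 h2
      have := bσ u hu
      rcases vs_add.1 h1 with h1 | h1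
      · have := bρ _ h1
        simp only [sh] at *
        omega
      · obtain ⟨w, hw, h3⟩ := vs_rl.1 h1
        have := bτ w hw
        simp only [sh] at *
        omega
  have v1 := (comp_vd hτ hρ).add hg
  have v2 : Vd (PP Y (W.card + 2 * Z.card + Y.card))
      (ρ + rl (sh (W.card + Z.card)) τ + rl (sh (W.card + 2 * Z.card + Y.card)) σ) := by
    have h1 := (comp_vd hσ hτ).rl (sh_inj (W.card + Z.card))
    have e2 : (PP Y (Z.card + Y.card)).map (Prod.map (sh (W.card + Z.card)) (sh (W.card + Z.card)))
        = PP Y (W.card + 2 * Z.card + Y.card) := by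
      apply PP_map
      intro m h1 h2
      simp only [sh]
      omega
    have e3 : rl (sh (W.card + Z.card)) (τ + rl (sh (Z.card + Y.card)) σ) =
       rl (sh (W.card + Z.card)) τ + rl (sh (W.card + 2 * Z.card + Y.card)) σ := by
      rw [rl_add, rl_rl]
      congr 2
      funext v
      simp only [sh, Function.comp]
      omega
    rw [e2, e3] at h1
    rw [add_assoc ρ, add_comm ρ] at hg ⊢
    exact h1.add hg
  apply rl_inj (f := up W.card (2 * Z.card) ∘ up W.card (2 * Y.card))
    ((up_inj _ _).comp (up_inj _ _))
  rw [← rl_rl, eL, eF, ← rl_rl, eR, ← glAll_append, ← glAll_append]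
  apply glAll_perm List.perm_append_comm
  apply v1.app v2
  intro e he e' he'
  have := PP_bd he
  have := PP_bd he'
  omega

/-! ### tensor -/

theorem mem_map_up {a k v : ℕ} {s : Multiset ℕ} : v ∈ s.map (up a k) ↔
    (v ≤ a ∧ v ∈ s) ∨ (a + k < v ∧ v - k ∈ s) := by
  simp only [Multiset.mem_map, up]
  constructor
  · rintro ⟨u, h, rfl⟩
    split_ifs with h1
    · exact Or.inl ⟨h1, h⟩
    · exact Or.inr ⟨by omega, by rwa [Nat.add_sub_cancel]⟩
  · rintro (⟨h1, h2⟩ | ⟨h1, h2⟩)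
    · exact ⟨v, h2, by simp [h1]⟩
    · exact ⟨_, h2, by split_ifs <;> omega⟩

theorem tensor_cw {X Y Z W : Boundary} {σ τ : Pre T} (hσ : CW X Y σ) (hτ : CW Z W τ) :
    CW (X.tensor Z) (Y.tensor W) (cowTensorData Y.card W.card Z.card σ τ) := by
  rw [cowTensor_eq]
  refine ⟨?_, ?_, ?_⟩
  · refine (hσ.gd.rl (up_inj _ _)).add (hτ.gd.rl (sh_inj _)) ?_
    intro v h1 h2
    obtain ⟨u, hu, rfl⟩ := vs_rl.1 h2
    obtain ⟨w, hw, h3⟩ := vs_rl.1 h1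
    have := hτ.bd hu
    have := hσ.bd hw
    simp only [up, sh] at h3
    split_ifs at h3 <;> omega
  · intro v
    simp only [srcs_add, srcs_rl, Multiset.mem_add, mem_map_up, mem_map_sh, hσ.s, hτ.s, mem_tensor,
      card_tensor]
    have b1 := @left_bd Y v
    have b2 := @left_bd Y (v - (W.card + Z.card))
    have b3 := @left_bd W (v - Y.card)
    have b4 := @left_bd X (Y.card + W.card + (X.card + Z.card) + 1 - v)
    have b5 := @left_bd Z (Y.card + W.card + (X.card + Z.card) + 1 - v - X.card)
    have e1 : W.card + Z.card + 1 - (v - Y.card) = Y.card + W.card + (X.card + Z.card) + 1 - v - X.card ∨ v < Y.card := by omega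
    have e2 : Y.card + X.card + 1 - (v - (W.card + Z.card)) = Y.card + W.card + (X.card + Z.card) + 1 - v ∨ v < (W.card + Z.card) := by omega
    grind
  · intro v
    simp only [tgts_add, tgts_rl, Multiset.mem_add, mem_map_up, mem_map_sh, hσ.t, hτ.t, mem_tensor,
      card_tensor]
    have b1 := @left_bd Y v
    have b2 := @left_bd Y (v - (W.card + Z.card))
    have b3 := @left_bd W (v - Y.card)
    have b4 := @left_bd X (Y.card + W.card + (X.card + Z.card) + 1 - v)
    have b5 := @left_bd Z (Y.card + W.card + (X.card + Z.card) + 1 - v - X.card)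
    have e1 : W.card + Z.card + 1 - (v - Y.card) = Y.card + W.card + (X.card + Z.card) + 1 - v - X.card ∨ v < Y.card := by omega
    have e2 : Y.card + X.card + 1 - (v - (W.card + Z.card)) = Y.card + W.card + (X.card + Z.card) + 1 - v ∨ v < (W.card + Z.card) := by omega
    rcases Nat.lt_or_ge Y.card v with r1 | r1
    · rcases Nat.lt_or_ge (Y.card + W.card) v with r2 | r2
      · rcases Nat.lt_or_ge (Y.card + W.card + Z.card) v with r3 | r3
        · have e1' := e1.resolve_right (by omega)
          have e2' := e2.resolve_right (by omega)
          rw [e1', e2']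
          clear b1 b2 b3 e1 e2 e1' e2'
          constructor
          · rintro ((h | h) | h)
            · omega
            · rcases h with ⟨h, h' | h'⟩
              · omega
              · exact Or.inr ⟨by omega, Or.inl h'.2⟩
            · rcases h with ⟨h, h' | h'⟩
              · omega
              · have := b5 h'.2; omega
          · rintro (h | ⟨h, h' | h'⟩)
            · omega
            · have := b4 h'; exact Or.inl (Or.inr ⟨by omega, Or.inr ⟨by omega, h'⟩⟩)
            · have := b5 h'.2; omega
        · grind
      · grind
    · grind

theorem PP_tensor (A B : Boundary) (c : ℕ) : PP (A.tensor B) c = PP A c ++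
    (List.range' 1 B.card).map (fun j => pr (decide (j ∈ B.left)) (c + 1 - (A.card + j))
      (c + (A.card + j))) := by
  rw [PP, PP, card_tensor, ← List.range'_append_1, List.map_append]
  congr 1
  · refine List.map_congr_left ?_
    intro m hm
    rw [List.mem_range'_1] at hm
    congr 1
    rw [decide_eq_decide, mem_tensor]
    constructor
    · rintro (h | h)
      · exact h
      · omega
    · exact Or.inl
  · rw [List.range'_eq_map_range, List.range'_eq_map_range, List.map_map, List.map_map]
    refine List.map_congr_left ?_
    intro m hm
    simp only [Function.comp]
    congr 1
    · rw [decide_eq_decide, mem_tensor]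
      have : 1 + A.card + m - A.card = 1 + m := by omega
      rw [this]
      constructor
      · rintro (h | h)
        · have := left_bd h; omega
        · exact h.2
      · exact fun h => Or.inr ⟨by omega, h⟩
    · omega
    · omega

theorem functorial {X₁ X₂ Y₁ Y₂ Z₁ Z₂ : Boundary} {σ₁ σ₂ τ₁ τ₂ : Pre T}
    (hσ₁ : CW X₁ Y₁ σ₁) (hσ₂ : CW X₂ Y₂ σ₂) (hτ₁ : CW Y₁ Z₁ τ₁) (hτ₂ : CW Y₂ Z₂ τ₂) :
      compData (Y₁.card + Y₂.card) (Z₁.card + Z₂.card)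
          (cowTensorData Z₁.card Z₂.card Y₂.card τ₁ τ₂)
          (cowTensorData Y₁.card Y₂.card X₂.card σ₁ σ₂) =
        cowTensorData Z₁.card Z₂.card X₂.card
          (compData Y₁.card Z₁.card τ₁ σ₁)
          (compData Y₂.card Z₂.card τ₂ σ₂) := by
  have h := comp_spec (tensor_cw hσ₁ hσ₂) (tensor_cw hτ₁ hτ₂)
  simp only [card_tensor] at h
  apply rl_inj (up_inj (Z₁.card + Z₂.card) (2 * (Y₁.card + Y₂.card)))
  rw [h]
  let f₁ : ℕ → ℕ := fun v => if v ≤ Z₁.card then v else if v ≤ Z₁.card + 2 * Y₁.card then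
    v + Z₂.card + Y₂.card else v + Z₂.card + 2 * Y₂.card + X₂.card
  let f₂ : ℕ → ℕ := fun v => if v ≤ Z₂.card + Y₂.card then Z₁.card + v else Z₁.card + 2 * Y₁.card + v
  have i₁ : Function.Injective f₁ := by
    intro x y h
    simp only [f₁] at h
    split_ifs at h <;> omega
  have i₂ : Function.Injective f₂ := by
    intro x y h
    simp only [f₂] at h
    split_ifs at h <;> omega
  have bσ₁ : ∀ v, vs σ₁ v → 1 ≤ v ∧ v ≤ Y₁.card + X₁.card := fun v h => hσ₁.bd h
  have bσ₂ : ∀ v, vs σ₂ v → 1 ≤ v ∧ v ≤ Y₂.card + X₂.card := fun v h => hσ₂.bd h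
  have bτ₁ : ∀ v, vs τ₁ v → 1 ≤ v ∧ v ≤ Z₁.card + Y₁.card := fun v h => hτ₁.bd h
  have bτ₂ : ∀ v, vs τ₂ v → 1 ≤ v ∧ v ≤ Z₂.card + Y₂.card := fun v h => hτ₂.bd h
  have r₁ : rl (up (Z₁.card + Z₂.card) (2 * (Y₁.card + Y₂.card)))
      (rl (up Z₁.card (Z₂.card + X₂.card)) (compData Y₁.card Z₁.card τ₁ σ₁)) =
      rl f₁ (rl (up Z₁.card (2 * Y₁.card)) (compData Y₁.card Z₁.card τ₁ σ₁)) := by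
    rw [rl_rl, rl_rl]
    congr 1
    funext v
    simp only [f₁, up, Function.comp]
    split_ifs <;> omega
  have r₂ : rl (up (Z₁.card + Z₂.card) (2 * (Y₁.card + Y₂.card)))
      (rl (sh Z₁.card) (compData Y₂.card Z₂.card τ₂ σ₂)) =
      rl f₂ (rl (up Z₂.card (2 * Y₂.card)) (compData Y₂.card Z₂.card τ₂ σ₂)) := by
    rw [rl_rl, rl_rl]
    congr 1
    funext v
    simp only [f₂, up, sh, Function.comp]
    grind
  rw [cowTensor_eq _ _ _ (compData _ _ _ _), rl_add, r₁, r₂, comp_spec hσ₁ hτ₁, comp_spec hσ₂ hτ₂,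
    ← glAll_rl i₁, ← glAll_rl i₂]
  have m₁ : (PP Y₁ (Z₁.card + Y₁.card)).map (Prod.map f₁ f₁) =
      PP Y₁ (Z₁.card + Z₂.card + (Y₁.card + Y₂.card)) := by
    apply PP_map
    intro m h1 h2
    simp only [f₁]
    constructor <;> split_ifs <;> omega
  have m₂ : (PP Y₂ (Z₂.card + Y₂.card)).map (Prod.map f₂ f₂) =
      (List.range' 1 Y₂.card).map (fun j => pr (decide (j ∈ Y₂.left))
        (Z₁.card + Z₂.card + (Y₁.card + Y₂.card) + 1 - (Y₁.card + j))
        (Z₁.card + Z₂.card + (Y₁.card + Y₂.card) + (Y₁.card + j))) := by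
    rw [PP, List.map_map]
    refine List.map_congr_left ?_
    intro m hm
    rw [List.mem_range'_1] at hm
    simp only [Function.comp, pr_map]
    congr 1 <;> simp only [f₂] <;> split_ifs <;> omega
  rw [PP_tensor, ← m₁, ← m₂, glAll_append]
  have eM : cowTensorData Z₁.card Z₂.card Y₂.card τ₁ τ₂ +
      rl (sh (Z₁.card + Z₂.card + (Y₁.card + Y₂.card)))
        (cowTensorData Y₁.card Y₂.card X₂.card σ₁ σ₂) =
      rl f₁ (τ₁ + rl (sh (Z₁.card + Y₁.card)) σ₁) + rl f₂ (τ₂ + rl (sh (Z₂.card + Y₂.card)) σ₂) := by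
    simp only [cowTensor_eq, rl_add, rl_rl]
    have a1 : rl (up Z₁.card (Z₂.card + Y₂.card)) τ₁ = rl f₁ τ₁ := by
      apply rl_congr
      intro v hv
      have := bτ₁ v hv
      simp only [f₁, up]
      split_ifs <;> omega
    have a2 : rl (sh Z₁.card) τ₂ = rl f₂ τ₂ := by
      apply rl_congr
      intro v hv
      have := bτ₂ v hv
      simp only [f₂, sh]
      split_ifs <;> omega
    have a3 : rl (sh (Z₁.card + Z₂.card + (Y₁.card + Y₂.card)) ∘ up Y₁.card (Y₂.card + X₂.card)) σ₁
        = rl (f₁ ∘ sh (Z₁.card + Y₁.card)) σ₁ := by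
      apply rl_congr
      intro v hv
      have := bσ₁ v hv
      simp only [f₁, sh, up, Function.comp]
      split_ifs <;> omega
    have a4 : rl (sh (Z₁.card + Z₂.card + (Y₁.card + Y₂.card)) ∘ sh Y₁.card) σ₂
        = rl (f₂ ∘ sh (Z₂.card + Y₂.card)) σ₂ := by
      apply rl_congr
      intro v hv
      have := bσ₂ v hv
      simp only [f₂, sh, Function.comp]
      split_ifs <;> omega
    rw [a1, a2, a3, a4]
    abel
  have v₁ : ∀ v, vs (τ₁ + rl (sh (Z₁.card + Y₁.card)) σ₁) v →
      1 ≤ v ∧ v ≤ Z₁.card + 2 * Y₁.card + X₁.card := by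
    intro v hv
    rcases vs_add.1 hv with hv | hv
    · have := bτ₁ v hv; omega
    · obtain ⟨u, hu, rfl⟩ := vs_rl.1 hv
      have := bσ₁ u hu; simp only [sh]; omega
  have v₂ : ∀ v, vs (τ₂ + rl (sh (Z₂.card + Y₂.card)) σ₂) v →
      1 ≤ v ∧ v ≤ Z₂.card + 2 * Y₂.card + X₂.card := by
    intro v hv
    rcases vs_add.1 hv with hv | hv
    · have := bτ₂ v hv; omega
    · obtain ⟨u, hu, rfl⟩ := vs_rl.1 hv
      have := bσ₂ u hu; simp only [sh]; omega
  rw [eM, glAll_add, add_comm (glAll _ _) (rl f₂ _), glAll_add, add_comm (glAll _ _) (glAll _ _)]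
  · intro e he
    obtain ⟨e', he', rfl⟩ := List.mem_map.1 he
    have hb := PP_bd he'
    have key : ∀ v, vs (glAll ((PP Y₁ (Z₁.card + Y₁.card)).map (Prod.map f₁ f₁))
        (rl f₁ (τ₁ + rl (sh (Z₁.card + Y₁.card)) σ₁))) v → v ≠ f₂ e'.1 ∧ v ≠ f₂ e'.2 := by
      intro v hv
      obtain ⟨u, hu, rfl⟩ := vs_rl.1 (glAll_sub _ hv)
      have := v₁ u hu
      simp only [f₁, f₂]
      constructor <;> split_ifs <;> omega
    exact ⟨fun h => (key _ (Or.inr h)).1 rfl, fun h => (key _ (Or.inl h)).2 rfl⟩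
  · intro e he
    obtain ⟨e', he', rfl⟩ := List.mem_map.1 he
    have hb := PP_bd he'
    have key : ∀ v, vs (rl f₂ (τ₂ + rl (sh (Z₂.card + Y₂.card)) σ₂)) v →
        v ≠ f₁ e'.1 ∧ v ≠ f₁ e'.2 := by
      intro v hv
      obtain ⟨u, hu, rfl⟩ := vs_rl.1 hv
      have := v₂ u hu
      simp only [f₁, f₂]
      constructor <;> split_ifs <;> omega
    exact ⟨fun h => (key _ (Or.inr h)).1 rfl, fun h => (key _ (Or.inl h)).2 rfl⟩

/-! ### links -/

theorem gl_link {pol : Bool} {a b t : ℕ} {M : Pre T} (hg : Gd M)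
    (ha : a ∈ if pol then tgts M else srcs M) (ha' : a ∉ if pol then srcs M else tgts M)
    (hb : ¬ vs M b) (ht : t ≠ a) :
    gl (pr pol a b).1 (pr pol a b).2 (M + ⟨{if pol then (b, [], t) else (t, [], b)}, 0⟩) =
      rl (fun v => if v = a then t else v) M := by
  obtain ⟨R, S⟩ := M
  cases pol
  · simp only [Bool.false_eq_true, if_false] at ha ha'
    obtain ⟨⟨x, w, y⟩, he, hx⟩ := mem_srcs.1 ha
    simp only at hx
    subst hx
    obtain ⟨R', rfl⟩ := Multiset.exists_cons_of_mem he
    have h1 := hg.s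
    simp only [vs, srcs_cons, tgts_cons, Multiset.nodup_cons, Multiset.mem_cons, not_or] at h1 ha' hb
    have e1 : ((⟨(x, w, y) ::ₘ R', S⟩ : Pre T) +
        ⟨{if false = true then (b, [], t) else (t, [], b)}, 0⟩)
        = ⟨(t, [], b) ::ₘ (x, w, y) ::ₘ R', S⟩ := by
      refine pre_ext ?_ ?_
      · simp only [Bool.false_eq_true, if_false, add_edges]
        rw [add_comm, Multiset.singleton_add]
      · simp
    rw [e1]
    simp only [pr, Bool.false_eq_true, if_false]
    rw [gl_join ht (Ne.symm hb.2.1) h1.1 hb.2.2]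
    refine pre_ext ?_ rfl
    simp only [rl, Multiset.map_cons, if_true, List.nil_append]
    rw [if_neg (Ne.symm ha'.1)]
    congr 1
    symm
    rw [Multiset.map_congr rfl (g := id), Multiset.map_id]
    intro e he'
    have k1 : e.1 ≠ x := fun h => h1.1 (mem_srcs.2 ⟨e, he', h⟩)
    have k2 : e.2.2 ≠ x := fun h => ha'.2 (mem_tgts.2 ⟨e, he', h⟩)
    rw [if_neg k1, if_neg k2]
    rfl
  · simp only [if_true] at ha ha'
    obtain ⟨⟨x, w, y⟩, he, hx⟩ := mem_tgts.1 ha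
    simp only at hx
    subst hx
    obtain ⟨R', rfl⟩ := Multiset.exists_cons_of_mem he
    have h1 := hg.t
    simp only [vs, srcs_cons, tgts_cons, Multiset.nodup_cons, Multiset.mem_cons, not_or] at h1 ha' hb
    have e1 : ((⟨(x, w, y) ::ₘ R', S⟩ : Pre T) +
        ⟨{if true = true then (b, [], t) else (t, [], b)}, 0⟩)
        = ⟨(x, w, y) ::ₘ (b, [], t) ::ₘ R', S⟩ := by
      refine pre_ext ?_ ?_
      · simp only [if_true, add_edges]
        rw [Multiset.cons_add, add_comm R', Multiset.singleton_add]
      · simp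
    rw [e1]
    simp only [pr, if_true]
    rw [gl_join (Ne.symm hb.1.1) ht hb.1.2 h1.1]
    refine pre_ext ?_ rfl
    simp only [rl, Multiset.map_cons, if_true, List.append_nil]
    rw [if_neg (Ne.symm ha'.1)]
    congr 1
    symm
    rw [Multiset.map_congr rfl (g := id), Multiset.map_id]
    intro e he'
    have k1 : e.1 ≠ y := fun h => ha'.2 (mem_srcs.2 ⟨e, he', h⟩)
    have k2 : e.2.2 ≠ y := fun h => h1.1 (mem_tgts.2 ⟨e, he', h⟩)
    rw [if_neg k1, if_neg k2]
    rfl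

theorem Gd.rl_on {M : Pre T} (h : Gd M) {f : ℕ → ℕ}
    (hf : ∀ u v, vs M u → vs M v → f u = f v → u = v) : Gd (Cow.rl f M) := by
  constructor
  · rw [srcs_rl]
    exact Multiset.Nodup.map_on (fun x hx y hy => hf x y (Or.inl hx) (Or.inl hy)) h.s
  · rw [tgts_rl]
    exact Multiset.Nodup.map_on (fun x hx y hy => hf x y (Or.inr hx) (Or.inr hy)) h.t

/-- the multiset of linking edges -/
def lk (T : Type) (l : List ℕ) (pol : ℕ → Bool) (b t : ℕ → ℕ) : Pre T :=
  ⟨↑(l.map fun m => if pol m then (b m, ([] : List T), t m) else (t m, [], b m)), 0⟩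

theorem lk_cons (m l) (pol : ℕ → Bool) (b t : ℕ → ℕ) : lk T (m :: l) pol b t =
    ⟨{if pol m then (b m, [], t m) else (t m, [], b m)}, 0⟩ + lk T l pol b t :=
  pre_ext (by simp only [lk, List.map_cons, add_edges]; rfl) (by simp [lk])

theorem vs_lk {l} {pol : ℕ → Bool} {b t : ℕ → ℕ} {v : ℕ} (h : vs (lk T l pol b t) v) :
    ∃ m ∈ l, v = b m ∨ v = t m := by
  rcases h with h | h
  · obtain ⟨e, he, rfl⟩ := mem_srcs.1 h
    simp only [lk, Multiset.mem_coe, List.mem_map] at he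
    obtain ⟨m, hm, rfl⟩ := he
    refine ⟨m, hm, ?_⟩
    split_ifs <;> simp
  · obtain ⟨e, he, rfl⟩ := mem_tgts.1 h
    simp only [lk, Multiset.mem_coe, List.mem_map] at he
    obtain ⟨m, hm, rfl⟩ := he
    refine ⟨m, hm, ?_⟩
    split_ifs <;> simp

theorem glAll_link (pol : ℕ → Bool) (a b r : ℕ → ℕ) (l : List ℕ) : ∀ (M : Pre T),
    Gd M → (∀ v, v ∈ srcs M → v ∈ tgts M → False) → l.Nodup →
    (∀ m ∈ l, a m ∈ if pol m then tgts M else srcs M) →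
    (∀ m ∈ l, ∀ m' ∈ l, a m = a m' → m = m') →
    (∀ m ∈ l, ∀ m' ∈ l, b m = b m' → m = m') →
    (∀ m ∈ l, ∀ m' ∈ l, r (a m) = r (a m') → m = m') →
    (∀ m ∈ l, ∀ m' ∈ l, r (a m) ≠ b m') →
    (∀ m ∈ l, ¬ vs M (b m)) → (∀ m ∈ l, ¬ vs M (r (a m))) →
    (∀ m ∈ l, r (r (a m)) = r (a m)) →
    (∀ v, vs M v → (∃ m ∈ l, v = a m) ∨ r v = v) →
    glAll (l.map fun m => pr (pol m) (a m) (b m)) (M + lk T l pol b (fun m => r (a m))) =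
      rl r M := by
  induction l with
  | nil =>
    intro M _ _ _ _ _ _ _ _ _ _ _ hv
    rw [rl_id']
    · exact pre_ext (by simp [lk]) (by simp [lk])
    · intro v hv'
      rcases hv v hv' with ⟨m, hm, _⟩ | h
      · simp at hm
      · exact h
  | cons m l ih =>
    intro M hg hd hl ha ia ib ir hrb hb hr hrr hv
    have ham : vs M (a m) := by
      have := ha m (by simp)
      split_ifs at this
      · exact Or.inr this
      · exact Or.inl this
    have hvs : ∀ m' ∈ m :: l, vs M (a m') := by
      intro m' hm'
      have := ha m' hm'
      split_ifs at this
      · exact Or.inr this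
      · exact Or.inl this
    have hm0 : m ∈ m :: l := by simp
    have hsub : ∀ m' ∈ l, m' ∈ m :: l := fun m' h => by simp [h]
    rw [List.nodup_cons] at hl
    have hne : ∀ m' ∈ l, m' ≠ m := fun m' h h' => hl.1 (h' ▸ h)
    have hta : r (a m) ≠ a m := fun h => hr m hm0 (by rw [h]; exact ham)
    have hN : ∀ v, vs (lk T l pol b fun m => r (a m)) v → v ≠ a m ∧ v ≠ b m := by
      intro v h
      obtain ⟨m', hm', rfl | rfl⟩ := vs_lk h
      · exact ⟨fun h => hb m' (hsub _ hm') (h ▸ ham),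
          fun h => hne _ hm' (ib _ (hsub _ hm') _ hm0 h)⟩
      · exact ⟨fun h => hr m' (hsub _ hm') (h ▸ ham), hrb _ (hsub _ hm') _ hm0⟩
    rw [lk_cons, ← add_assoc, List.map_cons, glAll_cons, gl_add]
    · rw [gl_link hg (ha m hm0) _ (hb m hm0) hta]
      · rw [ih]
        · rw [rl_rl]
          apply rl_congr
          intro v hv
          simp only [Function.comp]
          split_ifs with h
          · rw [h, hrr m hm0]
          · rfl
        · apply hg.rl_on
          intro u v hu hv
          have hu' : u ≠ r (a m) := fun h => hr m hm0 (h ▸ hu)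
          have hv' : v ≠ r (a m) := fun h => hr m hm0 (h ▸ hv)
          split_ifs with h1 h2 h2
          · intro _; rw [h1, h2]
          · intro h; exact absurd h.symm hv'
          · intro h; exact absurd h hu'
          · exact id
        · intro v h1 h2
          rw [srcs_rl] at h1
          rw [tgts_rl] at h2
          obtain ⟨u, hu, rfl⟩ := Multiset.mem_map.1 h1
          obtain ⟨w, hw, h3⟩ := Multiset.mem_map.1 h2
          have hu' : u ≠ r (a m) := fun h => hr m hm0 (h ▸ Or.inl hu)
          have hw' : w ≠ r (a m) := fun h => hr m hm0 (h ▸ Or.inr hw)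
          have : u = w := by
            split_ifs at h3 with h1 h2 h2
            · rw [h1, h2]
            · exact absurd h3.symm hu'
            · exact absurd h3 hw'
            · exact h3.symm
          subst this
          exact hd _ hu hw
        · exact hl.2
        · intro m' hm'
          have h1 := ha m' (hsub _ hm')
          have h2 : a m' ≠ a m := fun h => hne _ hm' (ia _ (hsub _ hm') _ hm0 h)
          split_ifs at h1 ⊢
          · rw [tgts_rl]
            exact Multiset.mem_map.2 ⟨_, h1, if_neg h2⟩
          · rw [srcs_rl]
            exact Multiset.mem_map.2 ⟨_, h1, if_neg h2⟩
        · exact fun x hx y hy => ia x (hsub _ hx) y (hsub _ hy)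
        · exact fun x hx y hy => ib x (hsub _ hx) y (hsub _ hy)
        · exact fun x hx y hy => ir x (hsub _ hx) y (hsub _ hy)
        · exact fun x hx y hy => hrb x (hsub _ hx) y (hsub _ hy)
        · intro m' hm' h
          obtain ⟨u, hu, h3⟩ := vs_rl.1 h
          split_ifs at h3
          · exact hrb _ hm0 _ (hsub _ hm') h3
          · exact hb _ (hsub _ hm') (h3 ▸ hu)
        · intro m' hm' h
          obtain ⟨u, hu, h3⟩ := vs_rl.1 h
          split_ifs at h3
          · exact hne _ hm' (ir _ hm0 _ (hsub _ hm') h3).symm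
          · exact hr _ (hsub _ hm') (h3 ▸ hu)
        · exact fun x hx => hrr x (hsub _ hx)
        · intro v h
          obtain ⟨u, hu, rfl⟩ := vs_rl.1 h
          split_ifs with h4
          · exact Or.inr (hrr m hm0)
          · rcases hv u hu with ⟨m', hm', h5⟩ | h5
            · rcases List.mem_cons.1 hm' with rfl | h6
              · exact absurd h5 h4
              · exact Or.inl ⟨m', h6, h5⟩
            · exact Or.inr h5
      · have h1 := ha m hm0
        split_ifs at h1 ⊢
        · exact fun h => hd _ h h1
        · exact fun h => hd _ h1 h
    · intro h
      have := hN _ (Or.inl h)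
      unfold pr at this
      split_ifs at this <;> simp at this
    · intro h
      have := hN _ (Or.inr h)
      unfold pr at this
      split_ifs at this <;> simp at this

/-! ### permutation cowordisms -/

theorem nodup_r {n : ℕ} : (List.range' 1 n).Nodup := by
  rw [List.range'_eq_map_range]
  exact (List.nodup_range).map (fun x y h => by simpa using h)

/-- cowordism of a permutation -/
def pm (T : Type) (A : Boundary) (π : ℕ → ℕ) : Pre T :=
  lk T (List.range' 1 A.card) (fun m => decide (m ∈ A.left)) π (fun m => 2 * A.card + 1 - m)

structure Pm (A B : Boundary) (π ρ : ℕ → ℕ) : Prop where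
  c : B.card = A.card
  b : ∀ m, 1 ≤ m → m ≤ A.card → 1 ≤ π m ∧ π m ≤ A.card
  b' : ∀ m, 1 ≤ m → m ≤ A.card → 1 ≤ ρ m ∧ ρ m ≤ A.card
  l : ∀ m, 1 ≤ m → m ≤ A.card → ρ (π m) = m
  r : ∀ m, 1 ≤ m → m ≤ A.card → π (ρ m) = m
  p : ∀ m, 1 ≤ m → m ≤ A.card → (m ∈ A.left ↔ π m ∈ B.left)

theorem pm_congr {A : Boundary} {π ρ : ℕ → ℕ} (h : ∀ m, 1 ≤ m → m ≤ A.card → π m = ρ m) :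
    pm T A π = pm T A ρ := by
  refine pre_ext ?_ rfl
  simp only [pm, lk]
  congr 1
  refine List.map_congr_left ?_
  intro m hm
  rw [List.mem_range'_1] at hm
  rw [h m (by omega) (by omega)]

theorem rl_pm {A : Boundary} {π ρ f : ℕ → ℕ} (h : ∀ m, 1 ≤ m → m ≤ A.card → f (π m) = ρ m)
    (h' : ∀ m, 1 ≤ m → m ≤ A.card → f (2 * A.card + 1 - m) = 2 * A.card + 1 - m) :
    rl f (pm T A π) = pm T A ρ := by
  refine pre_ext ?_ rfl
  simp only [pm, lk, rl, Multiset.map_coe, List.map_map]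
  congr 1
  refine List.map_congr_left ?_
  intro m hm
  rw [List.mem_range'_1] at hm
  simp only [Function.comp]
  split_ifs
  · rw [h m (by omega) (by omega), h' m (by omega) (by omega)]
  · rw [h m (by omega) (by omega), h' m (by omega) (by omega)]

theorem srcs_pm {A : Boundary} {π : ℕ → ℕ} : srcs (pm T A π) =
    ↑((List.range' 1 A.card).map (fun m => if m ∈ A.left then π m else 2 * A.card + 1 - m)) := by
  simp only [srcs, pm, lk, Multiset.map_coe, List.map_map]
  congr 1
  refine List.map_congr_left ?_
  intro m hm
  simp only [Function.comp, decide_eq_true_eq]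
  split_ifs <;> rfl

theorem tgts_pm {A : Boundary} {π : ℕ → ℕ} : tgts (pm T A π) =
    ↑((List.range' 1 A.card).map (fun m => if m ∈ A.left then 2 * A.card + 1 - m else π m)) := by
  simp only [tgts, pm, lk, Multiset.map_coe, List.map_map]
  congr 1
  refine List.map_congr_left ?_
  intro m hm
  simp only [Function.comp, decide_eq_true_eq]
  split_ifs <;> rfl

theorem Pm.inj {A B : Boundary} {π ρ : ℕ → ℕ} (h : Pm A B π ρ) {x y : ℕ}
    (hx : 1 ≤ x) (hx' : x ≤ A.card) (hy : 1 ≤ y) (hy' : y ≤ A.card) (e : π x = π y) : x = y := by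
  rw [← h.l x hx hx', e, h.l y hy hy']

theorem pm_cw {A B : Boundary} {π ρ : ℕ → ℕ} (h : Pm A B π ρ) : CW A B (pm T A π) := by
  refine ⟨⟨?_, ?_⟩, ?_, ?_⟩
  · rw [srcs_pm, Multiset.coe_nodup]
    refine List.Nodup.map_on ?_ nodup_r
    intro x hx y hy
    rw [List.mem_range'_1] at hx hy
    have h1 := h.b x (by omega) (by omega)
    have h2 := h.b y (by omega) (by omega)
    have h3 := @Pm.inj _ _ _ _ h x y (by omega) (by omega) (by omega) (by omega)
    split_ifs
    · exact h3
    all_goals omega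
  · rw [tgts_pm, Multiset.coe_nodup]
    refine List.Nodup.map_on ?_ nodup_r
    intro x hx y hy
    rw [List.mem_range'_1] at hx hy
    have h1 := h.b x (by omega) (by omega)
    have h2 := h.b y (by omega) (by omega)
    have h3 := @Pm.inj _ _ _ _ h x y (by omega) (by omega) (by omega) (by omega)
    split_ifs
    pick_goal 4
    · exact h3
    all_goals omega
  · intro v
    rw [srcs_pm]
    simp only [Multiset.mem_coe, List.mem_map, List.mem_range'_1, h.c]
    constructor
    · rintro ⟨m, hm, rfl⟩
      split_ifs with h1
      · exact Or.inl ((h.p m (by omega) (by omega)).1 h1)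
      · refine Or.inr ⟨by omega, by omega, ?_⟩
        have : A.card + A.card + 1 - (2 * A.card + 1 - m) = m := by omega
        rwa [this]
    · rintro (h1 | h1)
      · have h2 := left_bd h1
        rw [h.c] at h2
        have h3 := h.b' v h2.1 h2.2
        have h4 := h.r v h2.1 h2.2
        refine ⟨ρ v, by omega, ?_⟩
        rw [if_pos, h4]
        rw [h.p _ h3.1 h3.2, h4]
        exact h1
      · refine ⟨A.card + A.card + 1 - v, by omega, ?_⟩
        rw [if_neg h1.2.2]
        omega
  · intro v
    rw [tgts_pm]
    simp only [Multiset.mem_coe, List.mem_map, List.mem_range'_1, h.c]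
    constructor
    · rintro ⟨m, hm, rfl⟩
      split_ifs with h1
      · refine Or.inr ⟨by omega, ?_⟩
        have : A.card + A.card + 1 - (2 * A.card + 1 - m) = m := by omega
        rwa [this]
      · have := h.b m (by omega) (by omega)
        exact Or.inl ⟨by omega, by omega, fun h2 => h1 ((h.p m (by omega) (by omega)).2 h2)⟩
    · rintro (h1 | h1)
      · have h3 := h.b' v h1.1 h1.2.1
        have h4 := h.r v h1.1 h1.2.1
        refine ⟨ρ v, by omega, ?_⟩
        rw [if_neg, h4]
        rw [h.p _ h3.1 h3.2, h4]
        exact h1.2.2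
      · have := left_bd h1.2
        refine ⟨A.card + A.card + 1 - v, by omega, ?_⟩
        rw [if_pos h1.2]
        omega

theorem pr_not (b : Bool) (x y : ℕ) : pr b x y = pr (!b) y x := by
  cases b <;> rfl

theorem lk_congr {l : List ℕ} {pol pol' : ℕ → Bool} {b b' t t' : ℕ → ℕ}
    (h : ∀ m ∈ l, pol m = pol' m ∧ b m = b' m ∧ t m = t' m) :
    lk T l pol b t = lk T l pol' b' t' := by
  refine pre_ext ?_ rfl
  simp only [lk]
  congr 1
  refine List.map_congr_left ?_
  intro m hm
  rw [(h m hm).1, (h m hm).2.1, (h m hm).2.2]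

theorem lk_not (l : List ℕ) (pol : ℕ → Bool) (b t : ℕ → ℕ) :
    lk T l pol b t = lk T l (fun m => !pol m) t b := by
  refine pre_ext ?_ rfl
  simp only [lk]
  congr 1
  refine List.map_congr_left ?_
  intro m hm
  by_cases h : pol m = true <;> simp [h]

theorem comp_post {A B C : Boundary} {π ρ : ℕ → ℕ} (h : Pm B C π ρ) {σ : Pre T} (hσ : CW A B σ) :
    compData B.card C.card (pm T B π) σ = rl (fun v => if v ≤ B.card then π v else v) σ := by
  have bσ : ∀ v, vs σ v → 1 ≤ v ∧ v ≤ B.card + A.card := fun v h => hσ.bd h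
  have hs := comp_spec hσ (pm_cw (T := T) h)
  rw [h.c] at hs ⊢
  apply rl_inj (up_inj B.card (2 * B.card))
  rw [hs]
  set r : ℕ → ℕ := fun v => if 2 * B.card < v ∧ v ≤ 3 * B.card then π (v - 2 * B.card) else v with hr
  have ra : ∀ m, 1 ≤ m → m ≤ B.card → r (2 * B.card + m) = π m := by
    intro m h1 h2
    simp only [hr]
    rw [if_pos (by omega), Nat.add_sub_cancel_left]
  have e1 : PP B (B.card + B.card) = (List.range' 1 B.card).map
      (fun m => pr (!decide (m ∈ B.left)) (2 * B.card + m) (2 * B.card + 1 - m)) := by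
    refine List.map_congr_left ?_
    intro m _
    rw [pr_not, ← two_mul]
  have e2 : pm T B π = lk T (List.range' 1 B.card) (fun m => !decide (m ∈ B.left))
      (fun m => 2 * B.card + 1 - m) (fun m => r (2 * B.card + m)) := by
    rw [pm, lk_not]
    apply lk_congr
    intro m hm
    rw [List.mem_range'_1] at hm
    exact ⟨rfl, rfl, (ra m (by omega) (by omega)).symm⟩
  rw [e1, e2, add_comm (lk _ _ _ _ _) (rl _ _), glAll_link]
  · rw [rl_rl, rl_rl]
    apply rl_congr
    intro v hv
    have := bσ v hv
    simp only [Function.comp, sh]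
    rw [← two_mul]
    by_cases h1 : v ≤ B.card
    · have := h.b v (by omega) h1
      rw [ra v (by omega) h1, if_pos h1, up_le this.2]
    · rw [if_neg h1, up_gt (by omega)]
      simp only [hr]
      rw [if_neg (by omega)]
      omega
  · exact hσ.gd.rl (sh_inj _)
  · intro v h1 h2
    rw [srcs_rl, mem_map_sh] at h1
    rw [tgts_rl, mem_map_sh] at h2
    exact hσ.disj h1.2 h2.2
  · exact nodup_r
  · intro m hm
    rw [List.mem_range'_1] at hm
    have e3 : 2 * B.card + m - (B.card + B.card) = m := by omega
    simp only [srcs_rl, tgts_rl]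
    split_ifs with h1
    · rw [mem_map_sh, e3, hσ.t]
      simp only [Bool.not_eq_true', decide_eq_false_iff_not] at h1
      exact ⟨by omega, Or.inl ⟨by omega, by omega, h1⟩⟩
    · rw [mem_map_sh, e3, hσ.s]
      simp only [Bool.not_eq_true', decide_eq_false_iff_not, not_not] at h1
      exact ⟨by omega, Or.inl h1⟩
  · intro x hx y hy; omega
  · intro x hx y hy
    rw [List.mem_range'_1] at hx hy
    omega
  · intro x hx y hy
    rw [List.mem_range'_1] at hx hy
    rw [ra x (by omega) (by omega), ra y (by omega) (by omega)]
    exact h.inj (by omega) (by omega) (by omega) (by omega)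
  · intro x hx y hy
    rw [List.mem_range'_1] at hx hy
    rw [ra x (by omega) (by omega)]
    have := h.b x (by omega) (by omega)
    omega
  · intro x hx h1
    rw [List.mem_range'_1] at hx
    obtain ⟨u, hu, h2⟩ := vs_rl.1 h1
    have := bσ u hu
    simp only [sh] at h2
    omega
  · intro x hx h1
    rw [List.mem_range'_1] at hx
    rw [ra x (by omega) (by omega)] at h1
    have := h.b x (by omega) (by omega)
    obtain ⟨u, hu, h2⟩ := vs_rl.1 h1
    have := bσ u hu
    simp only [sh] at h2
    omega
  · intro x hx
    rw [List.mem_range'_1] at hx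
    rw [ra x (by omega) (by omega)]
    have := h.b x (by omega) (by omega)
    simp only [hr]
    rw [if_neg (by omega)]
  · intro v hv
    obtain ⟨u, hu, rfl⟩ := vs_rl.1 hv
    have := bσ u hu
    simp only [sh]
    by_cases h1 : u ≤ B.card
    · refine Or.inl ⟨u, ?_, by omega⟩
      rw [List.mem_range'_1]
      omega
    · right
      simp only [hr]
      rw [if_neg (by omega)]

theorem lk_reindex {n : ℕ} {pol : ℕ → Bool} {b t ρ : ℕ → ℕ}
    (h1 : ∀ m, 1 ≤ m → m ≤ n → 1 ≤ ρ m ∧ ρ m ≤ n)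
    (h2 : ∀ x y, 1 ≤ x → x ≤ n → 1 ≤ y → y ≤ n → ρ x = ρ y → x = y) :
    lk T (List.range' 1 n) pol b t = lk T (List.range' 1 n) (fun m => pol (ρ m))
      (fun m => b (ρ m)) (fun m => t (ρ m)) := by
  have hp : ((List.range' 1 n).map ρ).Perm (List.range' 1 n) := by
    have hn : ((List.range' 1 n).map ρ).Nodup := by
      refine List.Nodup.map_on ?_ nodup_r
      intro x hx y hy
      rw [List.mem_range'_1] at hx hy
      exact h2 x y (by omega) (by omega) (by omega) (by omega)
    have hs : (List.range' 1 n).map ρ ⊆ List.range' 1 n := by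
      intro v hv
      obtain ⟨m, hm, rfl⟩ := List.mem_map.1 hv
      rw [List.mem_range'_1] at hm ⊢
      have := h1 m (by omega) (by omega)
      omega
    exact (List.subperm_of_subset hn hs).perm_of_length_le (by simp)
  refine pre_ext ?_ rfl
  simp only [lk]
  rw [Multiset.coe_eq_coe]
  refine (hp.map _).symm.trans ?_
  rw [List.map_map]
  rfl

theorem comp_pre {A B C : Boundary} {π ρ : ℕ → ℕ} (h : Pm A B π ρ) {σ : Pre T} (hσ : CW B C σ) :
    compData B.card C.card σ (pm T A π) = rl (fun v => if v ≤ C.card then v else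
      C.card + B.card + 1 - ρ (C.card + B.card + 1 - v)) σ := by
  have bσ : ∀ v, vs σ v → 1 ≤ v ∧ v ≤ C.card + B.card := fun v h => hσ.bd h
  have hs := comp_spec (pm_cw (T := T) h) hσ
  apply rl_inj (up_inj C.card (2 * B.card))
  rw [hs]
  have hb' := h.b'
  have hp := h.p
  have hr' := h.r
  rw [← h.c] at hb' hp hr'
  have iρ : ∀ x y, 1 ≤ x → x ≤ B.card → 1 ≤ y → y ≤ B.card → ρ x = ρ y → x = y := by
    intro x y h1 h2 h3 h4 e
    rw [← hr' x h1 h2, e, hr' y h3 h4]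
  set r : ℕ → ℕ := fun v => if C.card < v ∧ v ≤ C.card + B.card then
    C.card + 3 * B.card + 1 - ρ (C.card + B.card + 1 - v) else v with hr
  have ra : ∀ m, 1 ≤ m → m ≤ B.card → r (C.card + B.card + 1 - m) =
      C.card + 3 * B.card + 1 - ρ m := by
    intro m h1 h2
    simp only [hr]
    rw [if_pos (by omega)]
    congr 2
    omega
  have e2 : rl (sh (C.card + B.card)) (pm T A π) =
      lk T (List.range' 1 B.card) (fun m => decide (m ∈ B.left))
      (fun m => C.card + B.card + m) (fun m => r (C.card + B.card + 1 - m)) := by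
    rw [pm, ← h.c, lk_reindex hb' iρ]
    refine pre_ext ?_ rfl
    simp only [lk, rl, Multiset.map_coe, List.map_map]
    congr 1
    refine List.map_congr_left ?_
    intro m hm
    rw [List.mem_range'_1] at hm
    have q1 := hb' m (by omega) (by omega)
    have q2 : ρ m ∈ A.left ↔ m ∈ B.left := by
      rw [hp _ q1.1 q1.2, hr' m (by omega) (by omega)]
    simp only [Function.comp, q2, sh]
    rw [ra m (by omega) (by omega), hr' m (by omega) (by omega)]
    have q3 : C.card + B.card + (2 * B.card + 1 - ρ m) = C.card + 3 * B.card + 1 - ρ m := by omega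
    split_ifs
    · simp only [q3]
    · simp only [q3]
  rw [e2, PP, glAll_link]
  · rw [rl_rl]
    apply rl_congr
    intro v hv
    have := bσ v hv
    simp only [Function.comp]
    by_cases h1 : v ≤ C.card
    · rw [if_pos h1, up_le h1]
      simp only [hr]
      rw [if_neg (by omega)]
    · have := hb' (C.card + B.card + 1 - v) (by omega) (by omega)
      rw [if_neg h1, up_gt (by omega)]
      simp only [hr]
      rw [if_pos (by omega)]
      omega
  · exact hσ.gd
  · intro v h1 h2
    exact hσ.disj h1 h2
  · exact nodup_r
  · intro m hm
    rw [List.mem_range'_1] at hm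
    have e3 : C.card + B.card + 1 - (C.card + B.card + 1 - m) = m := by omega
    split_ifs with h1
    · rw [hσ.t, e3]
      exact Or.inr ⟨by omega, of_decide_eq_true h1⟩
    · rw [hσ.s, e3]
      exact Or.inr ⟨by omega, by omega, fun h => h1 (decide_eq_true h)⟩
  · intro x hx y hy
    rw [List.mem_range'_1] at hx hy
    omega
  · intro x hx y hy; omega
  · intro x hx y hy
    rw [List.mem_range'_1] at hx hy
    rw [ra x (by omega) (by omega), ra y (by omega) (by omega)]
    have := hb' x (by omega) (by omega)
    have := hb' y (by omega) (by omega)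
    intro e
    exact iρ x y (by omega) (by omega) (by omega) (by omega) (by omega)
  · intro x hx y hy
    rw [List.mem_range'_1] at hx hy
    rw [ra x (by omega) (by omega)]
    have := hb' x (by omega) (by omega)
    omega
  · intro x hx h1
    rw [List.mem_range'_1] at hx
    have := bσ _ h1
    omega
  · intro x hx h1
    rw [List.mem_range'_1] at hx
    rw [ra x (by omega) (by omega)] at h1
    have := hb' x (by omega) (by omega)
    have := bσ _ h1
    omega
  · intro x hx
    rw [List.mem_range'_1] at hx
    rw [ra x (by omega) (by omega)]
    have := hb' x (by omega) (by omega)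
    simp only [hr]
    rw [if_neg (by omega)]
  · intro v hv
    have := bσ v hv
    by_cases h1 : C.card < v
    · refine Or.inl ⟨C.card + B.card + 1 - v, ?_, by omega⟩
      rw [List.mem_range'_1]
      omega
    · right
      simp only [hr]
      rw [if_neg (by omega)]

/-! ### identities and symmetries -/

theorem split_left {β : Type} (X : Boundary) (F G : ℕ → β) :
    X.left.val.map F + (Finset.Icc 1 X.card \ X.left).val.map G =
      ↑((List.range' 1 X.card).map (fun m => if m ∈ X.left then F m else G m)) := by
  have h0 : (↑(List.range' 1 X.card) : Multiset ℕ) = (Finset.Icc 1 X.card).val := by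
    rw [Nat.Icc_eq_range']
    simp only [Nat.add_sub_cancel]
  rw [← Multiset.map_coe, h0, ← Multiset.filter_add_not (fun m => m ∈ X.left) (Finset.Icc 1 X.card).val,
    Multiset.map_add, ← Finset.filter_val, ← Finset.filter_val]
  have h1 : (Finset.Icc 1 X.card).filter (fun m => m ∈ X.left) = X.left := by
    ext m
    simp only [Finset.mem_filter]
    exact ⟨fun h => h.2, fun h => ⟨X.left_sub h, h⟩⟩
  have h2 : (Finset.Icc 1 X.card).filter (fun m => m ∉ X.left) = Finset.Icc 1 X.card \ X.left := by
    ext m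
    simp only [Finset.mem_filter, Finset.mem_sdiff]
  rw [h1, h2]
  congr 1
  · refine Multiset.map_congr rfl ?_
    intro m hm
    rw [if_pos (by exact hm)]
  · refine Multiset.map_congr rfl ?_
    intro m hm
    have : m ∈ Finset.Icc 1 X.card \ X.left := hm
    rw [if_neg (Finset.mem_sdiff.1 this).2]

theorem idPre_eq (X : Boundary) : idPre T X = pm T X id := by
  refine pre_ext ?_ rfl
  simp only [idPre, pm, lk]
  rw [split_left]
  congr 1
  refine List.map_congr_left ?_
  intro m hm
  rw [List.mem_range'_1] at hm
  have : 2 * X.card - m + 1 = 2 * X.card + 1 - m := by omega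
  simp only [this, decide_eq_true_eq, id]

theorem range_tensor {β : Type} (A B : Boundary) (F : ℕ → β) :
    (List.range' 1 (A.tensor B).card).map F = (List.range' 1 A.card).map F ++
      (List.range' 1 B.card).map (fun j => F (A.card + j)) := by
  rw [card_tensor, ← List.range'_append_1, List.map_append]
  congr 1
  rw [List.range'_eq_map_range, List.range'_eq_map_range, List.map_map, List.map_map]
  refine List.map_congr_left ?_
  intro m hm
  simp only [Function.comp]
  congr 1
  omega

theorem mem_tensor_l {A B : Boundary} {m : ℕ} (h : m ≤ A.card) :
    m ∈ (A.tensor B).left ↔ m ∈ A.left := by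
  rw [mem_tensor]
  constructor
  · rintro (h | h)
    · exact h
    · omega
  · exact Or.inl

theorem mem_tensor_r {A B : Boundary} {m : ℕ} (h : 1 ≤ m) :
    A.card + m ∈ (A.tensor B).left ↔ m ∈ B.left := by
  rw [mem_tensor, Nat.add_sub_cancel_left]
  constructor
  · rintro (h | h)
    · have := left_bd h; omega
    · exact h.2
  · exact fun h => Or.inr ⟨by omega, h⟩

/-- block swap -/
def sp (a b : ℕ) : ℕ → ℕ := fun m => if m ≤ a then b + m else m - a

theorem symPre_eq (X Y : Boundary) : symPre T X Y = pm T (X.tensor Y) (sp X.card Y.card) := by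
  refine pre_ext ?_ rfl
  simp only [symPre, pm, lk]
  rw [split_left, add_assoc, split_left, range_tensor, Multiset.coe_add]
  congr 2
  · refine List.map_congr_left ?_
    intro m hm
    rw [List.mem_range'_1] at hm
    have h1 : sp X.card Y.card m = Y.card + m := if_pos (by omega)
    have h2 : 2 * X.card + 2 * Y.card - m + 1 = 2 * (X.card + Y.card) + 1 - m := by omega
    simp only [decide_eq_true_eq, card_tensor, h1, h2, mem_tensor_l (B := Y) (show m ≤ X.card by omega)]
  · refine List.map_congr_left ?_
    intro m hm
    rw [List.mem_range'_1] at hm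
    have h1 : sp X.card Y.card (X.card + m) = m := by
      unfold sp
      rw [if_neg (by omega), Nat.add_sub_cancel_left]
    have h2 : X.card + 2 * Y.card - m + 1 = 2 * (X.card + Y.card) + 1 - (X.card + m) := by omega
    simp only [decide_eq_true_eq, card_tensor, h1, h2, mem_tensor_r (A := X) (B := Y) (show 1 ≤ m by omega)]

/-- block sum -/
def tp (a : ℕ) (π ρ : ℕ → ℕ) : ℕ → ℕ := fun m => if m ≤ a then π m else a + ρ (m - a)

theorem tp_le {a : ℕ} {π ρ : ℕ → ℕ} {m : ℕ} (h : m ≤ a) : tp a π ρ m = π m := if_pos h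
theorem tp_gt {a : ℕ} {π ρ : ℕ → ℕ} {m : ℕ} (h : 1 ≤ m) : tp a π ρ (a + m) = a + ρ m := by
  unfold tp
  rw [if_neg (by omega), Nat.add_sub_cancel_left]

theorem tensor_pm {A A' B B' : Boundary} {π π' ρ ρ' : ℕ → ℕ} (h : Pm A A' π π') (h' : Pm B B' ρ ρ') :
    cowTensorData A'.card B'.card B.card (pm T A π) (pm T B ρ) =
      pm T (A.tensor B) (tp A.card π ρ) := by
  rw [cowTensor_eq, h.c, h'.c]
  refine pre_ext ?_ rfl
  simp only [add_edges, pm, lk, rl, Multiset.map_coe, List.map_map]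
  rw [range_tensor, Multiset.coe_add]
  congr 2
  · refine List.map_congr_left ?_
    intro m hm
    rw [List.mem_range'_1] at hm
    have h1 := h.b m (by omega) (by omega)
    have h2 : up A.card (B.card + B.card) (2 * A.card + 1 - m) = 2 * (A.card + B.card) + 1 - m := by
      rw [up_gt (by omega)]
      omega
    have h3 := up_le (k := B.card + B.card) h1.2
    have h4 := tp_le (π := π) (ρ := ρ) (show m ≤ A.card by omega)
    simp only [Function.comp, decide_eq_true_eq, card_tensor, h4,
      mem_tensor_l (B := B) (show m ≤ A.card by omega)]
    split_ifs
    · simp only [h2, h3]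
    · simp only [h2, h3]
  · refine List.map_congr_left ?_
    intro m hm
    rw [List.mem_range'_1] at hm
    have h2 : sh A.card (2 * B.card + 1 - m) = 2 * (A.card + B.card) + 1 - (A.card + m) := by
      unfold sh
      omega
    have h4 := tp_gt (a := A.card) (π := π) (ρ := ρ) (show 1 ≤ m by omega)
    have h3 : sh A.card (ρ m) = A.card + ρ m := rfl
    simp only [Function.comp, decide_eq_true_eq, card_tensor, h4,
      mem_tensor_r (A := A) (B := B) (show 1 ≤ m by omega)]
    split_ifs
    · simp only [h2, h3]
    · simp only [h2, h3]

theorem Pm_id (A : Boundary) : Pm A A id id := by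
  exact ⟨rfl, fun m h1 h2 => ⟨h1, h2⟩, fun m h1 h2 => ⟨h1, h2⟩, fun _ _ _ => rfl, fun _ _ _ => rfl,
    fun _ _ _ => Iff.rfl⟩

theorem Pm_sp (X Y : Boundary) : Pm (X.tensor Y) (Y.tensor X) (sp X.card Y.card)
    (sp Y.card X.card) := by
  constructor
  · simp only [card_tensor]; omega
  · intro m h1 h2
    simp only [card_tensor, sp] at *
    split_ifs <;> omega
  · intro m h1 h2
    simp only [card_tensor, sp] at *
    split_ifs <;> omega
  · intro m h1 h2
    simp only [card_tensor, sp] at *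
    grind
  · intro m h1 h2
    simp only [card_tensor, sp] at *
    grind
  · intro m h1 h2
    rw [card_tensor] at h2
    by_cases h3 : m ≤ X.card
    · have e : sp X.card Y.card m = Y.card + m := if_pos h3
      rw [e, mem_tensor_l h3, mem_tensor_r h1]
    · obtain ⟨k, rfl⟩ : ∃ k, m = X.card + k := ⟨m - X.card, by omega⟩
      have e : sp X.card Y.card (X.card + k) = k := by
        unfold sp
        rw [if_neg h3, Nat.add_sub_cancel_left]
      rw [e, mem_tensor_r (by omega), mem_tensor_l (by omega)]

theorem Pm.tensor {A A' B B' : Boundary} {π π' ρ ρ' : ℕ → ℕ} (h : Pm A A' π π')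
    (h' : Pm B B' ρ ρ') : Pm (A.tensor B) (A'.tensor B') (tp A.card π ρ) (tp A.card π' ρ') := by
  have cs : ∀ m, 1 ≤ m → m ≤ (A.tensor B).card → m ≤ A.card ∨ ∃ k, m = A.card + k ∧ 1 ≤ k ∧
      k ≤ B.card := by
    intro m h1 h2
    rw [card_tensor] at h2
    by_cases h3 : m ≤ A.card
    · exact Or.inl h3
    · exact Or.inr ⟨m - A.card, by omega, by omega, by omega⟩
  constructor
  · rw [card_tensor, card_tensor, h.c, h'.c]
  · intro m h1 h2
    rcases cs m h1 h2 with h3 | ⟨k, rfl, h3, h4⟩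
    · have := h.b m h1 h3
      rw [tp_le h3, card_tensor]; omega
    · have := h'.b k h3 h4
      rw [tp_gt h3, card_tensor]; omega
  · intro m h1 h2
    rcases cs m h1 h2 with h3 | ⟨k, rfl, h3, h4⟩
    · have := h.b' m h1 h3
      rw [tp_le h3, card_tensor]; omega
    · have := h'.b' k h3 h4
      rw [tp_gt h3, card_tensor]; omega
  · intro m h1 h2
    rcases cs m h1 h2 with h3 | ⟨k, rfl, h3, h4⟩
    · have := h.b m h1 h3
      rw [tp_le h3, tp_le this.2, h.l m h1 h3]
    · have := h'.b k h3 h4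
      rw [tp_gt h3, tp_gt this.1, h'.l k h3 h4]
  · intro m h1 h2
    rcases cs m h1 h2 with h3 | ⟨k, rfl, h3, h4⟩
    · have := h.b' m h1 h3
      rw [tp_le h3, tp_le this.2, h.r m h1 h3]
    · have := h'.b' k h3 h4
      rw [tp_gt h3, tp_gt this.1, h'.r k h3 h4]
  · intro m h1 h2
    rcases cs m h1 h2 with h3 | ⟨k, rfl, h3, h4⟩
    · have := h.b m h1 h3
      rw [tp_le h3, mem_tensor_l h3, h.p m h1 h3, mem_tensor_l (by rw [h.c]; exact this.2)]
    · have := h'.b k h3 h4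
      rw [tp_gt h3, mem_tensor_r h3, h'.p k h3 h4, ← h.c, mem_tensor_r this.1]

theorem comp_pm {A B C : Boundary} {π π' ρ ρ' : ℕ → ℕ} (h : Pm A B π π') (h' : Pm B C ρ ρ') :
    compData B.card C.card (pm T B ρ) (pm T A π) = pm T A (fun m => ρ (π m)) := by
  rw [comp_post h' (pm_cw h)]
  apply rl_pm
  · intro m h1 h2
    have := h.b m h1 h2
    rw [if_pos (by rw [h.c]; exact this.2)]
  · intro m h1 h2
    rw [if_neg (by rw [h.c]; omega)]

theorem tensor_assoc' (X Y Z : Boundary) : (X.tensor Y).tensor Z = X.tensor (Y.tensor Z) := by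
  apply bd_ext
  · simp only [card_tensor]; omega
  · intro v
    simp only [mem_tensor, card_tensor]
    have e : v - (X.card + Y.card) = v - X.card - Y.card := by omega
    rw [e]
    constructor
    · rintro ((h | h) | h)
      · exact Or.inl h
      · exact Or.inr ⟨h.1, Or.inl h.2⟩
      · exact Or.inr ⟨by omega, Or.inr ⟨by omega, h.2⟩⟩
    · rintro (h | ⟨h1, h | h⟩)
      · exact Or.inl (Or.inl h)
      · exact Or.inl (Or.inr ⟨h1, h⟩)
      · exact Or.inr ⟨by omega, h.2⟩

theorem naturality {X X' Y Y' : Boundary} {σ τ : Pre T} (hσ : CW X X' σ) (hτ : CW Y Y' τ) :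
    compData (X'.card + Y'.card) (Y'.card + X'.card) (symPre T X' Y')
        (cowTensorData X'.card Y'.card Y.card σ τ) =
      compData (Y.card + X.card) (Y'.card + X'.card)
        (cowTensorData Y'.card X'.card X.card τ σ) (symPre T X Y) := by
  have bσ : ∀ v, vs σ v → 1 ≤ v ∧ v ≤ X'.card + X.card := fun v h => hσ.bd h
  have bτ : ∀ v, vs τ v → 1 ≤ v ∧ v ≤ Y'.card + Y.card := fun v h => hτ.bd h
  have h1 := comp_post (Pm_sp X' Y') (tensor_cw hσ hτ)
  have h2 := comp_pre (Pm_sp X Y) (tensor_cw hτ hσ)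
  simp only [card_tensor] at h1 h2
  rw [symPre_eq, symPre_eq, h1, h2, cowTensor_eq, cowTensor_eq, rl_add, rl_add, rl_rl, rl_rl, rl_rl,
    rl_rl, add_comm]
  congr 1
  · apply rl_congr
    intro v hv
    have := bτ v hv
    simp only [Function.comp, sh]
    unfold sp up
    grind
  · apply rl_congr
    intro v hv
    have := bσ v hv
    simp only [Function.comp, sh]
    unfold sp up
    grind

theorem hexagon (X Y Z : Boundary) :
      symPre T (X.tensor Y) Z =
        compData (X.card + Z.card + Y.card) (Z.card + X.card + Y.card)
          (cowTensorData (Z.card + X.card) Y.card Y.card (symPre T X Z) (idPre T Y))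
          (cowTensorData X.card (Z.card + Y.card) (Y.card + Z.card) (idPre T X)
            (symPre T Y Z)) := by
  have h1 := tensor_pm (T := T) (Pm_sp X Z) (Pm_id Y)
  have h2 := tensor_pm (T := T) (Pm_id X) (Pm_sp Y Z)
  have h3 := comp_pm (T := T) (A := X.tensor (Y.tensor Z)) (B := (X.tensor Z).tensor Y)
    (C := (Z.tensor X).tensor Y)
    (by rw [tensor_assoc' X Z Y]; exact (Pm_id X).tensor (Pm_sp Y Z)) ((Pm_sp X Z).tensor (Pm_id Y))
  rw [← h1, ← h2] at h3
  simp only [card_tensor] at h3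
  rw [symPre_eq, symPre_eq, symPre_eq, idPre_eq, idPre_eq, h3, tensor_assoc']
  apply pm_congr
  intro m h4 h5
  simp only [card_tensor] at h5 ⊢
  simp only [tp, sp, id]
  grind

theorem idPre_unit : idPre T Boundary.unit = 0 := pre_ext rfl rfl

theorem tensor_data_assoc {X₁ X₂ X₃ Y₁ Y₂ Y₃ : Boundary} {σ₁ σ₂ σ₃ : Pre T} (h₁ : CW X₁ Y₁ σ₁)
    (h₂ : CW X₂ Y₂ σ₂) (h₃ : CW X₃ Y₃ σ₃) :
      cowTensorData (Y₁.card + Y₂.card) Y₃.card X₃.card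
          (cowTensorData Y₁.card Y₂.card X₂.card σ₁ σ₂) σ₃ =
        cowTensorData Y₁.card (Y₂.card + Y₃.card) (X₂.card + X₃.card) σ₁
          (cowTensorData Y₂.card Y₃.card X₃.card σ₂ σ₃) := by
  have b₁ : ∀ v, vs σ₁ v → 1 ≤ v ∧ v ≤ Y₁.card + X₁.card := fun v h => h₁.bd h
  have b₂ : ∀ v, vs σ₂ v → 1 ≤ v ∧ v ≤ Y₂.card + X₂.card := fun v h => h₂.bd h
  simp only [cowTensor_eq, rl_add, rl_rl]
  rw [add_assoc]
  congr 1
  · apply rl_congr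
    intro v hv
    have := b₁ v hv
    simp only [Function.comp]
    unfold up
    grind
  · congr 1
    · apply rl_congr
      intro v hv
      have := b₂ v hv
      simp only [Function.comp]
      unfold up sh
      grind
    · apply rl_congr
      intro v hv
      simp only [Function.comp, sh]
      omega

theorem id_laws {X Y : Boundary} {σ : Pre T} (h : CW X Y σ) :
    compData X.card Y.card σ (idPre T X) = σ ∧ compData Y.card Y.card (idPre T Y) σ = σ := by
  constructor
  · rw [idPre_eq, comp_pre (Pm_id X) h]
    apply rl_id'
    intro v hv
    have := h.bd hv
    simp only [id]
    split_ifs <;> omega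
  · rw [idPre_eq, comp_post (Pm_id Y) h]
    apply rl_id'
    intro v hv
    simp only [id, ite_self]

theorem tensor_unit' (X : Boundary) : X.tensor Boundary.unit = X ∧ Boundary.unit.tensor X = X := by
  have hu : Boundary.unit.card = 0 := rfl
  have hl : ∀ v, v ∉ Boundary.unit.left := fun v => Finset.notMem_empty v
  constructor
  · apply bd_ext
    · rw [card_tensor, hu, add_zero]
    · intro v
      rw [mem_tensor]
      constructor
      · rintro (h | h)
        · exact h
        · exact absurd h.2 (hl _)
      · exact Or.inl
  · apply bd_ext
    · rw [card_tensor, hu, zero_add]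
    · intro v
      rw [mem_tensor, hu, Nat.sub_zero]
      constructor
      · rintro (h | h)
        · exact absurd h (hl _)
        · exact h.2
      · intro h
        exact Or.inr ⟨by have := left_bd h; omega, h⟩

theorem id_tensor (X Y : Boundary) :
    cowTensorData X.card Y.card Y.card (idPre T X) (idPre T Y) = idPre T (X.tensor Y) := by
  rw [idPre_eq, idPre_eq, idPre_eq, tensor_pm (Pm_id X) (Pm_id Y)]
  apply pm_congr
  intro m h1 h2
  simp only [tp, id]
  split_ifs <;> omega

theorem tensor_data_unit {X Y : Boundary} {σ : Pre T} (h : CW X Y σ) :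
    cowTensorData Y.card 0 0 σ (idPre T Boundary.unit) = σ ∧
      cowTensorData 0 Y.card X.card (idPre T Boundary.unit) σ = σ := by
  have z : ∀ f, rl f (0 : Pre T) = 0 := fun f => pre_ext rfl rfl
  rw [idPre_unit, cowTensor_eq, cowTensor_eq, z, z]
  have e1 : ∀ M : Pre T, M + 0 = M := fun M => pre_ext (add_zero _) (add_zero _)
  have e2 : ∀ M : Pre T, 0 + M = M := fun M => pre_ext (zero_add _) (zero_add _)
  rw [e1, e2]
  constructor
  · apply rl_id'
    intro v hv
    simp only [up]
    split_ifs <;> rfl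
  · apply rl_id'
    intro v hv
    simp only [sh, zero_add]

theorem sym_sym (X Y : Boundary) :
    compData (Y.tensor X).card (X.tensor Y).card (symPre T Y X) (symPre T X Y) =
      idPre T (X.tensor Y) := by
  rw [symPre_eq, symPre_eq, idPre_eq, comp_pm (Pm_sp X Y) (Pm_sp Y X)]
  apply pm_congr
  intro m h1 h2
  exact (Pm_sp X Y).l m h1 h2

end Cow

/-- Boundaries and cowordisms over `T`, with composition by contraction,
identity cowordisms, tensor product, the unit boundary, and the symmetry
cowordisms, form a (strict) symmetric monoidal category: composition and tensor
preserve multiword-hood, composition is associative and unital, tensor is a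
strictly associative and unital bifunctor, and the symmetries are natural
isomorphisms squaring to the identity and satisfying the (strict) hexagon. -/
theorem cowordisms_symmetric_monoidal_category (T : Type) :
    -- composition of cowordisms is a cowordism
    (∀ (X Y Z : Boundary) (σ : Cowordism T X Y) (τ : Cowordism T Y Z),
      IsMW (Z.tensor X.dual) (compData Y.card Z.card τ.1 σ.1)) ∧
    -- identities are cowordisms
    (∀ X : Boundary, IsMW (X.tensor X.dual) (idPre T X)) ∧
    -- associativity of composition
    (∀ (X Y Z W : Boundary) (σ : Cowordism T X Y) (τ : Cowordism T Y Z)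
        (ρ : Cowordism T Z W),
      compData Y.card W.card (compData Z.card W.card ρ.1 τ.1) σ.1 =
        compData Z.card W.card ρ.1 (compData Y.card Z.card τ.1 σ.1)) ∧
    -- identity laws
    (∀ (X Y : Boundary) (σ : Cowordism T X Y),
      compData X.card Y.card σ.1 (idPre T X) = σ.1 ∧
      compData Y.card Y.card (idPre T Y) σ.1 = σ.1) ∧
    -- tensor product of boundaries is strictly associative and unital
    (∀ X Y Z : Boundary, (X.tensor Y).tensor Z = X.tensor (Y.tensor Z)) ∧
    (∀ X : Boundary, X.tensor Boundary.unit = X ∧ Boundary.unit.tensor X = X) ∧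
    -- tensor product of cowordisms is a cowordism
    (∀ (X Y Z W : Boundary) (σ : Cowordism T X Y) (τ : Cowordism T Z W),
      IsMW ((Y.tensor W).tensor (X.tensor Z).dual)
        (cowTensorData Y.card W.card Z.card σ.1 τ.1)) ∧
    -- tensor is functorial
    (∀ (X₁ X₂ Y₁ Y₂ Z₁ Z₂ : Boundary)
        (σ₁ : Cowordism T X₁ Y₁) (σ₂ : Cowordism T X₂ Y₂)
        (τ₁ : Cowordism T Y₁ Z₁) (τ₂ : Cowordism T Y₂ Z₂),
      compData (Y₁.card + Y₂.card) (Z₁.card + Z₂.card)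
          (cowTensorData Z₁.card Z₂.card Y₂.card τ₁.1 τ₂.1)
          (cowTensorData Y₁.card Y₂.card X₂.card σ₁.1 σ₂.1) =
        cowTensorData Z₁.card Z₂.card X₂.card
          (compData Y₁.card Z₁.card τ₁.1 σ₁.1)
          (compData Y₂.card Z₂.card τ₂.1 σ₂.1)) ∧
    (∀ X Y : Boundary,
      cowTensorData X.card Y.card Y.card (idPre T X) (idPre T Y) =
        idPre T (X.tensor Y)) ∧
    -- tensor on cowordisms is strictly associative and unital
    (∀ (X₁ X₂ X₃ Y₁ Y₂ Y₃ : Boundary) (σ₁ : Cowordism T X₁ Y₁)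
        (σ₂ : Cowordism T X₂ Y₂) (σ₃ : Cowordism T X₃ Y₃),
      cowTensorData (Y₁.card + Y₂.card) Y₃.card X₃.card
          (cowTensorData Y₁.card Y₂.card X₂.card σ₁.1 σ₂.1) σ₃.1 =
        cowTensorData Y₁.card (Y₂.card + Y₃.card) (X₂.card + X₃.card) σ₁.1
          (cowTensorData Y₂.card Y₃.card X₃.card σ₂.1 σ₃.1)) ∧
    (∀ (X Y : Boundary) (σ : Cowordism T X Y),
      cowTensorData Y.card 0 0 σ.1 (idPre T Boundary.unit) = σ.1 ∧
      cowTensorData 0 Y.card X.card (idPre T Boundary.unit) σ.1 = σ.1) ∧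
    -- symmetries are cowordisms, square to the identity, are natural,
    -- and satisfy the (strict) hexagon identity
    (∀ X Y : Boundary,
      IsMW ((Y.tensor X).tensor (X.tensor Y).dual) (symPre T X Y)) ∧
    (∀ X Y : Boundary,
      compData (Y.tensor X).card (X.tensor Y).card (symPre T Y X) (symPre T X Y) =
        idPre T (X.tensor Y)) ∧
    (∀ (X X' Y Y' : Boundary) (σ : Cowordism T X X') (τ : Cowordism T Y Y'),
      compData (X'.card + Y'.card) (Y'.card + X'.card) (symPre T X' Y')
          (cowTensorData X'.card Y'.card Y.card σ.1 τ.1) =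
        compData (Y.card + X.card) (Y'.card + X'.card)
          (cowTensorData Y'.card X'.card X.card τ.1 σ.1) (symPre T X Y)) ∧
    (∀ X Y Z : Boundary,
      symPre T (X.tensor Y) Z =
        compData (X.card + Z.card + Y.card) (Z.card + X.card + Y.card)
          (cowTensorData (Z.card + X.card) Y.card Y.card (symPre T X Z) (idPre T Y))
          (cowTensorData X.card (Z.card + Y.card) (Y.card + Z.card) (idPre T X)
            (symPre T Y Z))) := by
  refine ⟨?_, ?_, ?_, ?_, ?_, ?_, ?_, ?_, ?_, ?_, ?_, ?_, ?_, ?_, ?_⟩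
  · intro X Y Z σ τ
    exact Cow.cw_iff.2 (Cow.comp_cw (Cow.cw_iff.1 σ.2) (Cow.cw_iff.1 τ.2))
  · intro X
    rw [Cow.idPre_eq]
    exact Cow.cw_iff.2 (Cow.pm_cw (Cow.Pm_id X))
  · intro X Y Z W σ τ ρ
    exact Cow.comp_assoc' (Cow.cw_iff.1 σ.2) (Cow.cw_iff.1 τ.2) (Cow.cw_iff.1 ρ.2)
  · intro X Y σ
    exact Cow.id_laws (Cow.cw_iff.1 σ.2)
  · exact Cow.tensor_assoc'
  · exact Cow.tensor_unit'
  · intro X Y Z W σ τ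
    exact Cow.cw_iff.2 (Cow.tensor_cw (Cow.cw_iff.1 σ.2) (Cow.cw_iff.1 τ.2))
  · intro X₁ X₂ Y₁ Y₂ Z₁ Z₂ σ₁ σ₂ τ₁ τ₂
    exact Cow.functorial (Cow.cw_iff.1 σ₁.2) (Cow.cw_iff.1 σ₂.2) (Cow.cw_iff.1 τ₁.2)
      (Cow.cw_iff.1 τ₂.2)
  · exact Cow.id_tensor
  · intro X₁ X₂ X₃ Y₁ Y₂ Y₃ σ₁ σ₂ σ₃
    exact Cow.tensor_data_assoc (Cow.cw_iff.1 σ₁.2) (Cow.cw_iff.1 σ₂.2) (Cow.cw_iff.1 σ₃.2)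
  · intro X Y σ
    exact Cow.tensor_data_unit (Cow.cw_iff.1 σ.2)
  · intro X Y
    rw [Cow.symPre_eq]
    exact Cow.cw_iff.2 (Cow.pm_cw (Cow.Pm_sp X Y))
  · exact Cow.sym_sym
  · intro X X' Y Y' σ τ
    exact Cow.naturality (Cow.cw_iff.1 σ.2) (Cow.cw_iff.1 τ.2)
  · exact Cow.hexagon
end
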